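/- arXiv:2503.23164 — 3 statements merged into one kernel-verified Lean document; each statement's English description precedes it below -/
import Mathlib

section
/- Fix δ > 0 and ε > 0. Then there exist η > 0 and n₀ such that for all n ≥ n₀ and all integers M, k with M/N ∈ [δ, 1−δ] and k/n ∈ [δ, 1−δ], with probability at least 1 − exp(−n^η) over G = G_{n,M} the following holds: for all integers z, n·|P_S(e(S) = z) − φ(z)| ≤ n^{−1/14+ε}, where S is a uniformly random k-element subset of [n] and φ is the probability density function of a normal random variable with mean K·M/N and variance λ·n². -/
/-! The proof is by Fourier inversion. For a graph `G`, let `ψ_G(θ)` (`psi`) be the characteristic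
function of the centred edge count of a uniform `k`-set. Then `P_S(e(S) = z)` is an integral of
`ψ_G` over `[-π, π]`, the Gaussian density is the analogous integral of `exp (-λ n² θ² / 2)` over the
line, and it suffices that, outside an exceptional set of graphs, the two integrands are close in
`L¹` (`good_graph`). All estimates on `G` are made for independent edges with density `p = M / N`;
since each exceptional set is controlled through the mean of a nonnegative function, passing back
to exactly `M` edges costs only a factor `N + 1` (`card_le_binExp`).

Low frequencies, `|θ| ≤ T = n^(-9/10)`. Averaging over the edges turns `ψ_G(θ)` into an average of
products of Bernoulli characteristic functions, one for each potential edge, and these are nearly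
`exp (-λ n² θ² / 2)` (`mean_psi`). To see that `ψ_G(θ)` is concentrated about this mean, observe that
its derivative in the direction of an edge is, to first order, the correlation of a bounded function
of `S` with the centred indicator that the edge lies in `S`. These indicators are nearly orthogonal:
the rows of their covariance matrix have absolute sums `O(n)` (`row_sum_le`), so a Bessel inequality
bounds the squared gradient by `O(n θ² + n² θ⁴)` for every graph (`gradient_le`). Iterating the
Poincaré inequality on exponentials yields an exponential moment of `ψ_G(θ) - 𝔼 ψ_G(θ)` at the
corresponding scale (`mgf_bound`). The exponential moment is integrated over `θ` before Markov's
inequality is used, so no union bound over frequencies is needed (`Xint`).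

High frequencies, `T < |θ| ≤ π`. The mean of `|ψ_G(θ)|²` is an average over pairs of `k`-sets of
products of Bernoulli characteristic functions. A pair at distance at least `D` is separated by about
`D k` edges, each of which gains a factor `exp (-c θ²)`, and the closer pairs form an exponentially
small proportion (`second_moment`). Again Markov's inequality is applied to the integral over `θ`
(`Zint`).

With `n = y ^ 20`, `T = y⁻¹⁸` and `D ≈ y ^ 18`, the failure probability is at most `exp (-y)`, that is
`η = 1 / 20`, and the error is of order `n^(-1/5)`, well below `n^(-1/14)`. -/


open Finset MeasureTheory ProbabilityTheory

noncomputable section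

/-- Uniform probability of an event `P` over a finite sample space `Ω`. -/
def Pru {α : Type*} (Ω : Finset α) (P : α → Prop) : ℝ := by
  classical exact ((Ω.filter P).card : ℝ) / Ω.card

/-- Expectation of `f` under the uniform distribution on `Ω`. -/
def Exu {α : Type*} (Ω : Finset α) (f : α → ℝ) : ℝ := (∑ a ∈ Ω, f a) / Ω.card

/-- Variance of `f` under the uniform distribution on `Ω`. -/
def Varu {α : Type*} (Ω : Finset α) (f : α → ℝ) : ℝ := Exu Ω (fun a => (f a - Exu Ω f) ^ 2)

/-- Conditional expectation of `f` given the value of `g`, under uniform distribution on `Ω`. -/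
def condExpU {α β : Type*} (Ω : Finset α) (f : α → ℝ) (g : α → β) (ω : α) : ℝ := by
  classical exact Exu (Ω.filter (fun ω' => g ω' = g ω)) f

/-- The edge set of the complete graph on `[n]`. -/
def completeEdges (n : ℕ) : Finset (Sym2 (Fin n)) := by
  classical exact Finset.univ.filter (fun e => ¬ e.IsDiag)

/-- A finset of `Sym2`s is a graph if it has no loops. -/
def IsGraph {n : ℕ} (G : Finset (Sym2 (Fin n))) : Prop := ∀ e ∈ G, ¬ e.IsDiag

/-- The sample space of `G_{n,M}`: all graphs on `[n]` with exactly `M` edges. -/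
def graphsM (n M : ℕ) : Finset (Finset (Sym2 (Fin n))) := by
  classical exact (completeEdges n).powerset.filter (fun G => G.card = M)

/-- `e(S)`: number of edges of `G` with both endpoints in `S`. -/
def edgesIn {n : ℕ} (G : Finset (Sym2 (Fin n))) (S : Finset (Fin n)) : ℕ := by
  classical exact (G.filter (fun e => ∀ v ∈ e, v ∈ S)).card

/-- `d_S(v)`: number of neighbours of `v` (in graph `G`) lying in `S`. -/
def dS {n : ℕ} (G : Finset (Sym2 (Fin n))) (S : Finset (Fin n)) (v : Fin n) : ℕ := by
  classical exact (S.filter (fun w => s(v, w) ∈ G)).card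

/-- All `k`-element subsets of `[n]`. -/
def kSets (n k : ℕ) : Finset (Finset (Fin n)) := Finset.univ.powersetCard k

/-- Probability of an event under the uniform random graph `G_{n,M}`. -/
def PrGnM (n M : ℕ) (P : Finset (Sym2 (Fin n)) → Prop) : ℝ := Pru (graphsM n M) P

/-- Probability of an event under the binomial random graph `G_{n,p}`. -/
def PrGnp (n : ℕ) (p : ℝ) (P : Finset (Sym2 (Fin n)) → Prop) : ℝ := by
  classical exact ∑ G ∈ (completeEdges n).powerset,
    if (P G) then p ^ G.card * (1 - p) ^ ((completeEdges n).card - G.card) else 0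

/-- `N = n(n-1)/2` as a real number. -/
def Nr (n : ℕ) : ℝ := (n : ℝ) * ((n : ℝ) - 1) / 2

/-- `K = k(k-1)/2` as a real number. -/
def Kr (k : ℕ) : ℝ := (k : ℝ) * ((k : ℝ) - 1) / 2

/-- `λ = ((n²-k²)k²/(2n⁴))·(M(N-M)/N²)`. -/
def lamP (n M k : ℕ) : ℝ :=
  (((n:ℝ)^2 - (k:ℝ)^2) * (k:ℝ)^2 / (2 * (n:ℝ)^4)) * ((M:ℝ) * (Nr n - (M:ℝ)) / (Nr n)^2)

/-- The mean `K·M/N`. -/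
def muP (n M k : ℕ) : ℝ := Kr k * (M:ℝ) / Nr n

/-- `W = (e(S) - K·M/N)/n`. -/
def Wfun (n M k : ℕ) (G : Finset (Sym2 (Fin n))) (S : Finset (Fin n)) : ℝ :=
  ((edgesIn G S : ℝ) - muP n M k) / n

/-- `V = Σ_v d(v)² - n·d(G)²`, i.e. `n` times the degree variance. -/
def Vdeg {n : ℕ} (G : Finset (Sym2 (Fin n))) : ℝ :=
  (∑ v : Fin n, (dS G Finset.univ v : ℝ) ^ 2) - (n:ℝ) * (2 * (G.card : ℝ) / n) ^ 2

/-- Gaussian CDF with mean `m` and variance `v`. -/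
def gaussCdf (m v z : ℝ) : ℝ := ((gaussianReal m v.toNNReal) (Set.Iic z)).toReal

/-- Gaussian measure of a set, mean `m`, variance `v`. -/
def gaussMeas (m v : ℝ) (A : Set ℝ) : ℝ := ((gaussianReal m v.toNNReal) A).toReal

/-- Gaussian density with mean `m` and variance `v`. -/
def gaussPdf (m v x : ℝ) : ℝ := gaussianPDFReal m v.toNNReal x

/-- `P(Y ∈ ·)` for `Y ~ Bin(ν, p)`. -/
def binomPr (ν : ℕ) (p : ℝ) (P : ℕ → Prop) : ℝ := by
  classical exact ∑ j ∈ Finset.range (ν + 1),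
    if (P j) then (ν.choose j : ℝ) * p ^ j * (1 - p) ^ (ν - j) else 0

/-- Sample space for "uniform `k`-set `S`, then uniform `x ∈ S` and `x̄ ∈ S̄`". -/
def SwapΩ (n k : ℕ) : Finset (Σ _ : Finset (Fin n), Fin n × Fin n) :=
  (kSets n k).sigma (fun S => S ×ˢ Sᶜ)

/-- A triple `(a, r, t)` is valid for `β`. -/
def ValidTriple (β : ℝ) (n a r t : ℕ) : Prop :=
  a ≤ r ∧
  (∃ c : ℝ, 1/2 ≤ c ∧ c ≤ 1 ∧ (a : ℝ) = c * (t:ℝ) ^ ((3:ℝ)/2) * (n:ℝ) ^ (2*β - 1/2)) ∧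
  (r : ℝ) ≤ (n:ℝ) ^ (-β) * Real.sqrt ((n:ℝ) * (t:ℝ))

/-! ### Random subsets with independent inclusions -/

/-- Expectation of `f` over the random subset of `E` that contains each element independently
with probability `p`. -/
def binExp {ι F : Type*} [DecidableEq ι] [AddCommGroup F] [Module ℝ F] (p : ℝ) (E : Finset ι)
    (f : Finset ι → F) : F :=
  ∑ G ∈ E.powerset, (p ^ #G * (1 - p) ^ #(E \ G)) • f G

section binExp

variable {ι : Type*} [DecidableEq ι] {p : ℝ}

lemma binExp_insert {F : Type*} [AddCommGroup F] [Module ℝ F] {a : ι} {E : Finset ι} (ha : a ∉ E)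
    (f : Finset ι → F) :
    binExp p (insert a E) f =
      p • binExp p E (fun G => f (insert a G)) + (1 - p) • binExp p E f := by
  unfold binExp
  rw [Finset.sum_powerset_insert ha, add_comm, Finset.smul_sum, Finset.smul_sum]
  congr 1
  · refine Finset.sum_congr rfl fun G hG => ?_
    have haG : a ∉ G := fun h => ha (Finset.mem_powerset.1 hG h)
    rw [Finset.card_insert_of_notMem haG, Finset.insert_sdiff_insert, smul_smul,
      Finset.sdiff_insert_of_notMem ha]
    congr 1; ring
  · refine Finset.sum_congr rfl fun G hG => ?_
    have haG : a ∉ G := fun h => ha (Finset.mem_powerset.1 hG h)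
    rw [Finset.insert_sdiff_of_notMem _ haG, Finset.card_insert_of_notMem (by simp [ha]), smul_smul]
    congr 1; ring

lemma binExp_prod (E : Finset ι) (y : ι → ℂ) :
    binExp p E (fun G => ∏ e ∈ G, y e) = ∏ e ∈ E, ((p : ℂ) * y e + (1 - p)) := by
  rw [Finset.prod_add]
  unfold binExp
  refine Finset.sum_congr rfl fun G _ => ?_
  rw [Finset.prod_mul_distrib, Finset.prod_const, Finset.prod_const, Complex.real_smul]
  push_cast; ring

lemma binExp_const {F : Type*} [AddCommGroup F] [Module ℝ F] (E : Finset ι) (c : F) :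
    binExp p E (fun _ => c) = c := by
  induction E using Finset.induction_on with
  | empty => simp [binExp]
  | insert a E ha ih => rw [binExp_insert ha, ih, ← add_smul]; simp

lemma binExp_mono (hp0 : 0 ≤ p) (hp1 : p ≤ 1) {E : Finset ι} {f g : Finset ι → ℝ}
    (h : ∀ G, G ⊆ E → f G ≤ g G) : binExp p E f ≤ binExp p E g := by
  refine Finset.sum_le_sum fun G hG => ?_
  have : 0 ≤ 1 - p := by linarith
  exact smul_le_smul_of_nonneg_left (h G (Finset.mem_powerset.1 hG)) (by positivity)

lemma binExp_add {F : Type*} [AddCommGroup F] [Module ℝ F] (E : Finset ι) (f g : Finset ι → F) :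
    binExp p E (fun G => f G + g G) = binExp p E f + binExp p E g := by
  simp [binExp, smul_add, Finset.sum_add_distrib]

lemma binExp_const_mul (E : Finset ι) (c : ℝ) (f : Finset ι → ℝ) :
    binExp p E (fun G => c * f G) = c * binExp p E f := by
  simp only [binExp, Finset.mul_sum, smul_eq_mul]
  exact Finset.sum_congr rfl fun _ _ => by ring

lemma binExp_sum {κ F : Type*} [AddCommGroup F] [Module ℝ F] (E : Finset ι) (s : Finset κ)
    (f : κ → Finset ι → F) :
    binExp p E (fun G => ∑ i ∈ s, f i G) = ∑ i ∈ s, binExp p E (f i) := by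
  simp only [binExp, Finset.smul_sum]
  exact Finset.sum_comm

lemma sq_binExp_le (hp0 : 0 ≤ p) (hp1 : p ≤ 1) (E : Finset ι) (f : Finset ι → ℝ) :
    (binExp p E f) ^ 2 ≤ binExp p E (fun G => f G ^ 2) := by
  set m := binExp p E f with hm
  have h : 0 ≤ binExp p E (fun G => (f G ^ 2 + (-(2 * m)) * f G) + m ^ 2) := by
    have := binExp_mono (p := p) hp0 hp1 (E := E) (f := fun _ => 0)
      (g := fun G => (f G ^ 2 + (-(2 * m)) * f G) + m ^ 2)
      (fun G _ => by nlinarith [sq_nonneg (f G - m)])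
    rwa [binExp_const] at this
  rw [binExp_add, binExp_add, binExp_const, binExp_const_mul, ← hm] at h
  nlinarith

/-- The Poincaré (Efron–Stein) inequality for the biased cube. -/
lemma poincare (hp0 : 0 ≤ p) (hp1 : p ≤ 1) (E : Finset ι) (g : Finset ι → ℝ) :
    binExp p E (fun G => g G ^ 2) - (binExp p E g) ^ 2 ≤
      p * (1 - p) * ∑ e ∈ E, binExp p E (fun G => (g (insert e G) - g (G.erase e)) ^ 2) := by
  induction E using Finset.induction_on generalizing g with
  | empty => simp [binExp]
  | insert a E ha ih =>
    have hq : 0 ≤ 1 - p := by linarith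
    rw [Finset.sum_insert ha]
    have hsum : ∀ e ∈ E, binExp p (insert a E) (fun G => (g (insert e G) - g (G.erase e)) ^ 2) =
        p * binExp p E (fun G => (g (insert a (insert e G)) - g (insert a (G.erase e))) ^ 2) +
        (1 - p) * binExp p E (fun G => (g (insert e G) - g (G.erase e)) ^ 2) := by
      intro e he
      have hne : e ≠ a := fun h => ha (h ▸ he)
      rw [binExp_insert ha]
      simp only [smul_eq_mul]
      congr 2
      refine congrArg _ (funext fun G => ?_)
      rw [Finset.insert_comm, Finset.erase_insert_of_ne hne.symm]
    rw [Finset.sum_congr rfl hsum, Finset.sum_add_distrib, ← Finset.mul_sum, ← Finset.mul_sum]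
    have h1 := ih (fun G => g (insert a G))
    have h0 := ih g
    have hcross : (binExp p E (fun G => g (insert a G)) - binExp p E g) ^ 2 ≤
        binExp p (insert a E) (fun G => (g (insert a G) - g (G.erase a)) ^ 2) := by
      have e1 : binExp p (insert a E) (fun G => (g (insert a G) - g (G.erase a)) ^ 2) =
          binExp p E (fun G => (g (insert a G) + (-1) * g G) ^ 2) := by
        have : binExp p (insert a E) (fun G => (g (insert a G) - g (G.erase a)) ^ 2) =
          p * binExp p E (fun G => (g (insert a G) + (-1) * g G) ^ 2) +
          (1 - p) * binExp p E (fun G => (g (insert a G) + (-1) * g G) ^ 2) := by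
          rw [binExp_insert ha]
          simp only [smul_eq_mul]
          congr 2
          · refine Finset.sum_congr rfl fun G hG => ?_
            have haG : a ∉ G := fun h => ha (Finset.mem_powerset.1 hG h)
            simp only [Finset.insert_idem, Finset.erase_insert haG]
            congr 2; ring
          · refine Finset.sum_congr rfl fun G hG => ?_
            have haG : a ∉ G := fun h => ha (Finset.mem_powerset.1 hG h)
            simp only [Finset.erase_eq_of_notMem haG]
            congr 2; ring
        rw [this]; ring
      rw [e1]
      refine le_trans (le_of_eq ?_) (sq_binExp_le hp0 hp1 E _)
      rw [binExp_add, binExp_const_mul]; ring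
    rw [binExp_insert ha, binExp_insert ha]
    simp only [smul_eq_mul]
    have hc := mul_le_mul_of_nonneg_left hcross (mul_nonneg hp0 hq)
    have h1' := mul_le_mul_of_nonneg_left h1 hp0
    have h0' := mul_le_mul_of_nonneg_left h0 hq
    nlinarith

lemma sq_exp_sub_exp_le {a b c d : ℝ} (h : |a - b| ≤ d) (hd : d ≤ 1 / 2) (hc : c = a ∨ c = b) :
    (Real.exp a - Real.exp b) ^ 2 ≤ 3 * (a - b) ^ 2 * Real.exp (2 * c) := by
  have key : ∀ u v : ℝ, |Real.exp u - Real.exp v| ≤ |u - v| * Real.exp (max u v) := by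
    intro u v
    wlog huv : v ≤ u generalizing u v
    · rw [abs_sub_comm, abs_sub_comm u, max_comm]; exact this v u (le_of_not_ge huv)
    rw [max_eq_left huv, abs_of_nonneg (sub_nonneg.2 huv),
      abs_of_nonneg (sub_nonneg.2 (Real.exp_le_exp.2 huv))]
    have := Real.add_one_le_exp (v - u)
    have h2 : Real.exp v = Real.exp u * Real.exp (v - u) := by rw [← Real.exp_add]; ring_nf
    rw [h2]
    nlinarith [Real.exp_pos u]
  have hmax : max a b ≤ c + 1 / 2 := by
    have := abs_le.1 (h.trans hd)
    rcases hc with rfl | rfl <;> exact max_le (by linarith) (by linarith)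
  have h1 := key a b
  have he : Real.exp 1 ≤ 3 := by linarith [Real.exp_one_lt_d9]
  calc (Real.exp a - Real.exp b) ^ 2 = |Real.exp a - Real.exp b| ^ 2 := (sq_abs _).symm
    _ ≤ (|a - b| * Real.exp (c + 1 / 2)) ^ 2 := by
        refine pow_le_pow_left₀ (abs_nonneg _) (h1.trans ?_) 2
        exact mul_le_mul_of_nonneg_left (Real.exp_le_exp.2 hmax) (abs_nonneg _)
    _ = (a - b) ^ 2 * (Real.exp 1 * Real.exp (2 * c)) := by
        rw [mul_pow, sq_abs, ← Real.exp_nat_mul, ← Real.exp_add]; congr 2; push_cast; ring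
    _ ≤ (a - b) ^ 2 * (3 * Real.exp (2 * c)) := by gcongr
    _ = _ := by ring

/-- One halving step for the moment generating function: the Poincaré inequality applied to
`exp (t f / 2)`. -/
lemma mgf_halving (hp0 : 0 ≤ p) (hp1 : p ≤ 1) (E : Finset ι) (f : Finset ι → ℝ) {V t : ℝ}
    (hV : ∀ G ⊆ E, ∑ e ∈ E, (f (insert e G) - f (G.erase e)) ^ 2 ≤ V) (ht : t ^ 2 * V ≤ 1) :
    binExp p E (fun G => Real.exp (t * f G)) ≤
      Real.exp (t ^ 2 * V / 2) * (binExp p E (fun G => Real.exp (t / 2 * f G))) ^ 2 := by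
  set H := binExp p E (fun G => Real.exp (t * f G)) with hH
  have hV0 : 0 ≤ V := le_trans (Finset.sum_nonneg fun _ _ => sq_nonneg _) (hV ∅ (by simp))
  have hH0 : 0 ≤ H := by
    have := binExp_mono (p := p) hp0 hp1 (E := E) (f := fun _ => 0)
      (g := fun G => Real.exp (t * f G)) (fun G _ => (Real.exp_pos _).le)
    rwa [binExp_const] at this
  have hP := poincare hp0 hp1 E (fun G => Real.exp (t / 2 * f G))
  have hsq : binExp p E (fun G => Real.exp (t / 2 * f G) ^ 2) = H := by
    refine congrArg _ (funext fun G => ?_)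
    rw [← Real.exp_nat_mul]; congr 1; push_cast; ring
  have hgrad : ∑ e ∈ E, binExp p E (fun G => (Real.exp (t / 2 * f (insert e G)) -
      Real.exp (t / 2 * f (G.erase e))) ^ 2) ≤ 3 / 4 * (t ^ 2 * V) * H := by
    rw [← binExp_sum, hH, ← binExp_const_mul]
    refine binExp_mono hp0 hp1 fun G hG => ?_
    calc ∑ e ∈ E, (Real.exp (t / 2 * f (insert e G)) - Real.exp (t / 2 * f (G.erase e))) ^ 2
        ≤ ∑ e ∈ E, 3 / 4 * t ^ 2 * Real.exp (t * f G) * (f (insert e G) - f (G.erase e)) ^ 2 := by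
          refine Finset.sum_le_sum fun e he => ?_
          have hsingle : (f (insert e G) - f (G.erase e)) ^ 2 ≤ V :=
            le_trans (Finset.single_le_sum (f := fun e => (f (insert e G) - f (G.erase e)) ^ 2)
              (fun _ _ => sq_nonneg _) he) (hV G hG)
          have hd : |t / 2 * f (insert e G) - t / 2 * f (G.erase e)| ≤ 1 / 2 := by
            refine abs_le_of_sq_le_sq ?_ (by norm_num)
            have := mul_le_mul_of_nonneg_left hsingle (sq_nonneg t)
            nlinarith
          have hc : t / 2 * f G = t / 2 * f (insert e G) ∨ t / 2 * f G = t / 2 * f (G.erase e) := by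
            by_cases h : e ∈ G
            · left; rw [Finset.insert_eq_self.2 h]
            · right; rw [Finset.erase_eq_of_notMem h]
          refine (sq_exp_sub_exp_le hd le_rfl hc).trans (le_of_eq ?_)
          rw [show 2 * (t / 2 * f G) = t * f G by ring]; ring
      _ = 3 / 4 * t ^ 2 * Real.exp (t * f G) * ∑ e ∈ E, (f (insert e G) - f (G.erase e)) ^ 2 := by
          rw [Finset.mul_sum]
      _ ≤ 3 / 4 * t ^ 2 * Real.exp (t * f G) * V := by
          exact mul_le_mul_of_nonneg_left (hV G hG) (by positivity)
      _ = 3 / 4 * (t ^ 2 * V) * Real.exp (t * f G) := by ring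
  rw [hsq] at hP
  have hpq : p * (1 - p) ≤ 1 / 4 := by nlinarith [sq_nonneg (p - 1 / 2)]
  have hx0 : 0 ≤ t ^ 2 * V := by positivity
  set x := t ^ 2 * V with hx
  set m := binExp p E (fun G => Real.exp (t / 2 * f G)) with hm
  have h1 : H - m ^ 2 ≤ 3 / 16 * x * H := by
    have h2 : p * (1 - p) * ∑ e ∈ E, binExp p E (fun G => (Real.exp (t / 2 * f (insert e G)) -
      Real.exp (t / 2 * f (G.erase e))) ^ 2) ≤ 1 / 4 * (3 / 4 * x * H) :=
      mul_le_mul hpq hgrad (Finset.sum_nonneg fun e _ => by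
        have := binExp_mono (p := p) hp0 hp1 (E := E) (f := fun _ => 0)
          (g := fun G => (Real.exp (t / 2 * f (insert e G)) -
            Real.exp (t / 2 * f (G.erase e))) ^ 2) (fun G _ => sq_nonneg _)
        rwa [binExp_const] at this) (by norm_num)
    linarith
  have hexp : 1 ≤ Real.exp (x / 2) * (1 - 3 / 16 * x) := by
    have := Real.add_one_le_exp (x / 2)
    nlinarith
  calc H ≤ Real.exp (x / 2) * (1 - 3 / 16 * x) * H := le_mul_of_one_le_left hH0 hexp
    _ = Real.exp (x / 2) * ((1 - 3 / 16 * x) * H) := by ring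
    _ ≤ Real.exp (x / 2) * m ^ 2 := by
        refine mul_le_mul_of_nonneg_left ?_ (Real.exp_pos _).le
        linarith

/-- Concentration on the biased cube: a bound `V` on the squared length of the discrete gradient,
uniform over the cube, bounds the exponential moments of `f - 𝔼 f` at scale `V ^ (-1/2)`. -/
lemma mgf_bound (hp0 : 0 ≤ p) (hp1 : p ≤ 1) (E : Finset ι) (f : Finset ι → ℝ) {V t : ℝ}
    (hf : ∀ G, |f G| ≤ 1)
    (hV : ∀ G ⊆ E, ∑ e ∈ E, (f (insert e G) - f (G.erase e)) ^ 2 ≤ V) (ht : t ^ 2 * V ≤ 1) :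
    binExp p E (fun G => Real.exp (t * (f G - binExp p E f))) ≤ Real.exp 5 := by
  set m := binExp p E f with hm
  have hV0 : 0 ≤ V := le_trans (Finset.sum_nonneg fun _ _ => sq_nonneg _) (hV ∅ (by simp))
  have hm1 : |m| ≤ 1 := by
    rw [abs_le]
    constructor
    · have := binExp_mono (p := p) hp0 hp1 (E := E) (f := fun _ => -1) (g := f)
        (fun G _ => (abs_le.1 (hf G)).1)
      rwa [binExp_const] at this
    · have := binExp_mono (p := p) hp0 hp1 (E := E) (g := fun _ => 1) (f := f)
        (fun G _ => (abs_le.1 (hf G)).2)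
      rwa [binExp_const] at this
  -- Halving `t` repeatedly brings it below `1/2`, where a second-order expansion suffices.
  have key : ∀ j : ℕ, ∀ s : ℝ, |s| ≤ 2 ^ j / 2 → s ^ 2 * V ≤ 1 →
      binExp p E (fun G => Real.exp (s * (f G - m))) ≤
        Real.exp (4 * s ^ 2 * V + 4 * s ^ 2 / 2 ^ j) := by
    intro j
    induction j with
    | zero =>
      intro s hs hsV
      have h1 : binExp p E (fun G => Real.exp (s * (f G - m))) ≤
          binExp p E (fun G => s * f G + (1 - s * m + 4 * s ^ 2)) := by
        refine binExp_mono hp0 hp1 fun G _ => ?_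
        have hfm : |f G - m| ≤ 2 := by
          have := abs_sub (f G) m; linarith [hf G]
        have hle : |s * (f G - m)| ≤ 1 := by
          rw [abs_mul]
          calc |s| * |f G - m| ≤ (2 ^ 0 / 2) * 2 :=
                mul_le_mul hs hfm (abs_nonneg _) (by norm_num)
            _ = 1 := by norm_num
        have h2 := (abs_le.1 (Real.abs_exp_sub_one_sub_id_le hle)).2
        have h3 : (s * (f G - m)) ^ 2 ≤ 4 * s ^ 2 := by
          rw [mul_pow, ← sq_abs (f G - m)]
          nlinarith [sq_nonneg s, abs_nonneg (f G - m),
            mul_le_mul_of_nonneg_left (pow_le_pow_left₀ (abs_nonneg _) hfm 2) (sq_nonneg s)]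
        linarith
      rw [binExp_add, binExp_const, binExp_const_mul, ← hm] at h1
      have h4 := Real.add_one_le_exp (4 * s ^ 2 * V + 4 * s ^ 2 / 2 ^ 0)
      have : 0 ≤ 4 * s ^ 2 * V := by positivity
      simp only [pow_zero, div_one] at h4 ⊢
      linarith
    | succ j ih =>
      intro s hs hsV
      have hs2 : |s / 2| ≤ 2 ^ j / 2 := by
        rw [abs_div, abs_two]; rw [pow_succ] at hs; linarith
      have hsV2 : (s / 2) ^ 2 * V ≤ 1 := by
        have : 0 ≤ s ^ 2 * V := by positivity
        rw [div_pow]; linarith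
      have h1 := mgf_halving hp0 hp1 E (fun G => f G - m) (V := V) (t := s)
        (fun G hG => by simpa using hV G hG) hsV
      have h2 := ih (s / 2) hs2 hsV2
      have h0 : 0 ≤ binExp p E (fun G => Real.exp (s / 2 * (f G - m))) := by
        have := binExp_mono (p := p) hp0 hp1 (E := E) (f := fun _ => 0)
          (g := fun G => Real.exp (s / 2 * (f G - m))) (fun G _ => (Real.exp_pos _).le)
        rwa [binExp_const] at this
      refine h1.trans ((mul_le_mul_of_nonneg_left (pow_le_pow_left₀ h0 h2 2)
        (Real.exp_pos _).le).trans ?_)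
      rw [← Real.exp_nat_mul, ← Real.exp_add, Real.exp_le_exp, pow_succ (2 : ℝ) j]
      have h3 : 0 ≤ s ^ 2 * V := by positivity
      have h4 : (4 * (s / 2) ^ 2 / 2 ^ j) * 2 = 4 * s ^ 2 / (2 ^ j * 2) := by field_simp
      push_cast
      nlinarith
  obtain ⟨j, hj⟩ := pow_unbounded_of_one_lt (max (2 * |t|) (4 * t ^ 2)) (one_lt_two (α := ℝ))
  have hj1 := (le_max_left _ _).trans hj.le
  have hj2 := (le_max_right _ _).trans hj.le
  refine (key j t (by linarith) ht).trans (Real.exp_le_exp.2 ?_)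
  have : 4 * t ^ 2 / 2 ^ j ≤ 1 := by rw [div_le_one (by positivity)]; exact hj2
  linarith

end binExp

/-! ### From independent edges to a fixed number of edges -/

/-- A binomial distribution whose mean is the integer `M` has its mode there, so that mass is at
least `1 / (N + 1)`. -/
lemma binomial_mode {N M : ℕ} (hM0 : 0 < M) (hMN : M < N) {p : ℝ} (hp : p = M / N) :
    1 ≤ ((N : ℝ) + 1) * (N.choose M * (p ^ M * (1 - p) ^ (N - M))) := by
  have hN : (0 : ℝ) < N := by exact_mod_cast hM0.trans hMN
  have hM : (0 : ℝ) < M := by exact_mod_cast hM0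
  have hMN' : (M : ℝ) < N := by exact_mod_cast hMN
  have hp0 : 0 < p := by rw [hp]; positivity
  have hpN : p * N = M := by rw [hp]; field_simp
  have hp1 : 0 < 1 - p := by
    have : p < 1 := by rw [hp, div_lt_one hN]; exact hMN'
    linarith
  set b : ℕ → ℝ := fun j => N.choose j * (p ^ j * (1 - p) ^ (N - j)) with hb
  have hrec : ∀ j, j < N → b (j + 1) * ((j + 1) * (1 - p)) = b j * ((N - j) * p) := by
    intro j hj
    have h1 : (N.choose (j + 1) : ℝ) * (j + 1) = N.choose j * (N - j) := by
      have := Nat.choose_succ_right_eq N j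
      have h2 := congrArg (Nat.cast (R := ℝ)) this
      push_cast [Nat.cast_sub hj.le] at h2
      exact h2
    have h2 : (1 - p) ^ (N - j) = (1 - p) ^ (N - (j + 1)) * (1 - p) := by
      rw [← pow_succ]; congr 1; omega
    simp only [hb]
    rw [h2, pow_succ]
    calc _ = (N.choose (j + 1) : ℝ) * (j + 1) * (p ^ j * p * (1 - p) ^ (N - (j + 1)) * (1 - p)) := by
          ring
      _ = _ := by rw [h1]; ring
  have hb0 : ∀ j, 0 ≤ b j := fun j => by simp only [hb]; positivity
  have hup : ∀ j, j < M → b j ≤ b (j + 1) := by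
    intro j hj
    have h := hrec j (hj.trans hMN)
    have hj' : (j : ℝ) + 1 ≤ M := by exact_mod_cast hj
    have h2 : ((j : ℝ) + 1) * (1 - p) ≤ (N - j) * p := by nlinarith
    have h3 : 0 < ((j : ℝ) + 1) * (1 - p) := by positivity
    by_contra hlt
    push Not at hlt
    have h4 := mul_lt_mul_of_pos_right hlt h3
    have h5 := mul_le_mul_of_nonneg_left h2 (hb0 j)
    linarith
  have hdown : ∀ j, M ≤ j → j < N → b (j + 1) ≤ b j := by
    intro j hj hjN
    have h := hrec j hjN
    have hj' : (M : ℝ) ≤ j := by exact_mod_cast hj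
    have hjN' : (j : ℝ) < N := by exact_mod_cast hjN
    have h2 : (N - j) * p ≤ ((j : ℝ) + 1) * (1 - p) := by
      have hp1' : p ≤ 1 := by linarith
      nlinarith
    have h3 : 0 < ((N : ℝ) - j) * p := mul_pos (by linarith) hp0
    by_contra hlt
    push Not at hlt
    have h4 := mul_lt_mul_of_pos_right hlt h3
    have h5 := mul_le_mul_of_nonneg_left h2 (hb0 (j + 1))
    linarith
  have hle1 : ∀ d, d ≤ M → b (M - d) ≤ b M := by
    intro d
    induction d with
    | zero => intro _; simp
    | succ d ih =>
      intro hd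
      refine le_trans ?_ (ih (by omega))
      have := hup (M - (d + 1)) (by omega)
      rwa [show M - (d + 1) + 1 = M - d by omega] at this
  have hle2 : ∀ d, M + d ≤ N → b (M + d) ≤ b M := by
    intro d
    induction d with
    | zero => intro _; simp
    | succ d ih =>
      intro hd
      exact (hdown (M + d) (by omega) (by omega)).trans (ih (by omega))
  have hall : ∀ j ∈ Finset.range (N + 1), b j ≤ b M := by
    intro j hj
    have hj := Finset.mem_range.1 hj
    rcases le_total j M with h | h
    · have := hle1 (M - j) (by omega)
      rwa [show M - (M - j) = j by omega] at this
    · have := hle2 (j - M) (by omega)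
      rwa [show M + (j - M) = j by omega] at this
  have hsum : ∑ j ∈ Finset.range (N + 1), b j = 1 := by
    have := add_pow p (1 - p) N
    rw [show p + (1 - p) = 1 by ring, one_pow] at this
    rw [this]
    exact Finset.sum_congr rfl fun j _ => by simp only [hb]; ring
  have := Finset.sum_le_card_nsmul _ _ _ hall
  rw [hsum, Finset.card_range, nsmul_eq_mul] at this
  push_cast at this
  exact this

/-- Conditioning the independent model on its most likely size costs a factor at most `#E + 1`. -/
lemma card_le_binExp {ι : Type*} [DecidableEq ι] (E : Finset ι) {M : ℕ} (hM0 : 0 < M)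
    (hMN : M < #E) {p : ℝ} (hp : p = M / #E) (F : Finset ι → ℝ) (hF : ∀ G ⊆ E, 0 ≤ F G)
    (B : Finset (Finset ι)) (hB : B ⊆ E.powersetCard M) (hBF : ∀ G ∈ B, 1 ≤ F G) :
    (#B : ℝ) / #(E.powersetCard M) ≤ ((#E : ℝ) + 1) * binExp p E F := by
  have hmode := binomial_mode hM0 hMN hp
  have hN : (0 : ℝ) < #E := by exact_mod_cast hM0.trans hMN
  have hp0 : 0 ≤ p := by rw [hp]; positivity
  have hp1 : 0 ≤ 1 - p := by
    have : p ≤ 1 := by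
      rw [hp, div_le_one hN]
      exact_mod_cast hMN.le
    linarith
  have hchoose : (0 : ℝ) < (#E).choose M := by exact_mod_cast Nat.choose_pos hMN.le
  set w := p ^ M * (1 - p) ^ (#E - M) with hw
  have hw0 : 0 ≤ w := by positivity
  have h1 : (#B : ℝ) * w ≤ binExp p E F := by
    calc (#B : ℝ) * w = ∑ G ∈ B, w := by rw [Finset.sum_const, nsmul_eq_mul]
      _ ≤ ∑ G ∈ B, (p ^ #G * (1 - p) ^ #(E \ G)) • F G := by
          refine Finset.sum_le_sum fun G hG => ?_
          have hG' := Finset.mem_powersetCard.1 (hB hG)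
          rw [Finset.card_sdiff_of_subset hG'.1, hG'.2, smul_eq_mul, ← hw]
          exact le_mul_of_one_le_right hw0 (hBF G hG)
      _ ≤ binExp p E F := by
          refine Finset.sum_le_sum_of_subset_of_nonneg ?_ ?_
          · intro G hG
            exact Finset.mem_powerset.2 (Finset.mem_powersetCard.1 (hB hG)).1
          · intro G hG _
            exact smul_nonneg (by positivity) (hF G (Finset.mem_powerset.1 hG))
  rw [Finset.card_powersetCard, div_le_iff₀ hchoose]
  calc (#B : ℝ) = #B * 1 := (mul_one _).symm
    _ ≤ #B * (((#E : ℝ) + 1) * ((#E).choose M * w)) := by gcongr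
    _ = ((#E : ℝ) + 1) * (#B * w) * (#E).choose M := by ring
    _ ≤ ((#E : ℝ) + 1) * binExp p E F * (#E).choose M := by gcongr

/-! ### Averages over `k`-sets -/

section Exu

variable {α ι : Type*} {Ω : Finset α}

lemma Exu_mono {f g : α → ℝ} (h : ∀ a ∈ Ω, f a ≤ g a) : Exu Ω f ≤ Exu Ω g := by
  unfold Exu
  exact div_le_div_of_nonneg_right (Finset.sum_le_sum h) (Nat.cast_nonneg _)

lemma Exu_const (hΩ : Ω.Nonempty) (c : ℝ) : Exu Ω (fun _ => c) = c := by
  have : (#Ω : ℝ) ≠ 0 := by exact_mod_cast hΩ.card_pos.ne'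
  simp [Exu, this]

lemma Exu_add (f g : α → ℝ) : Exu Ω (fun a => f a + g a) = Exu Ω f + Exu Ω g := by
  simp [Exu, Finset.sum_add_distrib, add_div]

lemma Exu_sub (f g : α → ℝ) : Exu Ω (fun a => f a - g a) = Exu Ω f - Exu Ω g := by
  simp [Exu, Finset.sum_sub_distrib, sub_div]

lemma Exu_const_mul (c : ℝ) (f : α → ℝ) : Exu Ω (fun a => c * f a) = c * Exu Ω f := by
  simp [Exu, ← Finset.mul_sum, mul_div_assoc]

lemma Exu_sum (s : Finset ι) (f : ι → α → ℝ) :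
    Exu Ω (fun a => ∑ i ∈ s, f i a) = ∑ i ∈ s, Exu Ω (f i) := by
  simp only [Exu]
  rw [Finset.sum_comm, Finset.sum_div]

lemma abs_Exu_le (hΩ : Ω.Nonempty) {f : α → ℝ} {c : ℝ} (h : ∀ a ∈ Ω, |f a| ≤ c) :
    |Exu Ω f| ≤ c := by
  rw [abs_le]
  constructor
  · rw [← Exu_const hΩ (-c)]; exact Exu_mono fun a ha => (abs_le.1 (h a ha)).1
  · rw [← Exu_const hΩ c]; exact Exu_mono fun a ha => (abs_le.1 (h a ha)).2

/-- A Bessel-type inequality: if the absolute row sums of the Gram matrix of the `x e` are at most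
`R`, the squared correlations of a bounded `ξ` with the `x e` sum to at most `R`. -/
lemma bessel (hΩ : Ω.Nonempty) (E : Finset ι) (x : ι → α → ℝ) {R : ℝ} (hR0 : 0 < R)
    (hR : ∀ e ∈ E, ∑ e' ∈ E, |Exu Ω (fun a => x e a * x e' a)| ≤ R) (ξ : α → ℝ)
    (hξ : ∀ a, |ξ a| ≤ 1) : ∑ e ∈ E, Exu Ω (fun a => ξ a * x e a) ^ 2 ≤ R := by
  set c : ι → ℝ := fun e => Exu Ω (fun a => ξ a * x e a) with hc
  set Q := ∑ e ∈ E, c e ^ 2 with hQ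
  have hQ0 : 0 ≤ Q := Finset.sum_nonneg fun _ _ => sq_nonneg _
  set U : α → ℝ := fun a => ∑ e ∈ E, c e * x e a with hU
  have h1 : Q = Exu Ω (fun a => ξ a * U a) := by
    have : ∀ a, ξ a * U a = ∑ e ∈ E, c e * (ξ a * x e a) := by
      intro a; rw [hU, Finset.mul_sum]; exact Finset.sum_congr rfl fun _ _ => by ring
    simp_rw [this, Exu_sum, Exu_const_mul, hQ]
    exact Finset.sum_congr rfl fun _ _ => by rw [sq]
  have h2 : Exu Ω (fun a => U a ^ 2) ≤ R * Q := by
    have e1 : ∀ a, U a ^ 2 = ∑ e ∈ E, ∑ e' ∈ E, c e * c e' * (x e a * x e' a) := by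
      intro a
      rw [sq, hU, Finset.sum_mul_sum]
      exact Finset.sum_congr rfl fun _ _ => Finset.sum_congr rfl fun _ _ => by ring
    simp_rw [e1, Exu_sum, Exu_const_mul]
    calc ∑ e ∈ E, ∑ e' ∈ E, c e * c e' * Exu Ω (fun a => x e a * x e' a)
        ≤ ∑ e ∈ E, ∑ e' ∈ E, (c e ^ 2 / 2 * |Exu Ω (fun a => x e a * x e' a)| +
            c e' ^ 2 / 2 * |Exu Ω (fun a => x e' a * x e a)|) := by
          refine Finset.sum_le_sum fun e _ => Finset.sum_le_sum fun e' _ => ?_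
          have hs : Exu Ω (fun a => x e' a * x e a) = Exu Ω (fun a => x e a * x e' a) := by
            simp_rw [mul_comm]
          rw [hs, ← add_mul]
          refine (le_abs_self _).trans ?_
          rw [abs_mul]
          refine mul_le_mul_of_nonneg_right ?_ (abs_nonneg _)
          rw [abs_le]
          constructor <;> nlinarith [sq_nonneg (c e - c e'), sq_nonneg (c e + c e')]
      _ = ∑ e ∈ E, c e ^ 2 * ∑ e' ∈ E, |Exu Ω (fun a => x e a * x e' a)| := by
          simp_rw [Finset.sum_add_distrib]
          rw [Finset.sum_comm (f := fun e e' => c e' ^ 2 / 2 * |Exu Ω (fun a => x e' a * x e a)|),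
            ← Finset.sum_add_distrib]
          refine Finset.sum_congr rfl fun e _ => ?_
          rw [← Finset.mul_sum]; ring
      _ ≤ ∑ e ∈ E, c e ^ 2 * R :=
          Finset.sum_le_sum fun e he => mul_le_mul_of_nonneg_left (hR e he) (sq_nonneg _)
      _ = R * Q := by rw [← Finset.sum_mul, mul_comm]
  -- Pointwise `2 R ξ U ≤ R² + U²`; averaging gives `2 R Q ≤ R² + R Q`.
  have h3 : 2 * R * Q ≤ R ^ 2 + R * Q := by
    calc 2 * R * Q = Exu Ω (fun a => 2 * R * (ξ a * U a)) := by rw [Exu_const_mul, ← h1]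
      _ ≤ Exu Ω (fun a => R ^ 2 + U a ^ 2) := by
          refine Exu_mono fun a _ => ?_
          have hle : ξ a * U a ≤ |U a| := by
            refine (le_abs_self _).trans ?_
            rw [abs_mul]; exact mul_le_of_le_one_left (abs_nonneg _) (hξ a)
          have := mul_le_mul_of_nonneg_left hle hR0.le
          nlinarith [sq_nonneg (R - |U a|), sq_abs (U a)]
      _ ≤ R ^ 2 + R * Q := by rw [Exu_add, Exu_const hΩ]; linarith
  nlinarith

end Exu

/-! ### Edge indicators of a random `k`-set -/

lemma mem_completeEdges {n : ℕ} {e : Sym2 (Fin n)} : e ∈ completeEdges n ↔ ¬ e.IsDiag := by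
  simp [completeEdges]

lemma card_edges_inside {n : ℕ} (S : Finset (Fin n)) :
    #((completeEdges n).filter (· ∈ S.sym2)) = (#S).choose 2 := by
  rw [← Sym2.card_image_offDiag]
  congr 1
  ext e
  induction e using Sym2.inductionOn with
  | hf a b =>
    simp only [Finset.mem_filter, mem_completeEdges, Sym2.mk_isDiag_iff, Finset.mk_mem_sym2_iff,
      Finset.mem_image, Finset.mem_offDiag, Prod.exists]
    constructor
    · rintro ⟨hne, ha, hb⟩
      exact ⟨a, b, ⟨ha, hb, hne⟩, rfl⟩
    · rintro ⟨c, d, ⟨hc, hd, hne⟩, h⟩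
      rcases Sym2.eq_iff.1 h with ⟨rfl, rfl⟩ | ⟨rfl, rfl⟩
      · exact ⟨hne, hc, hd⟩
      · exact ⟨hne.symm, hd, hc⟩

lemma cast_choose_two_Kr (k : ℕ) : ((k.choose 2 : ℕ) : ℝ) = Kr k := by
  rw [Nat.cast_choose_two, Kr]

lemma Nr_eq_Kr (n : ℕ) : Nr n = Kr n := rfl

lemma card_completeEdges (n : ℕ) : #(completeEdges n) = n.choose 2 := by
  have := card_edges_inside (Finset.univ : Finset (Fin n))
  rw [Finset.card_univ, Fintype.card_fin] at this
  rw [← this]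
  congr 1
  ext e
  simp

lemma cast_card_completeEdges (n : ℕ) : (#(completeEdges n) : ℝ) = Nr n := by
  rw [card_completeEdges, cast_choose_two_Kr, Nr_eq_Kr]

lemma mem_kSets {n k : ℕ} {S : Finset (Fin n)} : S ∈ kSets n k ↔ #S = k := by
  simp [kSets]

lemma card_kSets (n k : ℕ) : #(kSets n k) = n.choose k := by simp [kSets]

lemma kSets_nonempty {n k : ℕ} (h : k ≤ n) : (kSets n k).Nonempty := by
  rw [← Finset.card_pos, card_kSets]; exact Nat.choose_pos h

/-- The indicator that the edge `e` lies inside `S`, centred at its mean `K / N` over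
`k`-sets `S`. -/
def xdev (n k : ℕ) (e : Sym2 (Fin n)) (S : Finset (Fin n)) : ℝ :=
  (if e ∈ S.sym2 then 1 else 0) - Kr k / Nr n

/-- The sum of the centred indicators over the edges of `G`; this is `e(S) - K M / N` if `G` has
`M` edges. -/
def Ydev (n k : ℕ) (G : Finset (Sym2 (Fin n))) (S : Finset (Fin n)) : ℝ := ∑ e ∈ G, xdev n k e S

section
variable {n k : ℕ}

lemma Kr_nonneg (k : ℕ) : 0 ≤ Kr k := by
  rw [← cast_choose_two_Kr]; positivity

lemma Kr_le (hk : k ≤ n) : Kr k ≤ Nr n := by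
  rw [Nr_eq_Kr, ← cast_choose_two_Kr, ← cast_choose_two_Kr]
  exact_mod_cast Nat.choose_le_choose 2 hk

lemma kappa_mem (hk : k ≤ n) : 0 ≤ Kr k / Nr n ∧ Kr k / Nr n ≤ 1 :=
  ⟨div_nonneg (Kr_nonneg k) (Kr_nonneg n), div_le_one_of_le₀ (Kr_le hk) (Kr_nonneg n)⟩

lemma abs_xdev_le (hk : k ≤ n) (e : Sym2 (Fin n)) (S : Finset (Fin n)) : |xdev n k e S| ≤ 1 := by
  obtain ⟨h0, h1⟩ := kappa_mem hk
  unfold xdev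
  rw [abs_le]
  split_ifs <;> constructor <;> linarith

lemma sum_ind (S : Finset (Fin n)) (hS : S ∈ kSets n k) :
    ∑ e ∈ completeEdges n, (if e ∈ S.sym2 then (1 : ℝ) else 0) = Kr k := by
  rw [Finset.sum_boole, card_edges_inside, mem_kSets.1 hS, cast_choose_two_Kr]

lemma sum_xdev (hn : 0 < Nr n) (S : Finset (Fin n)) (hS : S ∈ kSets n k) :
    ∑ e ∈ completeEdges n, xdev n k e S = 0 := by
  unfold xdev
  rw [Finset.sum_sub_distrib, sum_ind S hS, Finset.sum_const, nsmul_eq_mul,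
    cast_card_completeEdges, mul_div_cancel₀ _ hn.ne', sub_self]

lemma sum_xdev_sq (hn : 0 < Nr n) (S : Finset (Fin n)) (hS : S ∈ kSets n k) :
    ∑ e ∈ completeEdges n, xdev n k e S ^ 2 = Kr k * (1 - Kr k / Nr n) := by
  have h : ∀ e, xdev n k e S ^ 2 =
      (1 - 2 * (Kr k / Nr n)) * (if e ∈ S.sym2 then (1 : ℝ) else 0) + (Kr k / Nr n) ^ 2 := by
    intro e
    unfold xdev
    split_ifs <;> ring
  simp_rw [h]
  rw [Finset.sum_add_distrib, ← Finset.mul_sum, sum_ind S hS, Finset.sum_const, nsmul_eq_mul,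
    cast_card_completeEdges]
  field_simp
  ring

/-- The covariance of the indicators of two disjoint edges is the same for all such pairs. -/
lemma cov_far (hk4 : 4 ≤ k) (hk : k ≤ n) {u v a b : Fin n} (huv : u ≠ v) (hab : a ≠ b)
    (hau : a ≠ u) (hav : a ≠ v) (hbu : b ≠ u) (hbv : b ≠ v) :
    Exu (kSets n k) (fun S => xdev n k s(u, v) S * xdev n k s(a, b) S) =
      ((n - 4).choose (k - 4) - 2 * (Kr k / Nr n) * (n - 2).choose (k - 2)) / n.choose k +
        (Kr k / Nr n) ^ 2 := by
  have hc : (0 : ℝ) < n.choose k := by exact_mod_cast Nat.choose_pos hk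
  have hcount : ∀ A : Finset (Fin n), #A ≤ k →
      ∑ S ∈ kSets n k, (if A ⊆ S then (1 : ℝ) else 0) = (n - #A).choose (k - #A) := by
    intro A hA
    rw [Finset.sum_boole, kSets, Finset.card_filter_powersetCard_subset _ _ _ (by simp) hA]
    simp
  have h2 : ∀ c d : Fin n, c ≠ d → ∑ S ∈ kSets n k, (if s(c, d) ∈ S.sym2 then (1 : ℝ) else 0) =
      (n - 2).choose (k - 2) := by
    intro c d hcd
    have hcard : #({c, d} : Finset (Fin n)) = 2 := Finset.card_pair hcd
    have := hcount {c, d} (by omega)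
    rw [hcard] at this
    rw [← this]
    refine Finset.sum_congr rfl fun S _ => ?_
    simp [Finset.insert_subset_iff]
  have h4 : ∑ S ∈ kSets n k, ((if s(u, v) ∈ S.sym2 then (1 : ℝ) else 0) *
      (if s(a, b) ∈ S.sym2 then (1 : ℝ) else 0)) = (n - 4).choose (k - 4) := by
    have hcard : #({u, v, a, b} : Finset (Fin n)) = 4 := by
      rw [Finset.card_insert_of_notMem, Finset.card_insert_of_notMem, Finset.card_pair hab]
      · simp [hav.symm, hbv.symm]
      · simp [huv, hau.symm, hbu.symm]
    have := hcount {u, v, a, b} (by omega)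
    rw [hcard] at this
    rw [← this]
    refine Finset.sum_congr rfl fun S _ => ?_
    simp only [Finset.mk_mem_sym2_iff, Finset.insert_subset_iff, Finset.singleton_subset_iff]
    split_ifs <;> simp_all
  unfold Exu
  rw [card_kSets]
  have h : ∀ S, xdev n k s(u, v) S * xdev n k s(a, b) S =
      ((if s(u, v) ∈ S.sym2 then (1 : ℝ) else 0) * (if s(a, b) ∈ S.sym2 then (1 : ℝ) else 0)
        - Kr k / Nr n * (if s(u, v) ∈ S.sym2 then (1 : ℝ) else 0)
        - Kr k / Nr n * (if s(a, b) ∈ S.sym2 then (1 : ℝ) else 0)) + (Kr k / Nr n) ^ 2 := by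
    intro S; unfold xdev; ring
  simp_rw [h]
  rw [Finset.sum_add_distrib, Finset.sum_sub_distrib, Finset.sum_sub_distrib, h4, ← Finset.mul_sum,
    ← Finset.mul_sum, h2 u v huv, h2 a b hab, Finset.sum_const, card_kSets, nsmul_eq_mul, add_div,
    mul_div_cancel_left₀ _ hc.ne']
  congr 2; ring

/-- Row sums of the covariance matrix of the edge indicators. Edges meeting `e` are few; the
remaining covariances all coincide, and the rows of the matrix sum to zero, so together they
contribute no more than the former. -/
lemma row_sum_le (hk4 : 4 ≤ k) (hk : k ≤ n) (e : Sym2 (Fin n)) (he : e ∈ completeEdges n) :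
    ∑ e' ∈ completeEdges n, |Exu (kSets n k) (fun S => xdev n k e S * xdev n k e' S)| ≤ 4 * n := by
  have hN : 0 < Nr n := by
    have : (4 : ℝ) ≤ n := by exact_mod_cast hk4.trans hk
    unfold Nr; nlinarith
  have hne := kSets_nonempty hk
  induction e using Sym2.inductionOn with
  | hf u v =>
  have huv : u ≠ v := by simpa [mem_completeEdges] using he
  set C : Sym2 (Fin n) → ℝ := fun e' =>
    Exu (kSets n k) (fun S => xdev n k s(u, v) S * xdev n k e' S) with hC
  have hC1 : ∀ e', |C e'| ≤ 1 := fun e' => abs_Exu_le hne fun S _ => by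
    rw [abs_mul]
    exact mul_le_one₀ (abs_xdev_le hk _ _) (abs_nonneg _) (abs_xdev_le hk _ _)
  have hC0 : ∑ e' ∈ completeEdges n, C e' = 0 := by
    simp only [hC]
    rw [← Exu_sum]
    unfold Exu
    rw [Finset.sum_eq_zero, zero_div]
    intro S hS
    rw [← Finset.mul_sum, sum_xdev hN S hS, mul_zero]
  set near := (completeEdges n).filter (fun e' => u ∈ e' ∨ v ∈ e') with hnear
  set far := (completeEdges n).filter (fun e' => ¬ (u ∈ e' ∨ v ∈ e')) with hfar
  have hcard : (#near : ℝ) ≤ 2 * n := by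
    have hsub : near ⊆ (Finset.univ.image fun w => s(u, w)) ∪ (Finset.univ.image fun w => s(v, w)) := by
      intro e' he'
      rcases (Finset.mem_filter.1 he').2 with h | h
      · obtain ⟨w, rfl⟩ := Sym2.mem_iff_exists.1 h
        simp
      · obtain ⟨w, rfl⟩ := Sym2.mem_iff_exists.1 h
        simp
    have h1 := (Finset.card_le_card hsub).trans (Finset.card_union_le _ _)
    have h2 : #(Finset.univ.image fun w : Fin n => s(u, w)) ≤ n := Finset.card_image_le.trans (by simp)
    have h3 : #(Finset.univ.image fun w : Fin n => s(v, w)) ≤ n := Finset.card_image_le.trans (by simp)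
    have : #near ≤ 2 * n := by omega
    exact_mod_cast this
  set c : ℝ := ((n - 4).choose (k - 4) - 2 * (Kr k / Nr n) * (n - 2).choose (k - 2)) / n.choose k +
        (Kr k / Nr n) ^ 2 with hc
  have hCfar : ∀ e' ∈ far, C e' = c := by
    intro e' he'
    induction e' using Sym2.inductionOn with
    | hf a b =>
    obtain ⟨h1, h2⟩ := Finset.mem_filter.1 he'
    have hab : a ≠ b := by simpa [mem_completeEdges] using h1
    simp only [Sym2.mem_iff, not_or] at h2
    exact cov_far hk4 hk huv hab (Ne.symm h2.1.1) (Ne.symm h2.2.1) (Ne.symm h2.1.2) (Ne.symm h2.2.2)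
  have hsplit := Finset.sum_filter_add_sum_filter_not (completeEdges n)
    (fun e' => u ∈ e' ∨ v ∈ e') C
  have hsplit' := Finset.sum_filter_add_sum_filter_not (completeEdges n)
    (fun e' => u ∈ e' ∨ v ∈ e') (fun e' => |C e'|)
  have hnearsum : ∑ e' ∈ near, |C e'| ≤ 2 * n := by
    refine le_trans (Finset.sum_le_card_nsmul _ _ 1 fun e' _ => hC1 e') ?_
    simpa using hcard
  have hfarsum : ∑ e' ∈ far, |C e'| = |∑ e' ∈ far, C e'| := by
    rw [Finset.sum_congr rfl hCfar, Finset.sum_congr rfl fun e' he' => by rw [hCfar e' he']]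
    simp [abs_mul]
  have hfareq : ∑ e' ∈ far, C e' = - ∑ e' ∈ near, C e' := by
    rw [hC0] at hsplit; linarith
  rw [← hsplit']
  have : |∑ e' ∈ far, C e'| ≤ 2 * n := by
    rw [hfareq, abs_neg]
    exact (Finset.abs_sum_le_sum_abs _ _).trans hnearsum
  linarith

end

/-! ### The characteristic function: gradient and mean -/

/-- Average over `k`-sets `S` of `cos (θ Y + a)`, `Y` being the centred edge count; `a = 0` and
`a = -π/2` give the real and imaginary part of the characteristic function. -/
def fcos (n k : ℕ) (θ a : ℝ) (G : Finset (Sym2 (Fin n))) : ℝ :=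
  Exu (kSets n k) (fun S => Real.cos (θ * Ydev n k G S + a))

/-- The characteristic function of the centred edge count of a uniform `k`-set. -/
def psi (n k : ℕ) (θ : ℝ) (G : Finset (Sym2 (Fin n))) : ℂ :=
  (∑ S ∈ kSets n k, Complex.exp ((θ * Ydev n k G S : ℝ) * Complex.I)) / (#(kSets n k) : ℝ)

section
variable {n k : ℕ}

lemma abs_fcos_le (hk : k ≤ n) (θ a : ℝ) (G : Finset (Sym2 (Fin n))) : |fcos n k θ a G| ≤ 1 :=
  abs_Exu_le (kSets_nonempty hk) fun _ _ => Real.abs_cos_le_one _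

lemma psi_re (θ : ℝ) (G : Finset (Sym2 (Fin n))) : (psi n k θ G).re = fcos n k θ 0 G := by
  unfold psi fcos Exu
  rw [Complex.div_ofReal_re, Complex.re_sum]
  simp only [add_zero, Complex.exp_ofReal_mul_I_re]

lemma psi_im (θ : ℝ) (G : Finset (Sym2 (Fin n))) :
    (psi n k θ G).im = fcos n k θ (-(Real.pi / 2)) G := by
  unfold psi fcos Exu
  rw [Complex.div_ofReal_im, Complex.im_sum]
  simp only [← sub_eq_add_neg, Real.cos_sub_pi_div_two, Complex.exp_ofReal_mul_I_im]

lemma cos_taylor {b h : ℝ} (hh : |h| ≤ 1) :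
    |Real.cos (b + h) - Real.cos b + h * Real.sin b| ≤ h ^ 2 := by
  have h1 : |Real.cos h - 1| ≤ h ^ 2 / 2 := by
    rw [abs_le]
    constructor
    · linarith [Real.one_sub_sq_div_two_le_cos (x := h)]
    · have := Real.cos_le_one h; nlinarith [sq_nonneg h]
  have h2 : |Real.sin h - h| ≤ h ^ 2 / 2 := by
    have h3 := Real.sin_bound hh
    have h4 : |h| ^ 5 ≤ h ^ 2 := by
      rw [← sq_abs h]; exact pow_le_pow_of_le_one (abs_nonneg h) hh (by norm_num)
    have h5 : |h ^ 3 / 6| ≤ h ^ 2 / 6 := by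
      rw [abs_div, abs_pow, ← sq_abs h, abs_of_pos (by norm_num : (0 : ℝ) < 6)]
      have : |h| ^ 3 ≤ |h| ^ 2 := pow_le_pow_of_le_one (abs_nonneg h) hh (by norm_num)
      linarith
    have h6 : Real.sin h - h = (Real.sin h - (h - h ^ 3 / 6)) - h ^ 3 / 6 := by ring
    rw [h6]
    refine (abs_sub _ _).trans ?_
    nlinarith [sq_nonneg h]
  have e : Real.cos (b + h) - Real.cos b + h * Real.sin b =
      Real.cos b * (Real.cos h - 1) - Real.sin b * (Real.sin h - h) := by
    rw [Real.cos_add]; ring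
  rw [e]
  refine (abs_sub _ _).trans ?_
  rw [abs_mul, abs_mul]
  have h7 := mul_le_mul (Real.abs_cos_le_one b) h1 (abs_nonneg _) zero_le_one
  have h8 := mul_le_mul (Real.abs_sin_le_one b) h2 (abs_nonneg _) zero_le_one
  linarith

lemma Ydev_insert {G : Finset (Sym2 (Fin n))} {e : Sym2 (Fin n)} (h : e ∉ G) (S : Finset (Fin n)) :
    Ydev n k (insert e G) S = Ydev n k G S + xdev n k e S := by
  unfold Ydev; rw [Finset.sum_insert h, add_comm]

lemma Ydev_erase {G : Finset (Sym2 (Fin n))} {e : Sym2 (Fin n)} (h : e ∈ G) (S : Finset (Fin n)) :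
    Ydev n k (G.erase e) S = Ydev n k G S - xdev n k e S := by
  unfold Ydev; rw [← Finset.add_sum_erase G _ h]; ring

lemma abs_fcos_diff (hk : k ≤ n) {θ : ℝ} (hθ : |θ| ≤ 1) (a : ℝ) (G : Finset (Sym2 (Fin n)))
    (e : Sym2 (Fin n)) :
    |fcos n k θ a (insert e G) - fcos n k θ a (G.erase e) +
      θ * Exu (kSets n k) (fun S => Real.sin (θ * Ydev n k G S + a) * xdev n k e S)| ≤ θ ^ 2 := by
  unfold fcos
  rw [← Exu_const_mul, ← Exu_sub, ← Exu_add]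
  refine abs_Exu_le (kSets_nonempty hk) fun S _ => ?_
  have hx := abs_xdev_le hk e S
  have hθx : |θ * xdev n k e S| ≤ 1 := by
    rw [abs_mul]; exact mul_le_one₀ hθ (abs_nonneg _) hx
  have hsq : (θ * xdev n k e S) ^ 2 ≤ θ ^ 2 := by
    rw [mul_pow]
    have : xdev n k e S ^ 2 ≤ 1 := by rw [← sq_abs]; exact pow_le_one₀ (abs_nonneg _) hx
    nlinarith [sq_nonneg θ]
  by_cases h : e ∈ G
  · rw [Finset.insert_eq_self.2 h, Ydev_erase h]
    have := cos_taylor (b := θ * Ydev n k G S + a) (h := -(θ * xdev n k e S)) (by rwa [abs_neg])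
    rw [← abs_neg]
    refine le_trans (le_of_eq ?_) (this.trans (by rw [neg_sq]; exact hsq))
    congr 1
    rw [show θ * Ydev n k G S + a + -(θ * xdev n k e S) =
      θ * (Ydev n k G S - xdev n k e S) + a by ring]
    ring
  · rw [Finset.erase_eq_of_notMem h, Ydev_insert h]
    have := cos_taylor (b := θ * Ydev n k G S + a) (h := θ * xdev n k e S) hθx
    refine le_trans (le_of_eq ?_) (this.trans hsq)
    congr 1
    rw [show θ * Ydev n k G S + a + θ * xdev n k e S =
      θ * (Ydev n k G S + xdev n k e S) + a by ring]
    ring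

/-- The discrete gradient of the characteristic function, bounded uniformly over all graphs. -/
lemma gradient_le (hk4 : 4 ≤ k) (hk : k ≤ n) {θ : ℝ} (hθ : |θ| ≤ 1) (a : ℝ)
    (G : Finset (Sym2 (Fin n))) :
    ∑ e ∈ completeEdges n, (fcos n k θ a (insert e G) - fcos n k θ a (G.erase e)) ^ 2 ≤
      8 * n * θ ^ 2 + 2 * Nr n * θ ^ 4 := by
  set c : Sym2 (Fin n) → ℝ := fun e =>
    Exu (kSets n k) (fun S => Real.sin (θ * Ydev n k G S + a) * xdev n k e S) with hc
  have hn : (0 : ℝ) < n := by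
    have : 0 < n := by omega
    exact_mod_cast this
  have hb : ∑ e ∈ completeEdges n, c e ^ 2 ≤ 4 * n :=
    bessel (kSets_nonempty hk) (completeEdges n) (xdev n k) (by positivity)
      (fun e he => row_sum_le hk4 hk e he) _ (fun S => Real.abs_sin_le_one _)
  calc ∑ e ∈ completeEdges n, (fcos n k θ a (insert e G) - fcos n k θ a (G.erase e)) ^ 2
      ≤ ∑ e ∈ completeEdges n, (2 * θ ^ 2 * c e ^ 2 + 2 * θ ^ 4) := by
        refine Finset.sum_le_sum fun e _ => ?_
        have h := abs_fcos_diff hk hθ a G e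
        set D := fcos n k θ a (insert e G) - fcos n k θ a (G.erase e)
        have h2 : (D + θ * c e) ^ 2 ≤ (θ ^ 2) ^ 2 := by
          rw [← sq_abs]; exact pow_le_pow_left₀ (abs_nonneg _) h 2
        nlinarith [sq_nonneg (D + 2 * (θ * c e))]
    _ = 2 * θ ^ 2 * ∑ e ∈ completeEdges n, c e ^ 2 + Nr n * (2 * θ ^ 4) := by
        rw [Finset.sum_add_distrib, ← Finset.mul_sum, Finset.sum_const, nsmul_eq_mul,
          cast_card_completeEdges]
    _ ≤ 8 * n * θ ^ 2 + 2 * Nr n * θ ^ 4 := by nlinarith [sq_nonneg θ]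

lemma norm_prod_sub_prod_le {ι : Type*} (s : Finset ι) (a b : ι → ℂ) (ha : ∀ i ∈ s, ‖a i‖ ≤ 1)
    (hb : ∀ i ∈ s, ‖b i‖ ≤ 1) : ‖∏ i ∈ s, a i - ∏ i ∈ s, b i‖ ≤ ∑ i ∈ s, ‖a i - b i‖ := by
  classical
  induction s using Finset.induction_on with
  | empty => simp
  | insert j s hj ih =>
    rw [Finset.prod_insert hj, Finset.prod_insert hj, Finset.sum_insert hj]
    have e : a j * ∏ i ∈ s, a i - b j * ∏ i ∈ s, b i =
        (a j - b j) * ∏ i ∈ s, a i + b j * (∏ i ∈ s, a i - ∏ i ∈ s, b i) := by ring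
    rw [e]
    refine (norm_add_le _ _).trans ?_
    rw [norm_mul, norm_mul]
    have h1 : ‖∏ i ∈ s, a i‖ ≤ 1 := by
      rw [norm_prod]
      exact Finset.prod_le_one (fun _ _ => norm_nonneg _) fun i hi => ha i (Finset.mem_insert_of_mem hi)
    have h2 := ih (fun i hi => ha i (Finset.mem_insert_of_mem hi))
      fun i hi => hb i (Finset.mem_insert_of_mem hi)
    refine add_le_add (mul_le_of_le_one_right (norm_nonneg _) h1) ?_
    exact (mul_le_of_le_one_left (norm_nonneg _) (hb j (Finset.mem_insert_self j s))).trans h2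

lemma norm_bern_le {p : ℝ} (hp0 : 0 ≤ p) (hp1 : p ≤ 1) (u : ℝ) :
    ‖(p : ℂ) * Complex.exp ((u : ℝ) * Complex.I) + (1 - p)‖ ≤ 1 := by
  refine (norm_add_le _ _).trans ?_
  rw [norm_mul, Complex.norm_exp_ofReal_mul_I, Complex.norm_of_nonneg hp0,
    show (1 - p : ℂ) = ((1 - p : ℝ) : ℂ) by push_cast; rfl, Complex.norm_of_nonneg (by linarith)]
  linarith

/-- Second-order expansion of the centred Bernoulli characteristic function. -/
lemma bern_taylor {p : ℝ} (hp0 : 0 ≤ p) (hp1 : p ≤ 1) {u : ℝ} (hu : |u| ≤ 1) :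
    ‖((p : ℂ) * Complex.exp ((u : ℝ) * Complex.I) + (1 - p)) *
        Complex.exp ((-(p * u) : ℝ) * Complex.I) -
      (Real.exp (-(p * (1 - p) * u ^ 2 / 2)) : ℝ)‖ ≤ |u| ^ 3 := by
  have hq0 : 0 ≤ 1 - p := by linarith
  have key : ∀ y : ℝ, |y| ≤ |u| →
      ‖Complex.exp ((y : ℝ) * Complex.I) - (1 + y * Complex.I - y ^ 2 / 2)‖ ≤ 2 / 9 * |u| ^ 3 := by
    intro y hy
    have hn : ‖(y : ℂ) * Complex.I‖ = |y| := by simp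
    have h := Complex.exp_bound (x := (y : ℂ) * Complex.I) (by rw [hn]; linarith)
      (show 0 < 3 by norm_num)
    rw [hn] at h
    have e : ∑ m ∈ Finset.range 3, ((y : ℂ) * Complex.I) ^ m / (m.factorial : ℂ) =
        1 + y * Complex.I - y ^ 2 / 2 := by
      simp [Finset.sum_range_succ, mul_pow]; ring
    rw [e] at h
    refine h.trans ?_
    have : |y| ^ 3 ≤ |u| ^ 3 := pow_le_pow_left₀ (abs_nonneg _) hy 3
    norm_num [Nat.factorial] at *
    linarith
  have h1 := key ((1 - p) * u) (by
    rw [abs_mul, abs_of_nonneg hq0]; exact mul_le_of_le_one_left (abs_nonneg _) (by linarith))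
  have h2 := key (-(p * u)) (by
    rw [abs_neg, abs_mul, abs_of_nonneg hp0]; exact mul_le_of_le_one_left (abs_nonneg _) hp1)
  have hu2 : u ^ 2 ≤ 1 := by rw [← sq_abs]; exact pow_le_one₀ (abs_nonneg _) hu
  have hpq : p * (1 - p) ≤ 1 / 4 := by nlinarith [sq_nonneg (p - 1 / 2)]
  have hpq0 : 0 ≤ p * (1 - p) := by positivity
  set y := p * (1 - p) * u ^ 2 / 2 with hy
  have hy0 : 0 ≤ y := by positivity
  have hyu : y ≤ u ^ 2 / 8 := by rw [hy]; nlinarith [sq_nonneg u]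
  have h3 : ‖((1 - y : ℝ) : ℂ) - (Real.exp (-y) : ℝ)‖ ≤ |u| ^ 3 / 64 := by
    rw [← Complex.ofReal_sub, Complex.norm_real, Real.norm_eq_abs, abs_sub_comm]
    have h4 := Real.abs_exp_sub_one_sub_id_le (x := -y) (by rw [abs_neg, abs_of_nonneg hy0]; linarith)
    rw [show Real.exp (-y) - (1 - y) = Real.exp (-y) - 1 - -y by ring]
    refine h4.trans ?_
    have h5 : (-y) ^ 2 ≤ (u ^ 2 / 8) ^ 2 := by rw [neg_sq]; exact pow_le_pow_left₀ hy0 hyu 2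
    have h6 : (u ^ 2) ^ 2 ≤ |u| ^ 3 := by
      rw [← sq_abs u, ← pow_mul]
      exact pow_le_pow_of_le_one (abs_nonneg _) hu (by norm_num)
    nlinarith
  have e : ((p : ℂ) * Complex.exp ((u : ℝ) * Complex.I) + (1 - p)) *
        Complex.exp ((-(p * u) : ℝ) * Complex.I) - (Real.exp (-y) : ℝ) =
      p * (Complex.exp (((1 - p) * u : ℝ) * Complex.I) -
        (1 + ((1 - p) * u : ℝ) * Complex.I - ((1 - p) * u : ℝ) ^ 2 / 2)) +
      (1 - p) * (Complex.exp ((-(p * u) : ℝ) * Complex.I) -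
        (1 + (-(p * u) : ℝ) * Complex.I - (-(p * u) : ℝ) ^ 2 / 2)) +
      (((1 - y : ℝ) : ℂ) - (Real.exp (-y) : ℝ)) := by
    have e1 : Complex.exp ((u : ℝ) * Complex.I) * Complex.exp ((-(p * u) : ℝ) * Complex.I) =
        Complex.exp (((1 - p) * u : ℝ) * Complex.I) := by
      rw [← Complex.exp_add]; congr 1; push_cast; ring
    rw [add_mul, mul_assoc, e1, hy]
    push_cast
    ring
  rw [e]
  refine (norm_add₃_le).trans ?_
  rw [norm_mul, norm_mul, Complex.norm_of_nonneg hp0,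
    show (1 - p : ℂ) = ((1 - p : ℝ) : ℂ) by push_cast; rfl, Complex.norm_of_nonneg hq0]
  have h7 := mul_le_mul_of_nonneg_left h1 hp0
  have h8 := mul_le_mul_of_nonneg_left h2 hq0
  have : 0 ≤ |u| ^ 3 := by positivity
  nlinarith

lemma exp_Ydev (θ : ℝ) (G : Finset (Sym2 (Fin n))) (S : Finset (Fin n)) :
    Complex.exp ((θ * Ydev n k G S : ℝ) * Complex.I) =
      ∏ e ∈ G, Complex.exp ((θ * xdev n k e S : ℝ) * Complex.I) := by
  rw [← Complex.exp_sum, ← Finset.sum_mul]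
  unfold Ydev
  rw [Finset.mul_sum]
  push_cast
  rfl

lemma binExp_psi (p θ : ℝ) :
    binExp p (completeEdges n) (psi n k θ) =
      (∑ S ∈ kSets n k, ∏ e ∈ completeEdges n,
        ((p : ℂ) * Complex.exp ((θ * xdev n k e S : ℝ) * Complex.I) + (1 - p))) /
          (#(kSets n k) : ℝ) := by
  have h : ∀ S, ∏ e ∈ completeEdges n,
        ((p : ℂ) * Complex.exp ((θ * xdev n k e S : ℝ) * Complex.I) + (1 - p)) =
      binExp p (completeEdges n) (fun G => Complex.exp ((θ * Ydev n k G S : ℝ) * Complex.I)) := by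
    intro S
    rw [← binExp_prod]
    simp_rw [exp_Ydev]
  simp_rw [h]
  rw [← binExp_sum]
  unfold binExp psi
  rw [Finset.sum_div]
  exact Finset.sum_congr rfl fun G _ => by rw [Complex.real_smul, Complex.real_smul, mul_div_assoc]

/-- The mean of the characteristic function over independent edges is nearly Gaussian. -/
lemma mean_psi (hN : 0 < Nr n) (hk : k ≤ n) {p : ℝ} (hp0 : 0 ≤ p) (hp1 : p ≤ 1) {θ : ℝ}
    (hθ : |θ| ≤ 1) :
    ‖binExp p (completeEdges n) (psi n k θ) -
      (Real.exp (-(p * (1 - p) * (Kr k * (1 - Kr k / Nr n)) * θ ^ 2 / 2)) : ℝ)‖ ≤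
        Nr n * |θ| ^ 3 := by
  set g : ℂ := ((Real.exp (-(p * (1 - p) * (Kr k * (1 - Kr k / Nr n)) * θ ^ 2 / 2)) : ℝ) : ℂ) with hg
  have hc : (0 : ℝ) < #(kSets n k) := by exact_mod_cast (kSets_nonempty hk).card_pos
  have hc' : ((#(kSets n k) : ℝ) : ℂ) ≠ 0 := by exact_mod_cast hc.ne'
  have hS : ∀ S ∈ kSets n k, ‖∏ e ∈ completeEdges n,
      ((p : ℂ) * Complex.exp ((θ * xdev n k e S : ℝ) * Complex.I) + (1 - p)) - g‖ ≤
        Nr n * |θ| ^ 3 := by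
    intro S hS
    have e1 : ∏ e ∈ completeEdges n, ((p : ℂ) * Complex.exp ((θ * xdev n k e S : ℝ) * Complex.I) +
        (1 - p)) = ∏ e ∈ completeEdges n, (((p : ℂ) * Complex.exp ((θ * xdev n k e S : ℝ) * Complex.I)
          + (1 - p)) * Complex.exp ((-(p * (θ * xdev n k e S)) : ℝ) * Complex.I)) := by
      rw [Finset.prod_mul_distrib, ← Complex.exp_sum, ← Finset.sum_mul, ← Complex.ofReal_sum]
      have : ∑ e ∈ completeEdges n, -(p * (θ * xdev n k e S)) = 0 := by
        rw [Finset.sum_neg_distrib, ← Finset.mul_sum, ← Finset.mul_sum, sum_xdev hN S hS]; simp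
      rw [this]; simp
    have e2 : g = ∏ e ∈ completeEdges n,
        ((Real.exp (-(p * (1 - p) * (θ * xdev n k e S) ^ 2 / 2)) : ℝ) : ℂ) := by
      rw [hg, ← Complex.ofReal_prod, ← Real.exp_sum, ← sum_xdev_sq hN S hS]
      congr 2
      rw [Finset.mul_sum, Finset.sum_mul, Finset.sum_div, ← Finset.sum_neg_distrib]
      exact Finset.sum_congr rfl fun e _ => by ring
    rw [e1, e2]
    have hq0 : 0 ≤ 1 - p := by linarith
    refine (norm_prod_sub_prod_le _ _ _ ?_ ?_).trans ?_
    · intro e _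
      rw [norm_mul, Complex.norm_exp_ofReal_mul_I, mul_one]
      exact norm_bern_le hp0 hp1 _
    · intro e _
      rw [Complex.norm_of_nonneg (Real.exp_pos _).le, Real.exp_le_one_iff]
      have : 0 ≤ p * (1 - p) * (θ * xdev n k e S) ^ 2 / 2 := by positivity
      linarith
    · rw [← cast_card_completeEdges, ← nsmul_eq_mul]
      refine Finset.sum_le_card_nsmul _ _ _ fun e _ => ?_
      have hx := abs_xdev_le hk e S
      have hle : |θ * xdev n k e S| ≤ |θ| := by
        rw [abs_mul]; exact mul_le_of_le_one_right (abs_nonneg _) hx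
      exact (bern_taylor hp0 hp1 (hle.trans hθ)).trans (pow_le_pow_left₀ (abs_nonneg _) hle 3)
  rw [binExp_psi]
  have e3 : ∀ A : ℂ, A / (#(kSets n k) : ℝ) - g =
      (A - (#(kSets n k) : ℝ) * g) / (#(kSets n k) : ℝ) := by
    intro A; field_simp
  rw [e3, norm_div, Complex.norm_of_nonneg hc.le, div_le_iff₀ hc]
  have e4 : ((#(kSets n k) : ℝ) : ℂ) * g = ∑ S ∈ kSets n k, g := by simp
  rw [e4, ← Finset.sum_sub_distrib]
  refine (norm_sum_le _ _).trans ((Finset.sum_le_card_nsmul _ _ _ hS).trans (le_of_eq ?_))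
  rw [nsmul_eq_mul, mul_comm]

end

/-! ### The second moment of the characteristic function at large frequencies -/

lemma norm_bern_le_exp {p : ℝ} (hp0 : 0 ≤ p) (hp1 : p ≤ 1) {x : ℝ} (hx : |x| ≤ Real.pi) :
    ‖(p : ℂ) * Complex.exp ((x : ℝ) * Complex.I) + (1 - p)‖ ≤
      Real.exp (-(2 * p * (1 - p) * x ^ 2 / Real.pi ^ 2)) := by
  have hq : 0 ≤ 1 - p := by linarith
  have h1 : ‖(p : ℂ) * Complex.exp ((x : ℝ) * Complex.I) + (1 - p)‖ ^ 2 =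
      1 - 2 * (p * (1 - p)) * (1 - Real.cos x) := by
    rw [← Complex.normSq_eq_norm_sq, Complex.normSq_apply]
    have hre : ((p : ℂ) * Complex.exp ((x : ℝ) * Complex.I) + (1 - p)).re =
        p * Real.cos x + (1 - p) := by
      simp [Complex.exp_ofReal_mul_I_re, Complex.exp_ofReal_mul_I_im]
    have him : ((p : ℂ) * Complex.exp ((x : ℝ) * Complex.I) + (1 - p)).im = p * Real.sin x := by
      simp [Complex.exp_ofReal_mul_I_re, Complex.exp_ofReal_mul_I_im]
    rw [hre, him]
    linear_combination p ^ 2 * Real.sin_sq_add_cos_sq x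
  refine (sq_le_sq₀ (norm_nonneg _) (Real.exp_pos _).le).1 ?_
  rw [h1, ← Real.exp_nat_mul]
  have h2 := Real.cos_le_one_sub_mul_cos_sq hx
  have h3 : p * (1 - p) * (2 / Real.pi ^ 2 * x ^ 2) ≤ p * (1 - p) * (1 - Real.cos x) :=
    mul_le_mul_of_nonneg_left (by linarith) (mul_nonneg hp0 hq)
  have h4 := Real.add_one_le_exp (((2 : ℕ) : ℝ) * -(2 * p * (1 - p) * x ^ 2 / Real.pi ^ 2))
  have h5 : ((2 : ℕ) : ℝ) * -(2 * p * (1 - p) * x ^ 2 / Real.pi ^ 2) =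
      -(2 * (p * (1 - p) * (2 / Real.pi ^ 2 * x ^ 2))) := by push_cast; ring
  linarith

section
variable {n k : ℕ}

/-- Two `k`-sets that are far apart are distinguished by many edges. -/
lemma sum_sq_xdev_sub_ge {S T : Finset (Fin n)} (hS : S ∈ kSets n k) {D : ℕ}
    (hD : D ≤ #(S \ T)) :
    (D : ℝ) * (k - 1) / 2 ≤ ∑ e ∈ completeEdges n, (xdev n k e S - xdev n k e T) ^ 2 := by
  have hSk := mem_kSets.1 hS
  have h1 : ∀ e, (if e ∈ S.sym2 then (1 : ℝ) else 0) - (if e ∈ (S ∩ T).sym2 then (1 : ℝ) else 0) ≤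
      (xdev n k e S - xdev n k e T) ^ 2 := by
    intro e
    have : e ∈ (S ∩ T).sym2 ↔ e ∈ S.sym2 ∧ e ∈ T.sym2 := by
      simp only [Finset.mem_sym2_iff, Finset.mem_inter]
      exact ⟨fun h => ⟨fun a ha => (h a ha).1, fun a ha => (h a ha).2⟩,
        fun h a ha => ⟨h.1 a ha, h.2 a ha⟩⟩
    unfold xdev
    by_cases h1 : e ∈ S.sym2 <;> by_cases h2 : e ∈ T.sym2 <;> simp [this, h1, h2, sq_nonneg]
  refine le_trans ?_ (Finset.sum_le_sum fun e _ => h1 e)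
  rw [Finset.sum_sub_distrib, Finset.sum_boole, Finset.sum_boole, card_edges_inside,
    card_edges_inside, cast_choose_two_Kr, cast_choose_two_Kr, hSk]
  have hc := Finset.card_sdiff_add_card_inter S T
  have hck : (#(S \ T) : ℝ) + #(S ∩ T) = k := by rw [← hSk]; exact_mod_cast hc
  have hDr : (D : ℝ) ≤ #(S \ T) := by exact_mod_cast hD
  set d : ℝ := (#(S \ T) : ℝ)
  have hi : (#(S ∩ T) : ℝ) = k - d := by linarith
  have hi0 : (0 : ℝ) ≤ k - d := by rw [← hi]; positivity
  unfold Kr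
  rw [hi]
  have hd0 : 0 ≤ d := by positivity
  rcases Nat.eq_zero_or_pos k with h0 | h0
  · have hk0 : (k : ℝ) = 0 := by rw [h0]; simp
    have hd : d = 0 := by linarith
    have hD0 : (D : ℝ) = 0 := le_antisymm (by linarith) (Nat.cast_nonneg D)
    rw [hk0, hd, hD0]; simp
  · have : (1 : ℝ) ≤ k := by exact_mod_cast h0
    nlinarith [mul_nonneg hd0 hi0, mul_nonneg (sub_nonneg.2 hDr) (sub_nonneg.2 this)]

lemma card_small_sets_le (n m : ℕ) :
    #((Finset.univ : Finset (Finset (Fin n))).filter (fun A => #A ≤ m)) ≤ (n + 1) ^ m := by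
  have h1 : (Finset.univ : Finset (Finset (Fin n))).filter (fun A => #A ≤ m) ⊆
      (Finset.range (m + 1)).biUnion (fun i => (Finset.univ : Finset (Fin n)).powersetCard i) := by
    intro A hA
    simp at hA ⊢
    omega
  refine (Finset.card_le_card h1).trans (Finset.card_biUnion_le.trans ?_)
  rw [add_pow]
  refine Finset.sum_le_sum fun i hi => ?_
  rw [Finset.card_powersetCard, Finset.card_univ, Fintype.card_fin, one_pow, mul_one]
  have : 0 < m.choose i := Nat.choose_pos (by simp at hi; omega)
  exact (Nat.choose_le_pow n i).trans (Nat.le_mul_of_pos_right _ this)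

lemma card_near_le {S : Finset (Fin n)} (hS : S ∈ kSets n k) (D : ℕ) :
    #((kSets n k).filter (fun T => #(S \ T) < D)) ≤ (n + 1) ^ (2 * D) := by
  refine le_trans ?_ (card_small_sets_le n (2 * D))
  refine Finset.card_le_card_of_injOn (fun T => symmDiff S T) ?_ ?_
  · intro T hT
    simp only [Finset.coe_filter, Set.mem_ofPred_eq] at hT
    have hTk := mem_kSets.1 hT.1
    have hSk := mem_kSets.1 hS
    have h1 := Finset.card_sdiff_add_card_inter S T
    have h2 := Finset.card_sdiff_add_card_inter T S
    rw [Finset.inter_comm] at h2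
    have h3 : #(symmDiff S T) ≤ #(S \ T) + #(T \ S) := by
      rw [symmDiff_def, Finset.sup_eq_union]; exact Finset.card_union_le _ _
    simp only [Finset.coe_filter, Finset.mem_univ, true_and, Set.mem_ofPred_eq]
    omega
  · intro A _ B _ h
    exact symmDiff_right_injective S h

lemma pow_le_choose_real {r : ℝ} (hr : 1 ≤ r) (n k : ℕ) (h : r * k ≤ n) :
    r ^ k ≤ (n.choose k : ℝ) := by
  induction k generalizing n with
  | zero => simp
  | succ k ih =>
    cases n with
    | zero =>
      push_cast at h
      have : (0 : ℝ) ≤ k := Nat.cast_nonneg k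
      nlinarith
    | succ n =>
      push_cast at h
      have h1 : r ^ k ≤ (n.choose k : ℝ) := ih n (by nlinarith)
      have h2 : ((n + 1 : ℕ) : ℝ) * n.choose k = (n + 1).choose (k + 1) * ((k + 1 : ℕ) : ℝ) := by
        exact_mod_cast Nat.add_one_mul_choose_eq n k
      push_cast at h2
      have hk : (0 : ℝ) < k + 1 := by positivity
      have h3 : r * (k + 1) * r ^ k ≤ (n + 1) * n.choose k :=
        mul_le_mul h h1 (by positivity) (by positivity)
      have : r ^ (k + 1) * (k + 1) ≤ ((n + 1).choose (k + 1) : ℝ) * (k + 1) := by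
        rw [← h2, pow_succ]; linarith
      exact le_of_mul_le_mul_right this hk

/-- The squared modulus of the characteristic function is an average over pairs `S, T`, in which the
pairs at distance at least `D` contribute exponentially little, and the other pairs are few. -/
lemma second_moment (hk : k ≤ n) {p : ℝ} (hp0 : 0 ≤ p) (hp1 : p ≤ 1) {θ : ℝ}
    (hθ : |θ| ≤ Real.pi) (D : ℕ) :
    binExp p (completeEdges n) (fun G => ‖psi n k θ G‖ ^ 2) ≤
      Real.exp (-(p * (1 - p) * θ ^ 2 / Real.pi ^ 2 * (D * (k - 1)))) +
        (n + 1) ^ (2 * D) / (n.choose k : ℝ) := by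
  set C : ℝ := (n.choose k : ℝ) with hCdef
  have hC : 0 < C := by rw [hCdef]; exact_mod_cast Nat.choose_pos hk
  have hCk : (#(kSets n k) : ℝ) = C := by rw [card_kSets]
  set y : Finset (Fin n) → Finset (Fin n) → Sym2 (Fin n) → ℝ :=
    fun S T e => θ * (xdev n k e S - xdev n k e T) with hy
  have hq : 0 ≤ 1 - p := by linarith
  -- Expand the square and average over the edges.
  have hexp : ∀ G, ((‖psi n k θ G‖ ^ 2 : ℝ) : ℂ) =
      ∑ S ∈ kSets n k, ∑ T ∈ kSets n k,
        ((1 / C ^ 2 : ℝ) • ∏ e ∈ G, Complex.exp ((y S T e : ℝ) * Complex.I)) := by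
    intro G
    have h0 : ((‖psi n k θ G‖ ^ 2 : ℝ) : ℂ) = psi n k θ G * (starRingEnd ℂ) (psi n k θ G) := by
      rw [Complex.mul_conj, Complex.normSq_eq_norm_sq]
    rw [h0]
    unfold psi
    rw [map_div₀, map_sum, Complex.conj_ofReal, hCk, div_mul_div_comm, Finset.sum_mul_sum,
      Finset.sum_div]
    refine Finset.sum_congr rfl fun S _ => ?_
    rw [Finset.sum_div]
    refine Finset.sum_congr rfl fun T _ => ?_
    rw [← Complex.exp_conj, map_mul, Complex.conj_ofReal, Complex.conj_I, ← Complex.exp_add,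
      Complex.real_smul, ← Complex.exp_sum, ← Finset.sum_mul, ← Complex.ofReal_sum]
    have : ∑ e ∈ G, y S T e = θ * Ydev n k G S - θ * Ydev n k G T := by
      simp only [hy, Ydev]
      rw [← Finset.mul_sum, Finset.sum_sub_distrib]; ring
    rw [this]
    push_cast
    rw [div_eq_mul_inv, mul_comm]
    congr 1
    · rw [one_div, sq]
    · congr 1; ring
  have hbin : ((binExp p (completeEdges n) (fun G => ‖psi n k θ G‖ ^ 2) : ℝ) : ℂ) =
      ∑ S ∈ kSets n k, ∑ T ∈ kSets n k, ((1 / C ^ 2 : ℝ) • ∏ e ∈ completeEdges n,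
        ((p : ℂ) * Complex.exp ((y S T e : ℝ) * Complex.I) + (1 - p))) := by
    have h1 : ((binExp p (completeEdges n) (fun G => ‖psi n k θ G‖ ^ 2) : ℝ) : ℂ) =
        binExp p (completeEdges n) (fun G => ((‖psi n k θ G‖ ^ 2 : ℝ) : ℂ)) := by
      unfold binExp
      rw [Complex.ofReal_sum]
      exact Finset.sum_congr rfl fun G _ => by rw [Complex.real_smul, smul_eq_mul, Complex.ofReal_mul]
    rw [h1]
    simp_rw [hexp]
    rw [binExp_sum]
    refine Finset.sum_congr rfl fun S _ => ?_
    rw [binExp_sum]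
    refine Finset.sum_congr rfl fun T _ => ?_
    rw [← binExp_prod]
    unfold binExp
    rw [Finset.smul_sum]
    exact Finset.sum_congr rfl fun G _ => smul_comm _ _ _
  set X : ℝ := Real.exp (-(p * (1 - p) * θ ^ 2 / Real.pi ^ 2 * (D * (k - 1)))) with hX
  have hpair : ∀ S ∈ kSets n k, ∀ T ∈ kSets n k, ‖∏ e ∈ completeEdges n,
        ((p : ℂ) * Complex.exp ((y S T e : ℝ) * Complex.I) + (1 - p))‖ ≤
          X + (if #(S \ T) < D then 1 else 0) := by
    intro S hS T hT
    rw [norm_prod]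
    have hx0 : 0 ≤ X := (Real.exp_pos _).le
    split_ifs with hD
    · refine le_trans (Finset.prod_le_one (fun _ _ => norm_nonneg _)
        fun e _ => norm_bern_le hp0 hp1 _) (by linarith)
    · have hle : ∀ e ∈ completeEdges n, ‖(p : ℂ) * Complex.exp ((y S T e : ℝ) * Complex.I) + (1 - p)‖
          ≤ Real.exp (-(2 * p * (1 - p) * (y S T e) ^ 2 / Real.pi ^ 2)) := by
        intro e _
        refine norm_bern_le_exp hp0 hp1 (le_trans ?_ hθ)
        simp only [hy]
        rw [abs_mul]
        refine mul_le_of_le_one_right (abs_nonneg _) ?_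
        unfold xdev
        rw [abs_le]
        split_ifs <;> constructor <;> linarith
      refine (Finset.prod_le_prod (fun _ _ => norm_nonneg _) hle).trans ?_
      rw [← Real.exp_sum, add_zero, hX, Real.exp_le_exp]
      have h2 := sum_sq_xdev_sub_ge hS (not_lt.1 hD)
      have h3 : ∑ e ∈ completeEdges n, -(2 * p * (1 - p) * (y S T e) ^ 2 / Real.pi ^ 2) =
          -(2 * (p * (1 - p) * θ ^ 2 / Real.pi ^ 2) *
            ∑ e ∈ completeEdges n, (xdev n k e S - xdev n k e T) ^ 2) := by
        rw [Finset.mul_sum, ← Finset.sum_neg_distrib]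
        refine Finset.sum_congr rfl fun e _ => ?_
        simp only [hy]; ring
      rw [h3, neg_le_neg_iff]
      have h4 : 0 ≤ p * (1 - p) * θ ^ 2 / Real.pi ^ 2 := by positivity
      nlinarith [mul_le_mul_of_nonneg_left h2 h4]
  have hreal : binExp p (completeEdges n) (fun G => ‖psi n k θ G‖ ^ 2) ≤
      ∑ S ∈ kSets n k, ∑ T ∈ kSets n k, (1 / C ^ 2) * (X + (if #(S \ T) < D then 1 else 0)) := by
    refine (Complex.re_le_norm ((binExp p (completeEdges n)
      (fun G => ‖psi n k θ G‖ ^ 2) : ℝ) : ℂ)).trans ?_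
    rw [hbin]
    refine (norm_sum_le _ _).trans (Finset.sum_le_sum fun S hS => ?_)
    refine (norm_sum_le _ _).trans (Finset.sum_le_sum fun T hT => ?_)
    rw [norm_smul, Real.norm_of_nonneg (by positivity)]
    exact mul_le_mul_of_nonneg_left (hpair S hS T hT) (by positivity)
  refine hreal.trans ?_
  have hrow : ∀ S ∈ kSets n k, ∑ T ∈ kSets n k,
      (1 / C ^ 2) * (X + (if #(S \ T) < D then 1 else 0)) ≤
        (1 / C ^ 2) * (C * X + (n + 1) ^ (2 * D)) := by
    intro S hS
    rw [← Finset.mul_sum, Finset.sum_add_distrib, Finset.sum_const, nsmul_eq_mul, hCk,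
      Finset.sum_boole]
    refine mul_le_mul_of_nonneg_left ?_ (by positivity)
    have := card_near_le hS D
    have : (#((kSets n k).filter (fun T => #(S \ T) < D)) : ℝ) ≤ (n + 1) ^ (2 * D) := by
      exact_mod_cast this
    linarith
  refine (Finset.sum_le_card_nsmul _ _ _ hrow).trans (le_of_eq ?_)
  rw [nsmul_eq_mul, hCk]
  field_simp

end

/-! ### Fourier inversion -/

lemma edgesIn_eq {n : ℕ} (G : Finset (Sym2 (Fin n))) (S : Finset (Fin n)) :
    (edgesIn G S : ℝ) = ∑ e ∈ G, (if e ∈ S.sym2 then (1 : ℝ) else 0) := by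
  rw [Finset.sum_boole]
  unfold edgesIn
  congr 2
  ext e
  simp [Finset.mem_sym2_iff]

lemma Ydev_eq {n k M : ℕ} {G : Finset (Sym2 (Fin n))} (hG : #G = M) (S : Finset (Fin n)) :
    Ydev n k G S = edgesIn G S - muP n M k := by
  unfold Ydev xdev muP
  rw [Finset.sum_sub_distrib, edgesIn_eq, Finset.sum_const, hG, nsmul_eq_mul]
  ring

lemma integral_char (m : ℤ) :
    ∫ θ in (-Real.pi)..Real.pi, Complex.exp ((θ * m : ℝ) * Complex.I) =
      if m = 0 then ((2 * Real.pi : ℝ) : ℂ) else 0 := by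
  split_ifs with h
  · subst h
    simp only [Int.cast_zero, mul_zero, Complex.ofReal_zero, zero_mul, Complex.exp_zero]
    rw [intervalIntegral.integral_const]
    simp; ring
  · have hc : (m : ℂ) * Complex.I ≠ 0 := mul_ne_zero (by exact_mod_cast h) Complex.I_ne_zero
    have h1 : ∀ θ : ℝ, Complex.exp ((θ * m : ℝ) * Complex.I) =
        Complex.exp ((m : ℂ) * Complex.I * θ) := by
      intro θ; congr 1; push_cast; ring
    simp_rw [h1]
    rw [integral_exp_mul_complex hc]
    have h2 : Complex.exp ((m : ℂ) * Complex.I * (Real.pi : ℝ)) =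
        Complex.exp ((m : ℂ) * Complex.I * ((-Real.pi : ℝ) : ℂ)) := by
      rw [Complex.exp_eq_exp_iff_exists_int]
      exact ⟨m, by push_cast; ring⟩
    rw [h2, sub_self, zero_div]

lemma continuous_psi (n k : ℕ) (G : Finset (Sym2 (Fin n))) : Continuous fun θ => psi n k θ G := by
  unfold psi
  fun_prop

lemma integral_psi {n k M : ℕ} {G : Finset (Sym2 (Fin n))} (hG : #G = M) (z : ℤ) :
    ∫ θ in (-Real.pi)..Real.pi,
        psi n k θ G * Complex.exp ((-(θ * (z - muP n M k)) : ℝ) * Complex.I) =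
      ((2 * Real.pi * Pru (kSets n k) (fun S => (edgesIn G S : ℤ) = z) : ℝ) : ℂ) := by
  classical
  have h1 : ∀ θ : ℝ, psi n k θ G * Complex.exp ((-(θ * (z - muP n M k)) : ℝ) * Complex.I) =
      (∑ S ∈ kSets n k, Complex.exp ((θ * ((edgesIn G S : ℤ) - z : ℤ) : ℝ) * Complex.I)) /
        (#(kSets n k) : ℝ) := by
    intro θ
    unfold psi
    rw [div_mul_eq_mul_div, Finset.sum_mul]
    congr 1
    refine Finset.sum_congr rfl fun S _ => ?_
    rw [← Complex.exp_add, Ydev_eq hG]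
    congr 1
    push_cast; ring
  simp_rw [h1]
  rw [intervalIntegral.integral_div, intervalIntegral.integral_finsetSum]
  · simp_rw [integral_char]
    unfold Pru
    rw [Finset.card_filter]
    push_cast
    rw [mul_div_assoc', Finset.mul_sum]
    congr 1
    refine Finset.sum_congr rfl fun S _ => ?_
    by_cases h : (edgesIn G S : ℤ) = z
    · simp [h]
    · have : ¬ ((edgesIn G S : ℤ) - z = 0) := fun h' => h (by omega)
      simp [h, this]
  · intro S _
    apply Continuous.intervalIntegrable
    fun_prop

lemma integral_gauss {v : ℝ} (hv : 0 < v) (m z : ℝ) :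
    ∫ θ : ℝ, ((Real.exp (-(v * θ ^ 2 / 2)) : ℝ) : ℂ) *
        Complex.exp ((-(θ * (z - m)) : ℝ) * Complex.I) =
      ((2 * Real.pi * gaussPdf m v z : ℝ) : ℂ) := by
  have hb : 0 < ((v / 2 : ℝ) : ℂ).re := by rw [Complex.ofReal_re]; positivity
  have h := fourierIntegral_gaussian hb ((-(z - m) : ℝ) : ℂ)
  have h1 : ∀ θ : ℝ, ((Real.exp (-(v * θ ^ 2 / 2)) : ℝ) : ℂ) *
        Complex.exp ((-(θ * (z - m)) : ℝ) * Complex.I) =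
      Complex.exp (Complex.I * ((-(z - m) : ℝ) : ℂ) * θ) *
        Complex.exp (-((v / 2 : ℝ) : ℂ) * (θ : ℂ) ^ 2) := by
    intro θ
    rw [mul_comm, Complex.ofReal_exp]
    congr 2 <;> push_cast <;> ring
  simp_rw [h1]
  rw [h]
  unfold gaussPdf gaussianPDFReal
  have hpos : (0 : ℝ) ≤ Real.pi / (v / 2) := by positivity
  have e1 : ((Real.pi : ℂ) / ((v / 2 : ℝ) : ℂ)) ^ (1 / 2 : ℂ) =
      ((Real.sqrt (Real.pi / (v / 2)) : ℝ) : ℂ) := by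
    rw [Real.sqrt_eq_rpow, Complex.ofReal_cpow hpos]
    push_cast; rfl
  rw [e1]
  have e2 : Complex.exp (-((-(z - m) : ℝ) : ℂ) ^ 2 / (4 * ((v / 2 : ℝ) : ℂ))) =
      ((Real.exp (-(z - m) ^ 2 / (2 * v)) : ℝ) : ℂ) := by
    rw [Complex.ofReal_exp]
    congr 1
    push_cast
    rw [show (4 : ℂ) * ((v : ℂ) / 2) = 2 * v by ring]
    congr 1; ring
  rw [e2, ← Complex.ofReal_mul]
  congr 1
  rw [Real.coe_toNNReal _ hv.le, ← mul_assoc]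
  congr 1
  rw [← div_eq_mul_inv, eq_div_iff (by positivity), ← Real.sqrt_mul hpos]
  rw [show Real.pi / (v / 2) * (2 * Real.pi * v) = (2 * Real.pi) ^ 2 by field_simp]
  exact Real.sqrt_sq (by positivity)

lemma integrable_gauss {v : ℝ} (hv : 0 < v) :
    Integrable fun θ : ℝ => Real.exp (-(v * θ ^ 2 / 2)) := by
  have := integrable_exp_neg_mul_sq (b := v / 2) (by positivity)
  refine this.congr (Filter.Eventually.of_forall fun θ => ?_)
  simp only; congr 1; ring

lemma gauss_tail {v T : ℝ} (hv : 0 < v) (hT : 0 < T) :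
    ∫ θ in (Set.Ioc (-T) T)ᶜ, Real.exp (-(v * θ ^ 2 / 2)) ≤
      Real.exp (-(v * T ^ 2 / 4)) * Real.sqrt (4 * Real.pi / v) := by
  have hi : Integrable fun θ : ℝ => Real.exp (-(v * T ^ 2 / 4)) * Real.exp (-(v / 4) * θ ^ 2) :=
    (integrable_exp_neg_mul_sq (by positivity)).const_mul _
  have h1 : ∫ θ in (Set.Ioc (-T) T)ᶜ, Real.exp (-(v * θ ^ 2 / 2)) ≤
      ∫ θ in (Set.Ioc (-T) T)ᶜ, Real.exp (-(v * T ^ 2 / 4)) * Real.exp (-(v / 4) * θ ^ 2) := by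
    refine setIntegral_mono_on (integrable_gauss hv).integrableOn hi.integrableOn
      measurableSet_Ioc.compl fun θ hθ => ?_
    rw [← Real.exp_add, Real.exp_le_exp]
    have h2 : T ^ 2 ≤ θ ^ 2 := by
      rw [Set.mem_compl_iff, Set.mem_Ioc, not_and_or, not_lt, not_le] at hθ
      rcases hθ with h | h <;> nlinarith
    nlinarith [mul_le_mul_of_nonneg_left h2 hv.le]
  refine h1.trans ((setIntegral_le_integral hi
    (Filter.Eventually.of_forall fun θ => by positivity)).trans (le_of_eq ?_))
  rw [integral_const_mul, integral_gaussian]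
  congr 2
  field_simp

/-- Comparison of a Fourier inversion integral over a period with a Gaussian one: the integrands are
compared for `|θ| ≤ T`, and each is bounded separately elsewhere. -/
lemma fourier_compare {f : ℝ → ℂ} (hf : Continuous f) {v T t : ℝ} (hv : 0 < v) (hT : 0 < T)
    (hTpi : T ≤ Real.pi) :
    ‖(∫ θ in (-Real.pi)..Real.pi, f θ * Complex.exp ((-(θ * t) : ℝ) * Complex.I)) -
      ∫ θ : ℝ, ((Real.exp (-(v * θ ^ 2 / 2)) : ℝ) : ℂ) * Complex.exp ((-(θ * t) : ℝ) * Complex.I)‖ ≤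
    (∫ θ in Set.Ioc (-T) T, ‖f θ - (Real.exp (-(v * θ ^ 2 / 2)) : ℝ)‖) +
      (∫ θ in Set.Ioc (-Real.pi) Real.pi \ Set.Ioc (-T) T, ‖f θ‖) +
      Real.exp (-(v * T ^ 2 / 4)) * Real.sqrt (4 * Real.pi / v) := by
  set A := Set.Ioc (-T) T with hA
  set P := Set.Ioc (-Real.pi) Real.pi with hP
  have hAP : A ⊆ P := Set.Ioc_subset_Ioc (by linarith) hTpi
  have hAm : MeasurableSet A := measurableSet_Ioc
  set e : ℝ → ℂ := fun θ => Complex.exp ((-(θ * t) : ℝ) * Complex.I) with he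
  have hen : ∀ θ, ‖e θ‖ = 1 := fun θ => Complex.norm_exp_ofReal_mul_I _
  have hec : Continuous e := by simp only [he]; fun_prop
  set g : ℝ → ℂ := fun θ => ((Real.exp (-(v * θ ^ 2 / 2)) : ℝ) : ℂ) with hg
  have hgc : Continuous g := by simp only [hg]; fun_prop
  have hgn : ∀ θ, ‖g θ * e θ‖ = Real.exp (-(v * θ ^ 2 / 2)) := by
    intro θ
    rw [norm_mul, hen, mul_one, Complex.norm_of_nonneg (Real.exp_pos _).le]
  have hgi : Integrable fun θ => g θ * e θ := by
    refine (integrable_gauss hv).mono' (hgc.mul hec).aestronglyMeasurable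
      (Filter.Eventually.of_forall fun θ => (hgn θ).le)
  have hfi : IntegrableOn (fun θ => f θ * e θ) P := (hf.mul hec).integrableOn_Ioc
  rw [intervalIntegral.integral_of_le (by linarith [Real.pi_pos])]
  rw [← integral_inter_add_sdiff hAm hfi, Set.inter_eq_self_of_subset_right hAP,
    ← integral_add_compl hAm hgi]
  have e1 : (∫ θ in A, f θ * e θ) + (∫ θ in P \ A, f θ * e θ) -
      ((∫ θ in A, g θ * e θ) + ∫ θ in Aᶜ, g θ * e θ) =
      (∫ θ in A, (f θ - g θ) * e θ) + (∫ θ in P \ A, f θ * e θ) - ∫ θ in Aᶜ, g θ * e θ := by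
    simp_rw [sub_mul]
    rw [integral_sub (hfi.mono_set hAP) hgi.integrableOn]
    ring
  rw [e1]
  refine (norm_sub_le _ _).trans (add_le_add ((norm_add_le _ _).trans (add_le_add ?_ ?_)) ?_)
  · refine (norm_integral_le_integral_norm _).trans (le_of_eq ?_)
    congr 1; ext θ; rw [norm_mul, hen, mul_one]
  · refine (norm_integral_le_integral_norm _).trans (le_of_eq ?_)
    congr 1; ext θ; rw [norm_mul, hen, mul_one]
  · refine (norm_integral_le_integral_norm _).trans ?_
    simp_rw [hgn]
    exact gauss_tail hv hT

/-! ### The variance -/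

section
variable {n k M : ℕ}

lemma var_compare (hn : 2 ≤ n) (hk : k ≤ n) :
    |Kr k * (1 - Kr k / Nr n) - (k : ℝ) ^ 2 / 2 * (1 - (k : ℝ) ^ 2 / (n : ℝ) ^ 2)| ≤ (n : ℝ) := by
  have hn' : (2 : ℝ) ≤ n := by exact_mod_cast hn
  have hk' : (k : ℝ) ≤ n := by exact_mod_cast hk
  have hk0 : (0 : ℝ) ≤ k := Nat.cast_nonneg k
  obtain ⟨h0, h1⟩ := kappa_mem hk
  set κ := Kr k / Nr n with hκ
  have h2 : (k : ℝ) ^ 2 / (n : ℝ) ^ 2 = κ + k * (n - k) / ((n : ℝ) ^ 2 * (n - 1)) := by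
    rw [hκ]; unfold Kr Nr
    have h3 : (n : ℝ) - 1 ≠ 0 := by linarith
    have h4 : (n : ℝ) ≠ 0 := by linarith
    field_simp
    ring
  set d : ℝ := k * (n - k) / ((n : ℝ) ^ 2 * (n - 1)) with hd
  have hd0 : 0 ≤ d := div_nonneg (mul_nonneg hk0 (by linarith)) (mul_nonneg (by positivity) (by linarith))
  have hd1 : d * n ≤ 1 := by
    rw [hd, div_mul_eq_mul_div, div_le_one (mul_pos (by positivity) (by linarith))]
    nlinarith [sq_nonneg ((n : ℝ) - 2 * k), mul_nonneg (sub_nonneg.2 hn') (by linarith : (0:ℝ) ≤ n)]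
  have h5 : Kr k * (1 - κ) - (k : ℝ) ^ 2 / 2 * (1 - (κ + d)) =
      (k : ℝ) ^ 2 / 2 * d - k / 2 * (1 - κ) := by unfold Kr; ring
  rw [h2, h5, abs_le]
  have h6 : (k : ℝ) ^ 2 / 2 * d ≤ n / 2 := by
    have : (k : ℝ) ^ 2 ≤ n * n := by nlinarith
    nlinarith [mul_le_mul_of_nonneg_right this hd0]
  have h7 : k / 2 * (1 - κ) ≤ n / 2 := by nlinarith
  have h8 : 0 ≤ k / 2 * (1 - κ) := mul_nonneg (by positivity) (by linarith)
  have h9 : 0 ≤ (k : ℝ) ^ 2 / 2 * d := by positivity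
  constructor <;> linarith

lemma lamP_eq (hn : 2 ≤ n) :
    lamP n M k * (n : ℝ) ^ 2 = (M / Nr n) * (1 - M / Nr n) *
      ((k : ℝ) ^ 2 / 2 * (1 - (k : ℝ) ^ 2 / (n : ℝ) ^ 2)) := by
  have hn' : (2 : ℝ) ≤ n := by exact_mod_cast hn
  have hN : Nr n ≠ 0 := by unfold Nr; nlinarith
  have h4 : (n : ℝ) ≠ 0 := by linarith
  unfold lamP
  field_simp

lemma abs_exp_neg_sub_le {a b : ℝ} (ha : 0 ≤ a) (hb : 0 ≤ b) :
    |Real.exp (-a) - Real.exp (-b)| ≤ |a - b| := by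
  wlog h : a ≤ b generalizing a b
  · rw [abs_sub_comm, abs_sub_comm a]; exact this hb ha (le_of_not_ge h)
  rw [abs_of_nonneg (sub_nonneg.2 (Real.exp_le_exp.2 (by linarith))), abs_of_nonpos (by linarith)]
  have h1 : Real.exp (-b) = Real.exp (-a) * Real.exp (a - b) := by rw [← Real.exp_add]; congr 1; ring
  have h2 := Real.add_one_le_exp (a - b)
  have h3 : Real.exp (-a) ≤ 1 := Real.exp_le_one_iff.2 (by linarith)
  rw [h1]
  nlinarith [Real.exp_pos (-a)]

lemma var_lower {δ : ℝ} (hδ : 0 < δ) (hn : 2 ≤ n) (h1 : δ ≤ (M : ℝ) / Nr n)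
    (h2 : (M : ℝ) / Nr n ≤ 1 - δ) (h3 : δ ≤ (k : ℝ) / n) (h4 : (k : ℝ) / n ≤ 1 - δ) :
    δ ^ 5 / 2 * (n : ℝ) ^ 2 ≤ lamP n M k * (n : ℝ) ^ 2 := by
  rw [lamP_eq hn]
  have hn' : (2 : ℝ) ≤ n := by exact_mod_cast hn
  set x : ℝ := k / n with hx
  have hk : (k : ℝ) = x * n := by rw [hx]; field_simp
  have e : (k : ℝ) ^ 2 / 2 * (1 - (k : ℝ) ^ 2 / (n : ℝ) ^ 2) = x ^ 2 * (1 - x ^ 2) / 2 * (n : ℝ) ^ 2 := by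
    rw [hk]; field_simp
  rw [e]
  set p : ℝ := M / Nr n
  have a1 : δ * δ ≤ p * (1 - p) := mul_le_mul h1 (by linarith) hδ.le (by linarith)
  have a2 : δ ^ 2 ≤ x ^ 2 := pow_le_pow_left₀ hδ.le h3 2
  have a3 : δ ≤ 1 - x ^ 2 := by nlinarith
  have a4 : δ ^ 2 * δ ≤ x ^ 2 * (1 - x ^ 2) := mul_le_mul a2 a3 hδ.le (by positivity)
  have a5 := mul_le_mul a1 a4 (by positivity) ((by positivity : (0:ℝ) ≤ δ * δ).trans a1)
  have : δ ^ 5 / 2 ≤ p * (1 - p) * (x ^ 2 * (1 - x ^ 2)) / 2 := by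
    have : δ * δ * (δ ^ 2 * δ) = δ ^ 5 := by ring
    linarith
  nlinarith [mul_le_mul_of_nonneg_right this (sq_nonneg (n : ℝ))]

end

/-! ### Integrated control of the characteristic function -/

/-- The deviation of `fcos` from its mean over the binomial random graph. -/
def Dev (n k : ℕ) (p a θ : ℝ) (G : Finset (Sym2 (Fin n))) : ℝ :=
  fcos n k θ a G - binExp p (completeEdges n) (fcos n k θ a)

/-- The symmetrized exponential moment of the deviation, integrated over low frequencies. -/
def Xint (n k : ℕ) (p L T a : ℝ) (G : Finset (Sym2 (Fin n))) : ℝ :=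
  ∫ θ in Set.Ioc (-T) T, (Real.exp (L * Dev n k p a θ G) + Real.exp (-L * Dev n k p a θ G))

/-- The squared modulus of the characteristic function, integrated over high frequencies. -/
def Zint (n k : ℕ) (T : ℝ) (G : Finset (Sym2 (Fin n))) : ℝ :=
  ∫ θ in Set.Ioc (-Real.pi) Real.pi \ Set.Ioc (-T) T, ‖psi n k θ G‖ ^ 2

section
variable {n k M : ℕ} {p T : ℝ}

lemma continuous_fcos (n k : ℕ) (a : ℝ) (G : Finset (Sym2 (Fin n))) :
    Continuous fun θ => fcos n k θ a G := by
  unfold fcos Exu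
  fun_prop

lemma continuous_Dev (n k : ℕ) (p a : ℝ) (G : Finset (Sym2 (Fin n))) :
    Continuous fun θ => Dev n k p a θ G := by
  unfold Dev binExp
  refine (continuous_fcos n k a G).sub (continuous_finsetSum _ fun H _ => ?_)
  have := continuous_fcos n k a H
  fun_prop

lemma integrableOn_low {F : Type*} [NormedAddCommGroup F] {f : ℝ → F} (hf : Continuous f) (T : ℝ) :
    IntegrableOn f (Set.Ioc (-T) T) := hf.integrableOn_Ioc

lemma integrableOn_high {F : Type*} [NormedAddCommGroup F] {f : ℝ → F} (hf : Continuous f) (T : ℝ) :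
    IntegrableOn f (Set.Ioc (-Real.pi) Real.pi \ Set.Ioc (-T) T) :=
  hf.integrableOn_Ioc.mono_set Set.sdiff_subset

lemma binExp_setIntegral_le {ι : Type*} [DecidableEq ι] (p : ℝ) (E : Finset ι) {s : Set ℝ} {c : ℝ}
    (hs : MeasurableSet s) (hs' : volume s ≠ ⊤) (h : ℝ → Finset ι → ℝ)
    (hi : ∀ G, IntegrableOn (fun θ => h θ G) s) (hc : ∀ θ ∈ s, binExp p E (h θ) ≤ c) :
    binExp p E (fun G => ∫ θ in s, h θ G) ≤ c * volume.real s := by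
  have hi' : ∀ G, IntegrableOn (fun θ => (p ^ #G * (1 - p) ^ #(E \ G)) • h θ G) s :=
    fun G => (hi G).const_mul _
  have h1 : binExp p E (fun G => ∫ θ in s, h θ G) = ∫ θ in s, binExp p E (h θ) := by
    unfold binExp
    rw [integral_finsetSum _ fun G _ => hi' G]
    exact Finset.sum_congr rfl fun G _ => (integral_smul _ _).symm
  rw [h1]
  have h2 : ∫ θ in s, binExp p E (h θ) ≤ ∫ θ in s, c := by
    refine setIntegral_mono_on ?_ (integrableOn_const hs') hs hc
    unfold binExp
    exact integrable_finsetSum _ fun G _ => hi' G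
  refine h2.trans (le_of_eq ?_)
  rw [setIntegral_const, smul_eq_mul, mul_comm]

lemma volume_low (hT : 0 < T) : volume.real (Set.Ioc (-T) T) = 2 * T := by
  rw [Real.volume_real_Ioc_of_le (by linarith)]; ring

lemma volume_high_ne (T : ℝ) : volume (Set.Ioc (-Real.pi) Real.pi \ Set.Ioc (-T) T) ≠ ⊤ :=
  ((measure_mono Set.sdiff_subset).trans_lt measure_Ioc_lt_top).ne

lemma volume_high (T : ℝ) : volume.real (Set.Ioc (-Real.pi) Real.pi \ Set.Ioc (-T) T) ≤ 2 * Real.pi := by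
  refine (measureReal_mono Set.sdiff_subset measure_Ioc_lt_top.ne).trans (le_of_eq ?_)
  exact volume_low Real.pi_pos

lemma binExp_Xint_le (hk4 : 4 ≤ k) (hk : k ≤ n) (hp0 : 0 ≤ p) (hp1 : p ≤ 1) (hT : 0 < T)
    (hT1 : T ≤ 1) {L : ℝ} (hL : L ^ 2 * (8 * n * T ^ 2 + 2 * Nr n * T ^ 4) ≤ 1) (a : ℝ) :
    binExp p (completeEdges n) (Xint n k p L T a) ≤ (2 * Real.exp 5) * (2 * T) := by
  rw [← volume_low hT]
  refine binExp_setIntegral_le p _ measurableSet_Ioc measure_Ioc_lt_top.ne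
    (fun θ G => Real.exp (L * Dev n k p a θ G) + Real.exp (-L * Dev n k p a θ G)) ?_ ?_
  · intro G
    refine integrableOn_low ?_ T
    have := continuous_Dev n k p a G
    fun_prop
  · intro θ hθ
    have hθT : |θ| ≤ T := abs_le.2 ⟨hθ.1.le, hθ.2⟩
    rw [binExp_add]
    have hV : ∀ G, G ⊆ completeEdges n → ∑ e ∈ completeEdges n,
        (fcos n k θ a (insert e G) - fcos n k θ a (G.erase e)) ^ 2 ≤
          8 * n * T ^ 2 + 2 * Nr n * T ^ 4 := by
      intro G _
      refine (gradient_le hk4 hk (hθT.trans hT1) a G).trans ?_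
      have h1 : θ ^ 2 ≤ T ^ 2 := by rw [← sq_abs θ]; exact pow_le_pow_left₀ (abs_nonneg _) hθT 2
      have h2 : θ ^ 4 ≤ T ^ 4 := by
        have : θ ^ 4 = |θ| ^ 4 := (Even.pow_abs (by decide) θ).symm
        rw [this]; exact pow_le_pow_left₀ (abs_nonneg _) hθT 4
      have h3 : 0 ≤ Nr n := Kr_nonneg n
      gcongr
    have h1 := mgf_bound hp0 hp1 (completeEdges n) (fcos n k θ a) (abs_fcos_le hk θ a) hV hL
    have h2 := mgf_bound hp0 hp1 (completeEdges n) (fcos n k θ a) (t := -L)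
      (abs_fcos_le hk θ a) hV (by rw [neg_sq]; exact hL)
    have h3 := add_le_add h1 h2
    unfold Dev
    linarith

lemma binExp_Zint_le (hk1 : 1 ≤ k) (hk : k ≤ n) (hp0 : 0 ≤ p) (hp1 : p ≤ 1) (hT : 0 < T) (D : ℕ) :
    binExp p (completeEdges n) (Zint n k T) ≤
      (Real.exp (-(p * (1 - p) * T ^ 2 / Real.pi ^ 2 * (D * (k - 1)))) +
        (n + 1) ^ (2 * D) / (n.choose k : ℝ)) * (2 * Real.pi) := by
  refine le_trans ?_ (mul_le_mul_of_nonneg_left (volume_high T) (by positivity))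
  refine binExp_setIntegral_le p _ (measurableSet_Ioc.diff measurableSet_Ioc) (volume_high_ne T)
    (fun θ G => ‖psi n k θ G‖ ^ 2) ?_ ?_
  · intro G
    exact integrableOn_high ((continuous_psi n k G).norm.pow 2) T
  · intro θ hθ
    have hpi : |θ| ≤ Real.pi := abs_le.2 ⟨hθ.1.1.le, hθ.1.2⟩
    refine (second_moment hk hp0 hp1 hpi D).trans ?_
    have h1 : T ^ 2 ≤ θ ^ 2 := by
      have := hθ.2
      rw [Set.mem_Ioc, not_and_or, not_lt, not_le] at this
      rcases this with h | h <;> nlinarith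
    have hk' : (0 : ℝ) ≤ k - 1 := by
      have : (1 : ℝ) ≤ k := by exact_mod_cast hk1
      linarith
    have hq : 0 ≤ 1 - p := by linarith
    gcongr

/-- Pointwise `L|Δ| ≤ s + exp (L|Δ| - s)`; hence an exponential-moment bound controls the mean of
`|Δ|`. -/
lemma integral_abs_Dev_le (hT : 0 < T) {L s a : ℝ} {G : Finset (Sym2 (Fin n))}
    (hX : Xint n k p L T a G ≤ 2 * T * Real.exp s) :
    L * ∫ θ in Set.Ioc (-T) T, |Dev n k p a θ G| ≤ 2 * T * (s + 1) := by
  have hc := continuous_Dev n k p a G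
  have hi : IntegrableOn (fun θ => Real.exp (L * Dev n k p a θ G) +
      Real.exp (-L * Dev n k p a θ G)) (Set.Ioc (-T) T) := integrableOn_low (by fun_prop) T
  have his : IntegrableOn (fun _ : ℝ => s) (Set.Ioc (-T) T) :=
    integrableOn_const measure_Ioc_lt_top.ne
  have hi2 : IntegrableOn (fun θ => Real.exp (-s) * (Real.exp (L * Dev n k p a θ G) +
      Real.exp (-L * Dev n k p a θ G))) (Set.Ioc (-T) T) := hi.const_mul _
  rw [← integral_const_mul]
  have h1 : ∫ θ in Set.Ioc (-T) T, L * |Dev n k p a θ G| ≤ ∫ θ in Set.Ioc (-T) T,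
      (s + Real.exp (-s) * (Real.exp (L * Dev n k p a θ G) + Real.exp (-L * Dev n k p a θ G))) := by
    refine setIntegral_mono_on (integrableOn_low (by fun_prop) T)
      (his.add hi2) measurableSet_Ioc
      fun θ _ => ?_
    have h2 := Real.add_one_le_exp (L * |Dev n k p a θ G| - s)
    have h3 : Real.exp (L * |Dev n k p a θ G| - s) = Real.exp (-s) * Real.exp (L * |Dev n k p a θ G|) := by
      rw [← Real.exp_add]; congr 1; ring
    have h4 : Real.exp (L * |Dev n k p a θ G|) ≤
        Real.exp (L * Dev n k p a θ G) + Real.exp (-L * Dev n k p a θ G) := by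
      rcases abs_choice (Dev n k p a θ G) with h | h <;> rw [h]
      · linarith [Real.exp_pos (-L * Dev n k p a θ G)]
      · rw [mul_neg, ← neg_mul]; linarith [Real.exp_pos (L * Dev n k p a θ G)]
    have h5 := mul_le_mul_of_nonneg_left h4 (Real.exp_pos (-s)).le
    linarith
  refine h1.trans ?_
  rw [integral_add his hi2, setIntegral_const,
    integral_const_mul, volume_low hT, smul_eq_mul]
  have h6 := mul_le_mul_of_nonneg_left hX (Real.exp_pos (-s)).le
  have h7 : Real.exp (-s) * (2 * T * Real.exp s) = 2 * T := by
    rw [mul_comm, mul_assoc, ← Real.exp_add]; simp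
  unfold Xint at h6
  linarith

lemma binExp_re_im (G : Finset (Sym2 (Fin n))) (θ : ℝ) :
    ‖psi n k θ G - binExp p (completeEdges n) (psi n k θ)‖ ≤
      |Dev n k p 0 θ G| + |Dev n k p (-(Real.pi / 2)) θ G| := by
  refine (Complex.norm_le_abs_re_add_abs_im _).trans (le_of_eq ?_)
  rw [Complex.sub_re, Complex.sub_im, psi_re, psi_im]
  unfold Dev
  have h1 : (binExp p (completeEdges n) (psi n k θ)).re =
      binExp p (completeEdges n) (fcos n k θ 0) := by
    unfold binExp
    rw [Complex.re_sum]
    exact Finset.sum_congr rfl fun H _ => by rw [Complex.smul_re, psi_re]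
  have h2 : (binExp p (completeEdges n) (psi n k θ)).im =
      binExp p (completeEdges n) (fcos n k θ (-(Real.pi / 2))) := by
    unfold binExp
    rw [Complex.im_sum]
    exact Finset.sum_congr rfl fun H _ => by rw [Complex.smul_im, psi_im]
  rw [h1, h2]

/-- On a graph for which the three integrals are under control, the local limit estimate holds. -/
lemma good_graph (hn : 2 ≤ n) (hk : k ≤ n) (hp : p = M / Nr n) (hp0 : 0 ≤ p) (hp1 : p ≤ 1)
    (hT : 0 < T) (hT1 : T ≤ 1) {L s : ℝ} (hL : 0 < L) {G : Finset (Sym2 (Fin n))} (hG : #G = M)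
    (hX0 : Xint n k p L T 0 G ≤ 2 * T * Real.exp s)
    (hX1 : Xint n k p L T (-(Real.pi / 2)) G ≤ 2 * T * Real.exp s)
    (hZ : Zint n k T G ≤ 1 / (n : ℝ) ^ 4) (hv : 0 < lamP n M k * (n : ℝ) ^ 2) (z : ℤ) :
    2 * Real.pi * |Pru (kSets n k) (fun S => (edgesIn G S : ℤ) = z) -
        gaussPdf (muP n M k) (lamP n M k * (n:ℝ) ^ 2) (z : ℝ)| ≤
      2 * (2 * T * (s + 1) / L) + 2 * T * (Nr n * T ^ 3 + n * T ^ 2 / 2) + 4 / (n : ℝ) ^ 2 +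
        Real.exp (-(lamP n M k * (n : ℝ) ^ 2 * T ^ 2 / 4)) *
          Real.sqrt (4 * Real.pi / (lamP n M k * (n : ℝ) ^ 2)) := by
  have hn' : (2 : ℝ) ≤ n := by exact_mod_cast hn
  have hN : 0 < Nr n := by unfold Nr; nlinarith
  have hq : 0 ≤ 1 - p := by linarith
  have hpq1 : p * (1 - p) ≤ 1 := by nlinarith
  have hpq0 : 0 ≤ p * (1 - p) := mul_nonneg hp0 hq
  have hvar := var_compare hn hk
  have hlam := lamP_eq (M := M) (k := k) hn
  rw [← hp] at hlam
  set v : ℝ := lamP n M k * (n : ℝ) ^ 2 with hvdef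
  have hmain := fourier_compare (continuous_psi n k G) (t := z - muP n M k) hv hT
    (hT1.trans (by linarith [Real.pi_gt_three]))
  rw [integral_psi hG z, integral_gauss hv, ← Complex.ofReal_sub, Complex.norm_real, ← mul_sub,
    Real.norm_eq_abs, abs_mul, abs_of_pos (by positivity : (0 : ℝ) < 2 * Real.pi)] at hmain
  refine hmain.trans ?_
  have hlow : ∫ θ in Set.Ioc (-T) T, ‖psi n k θ G - (Real.exp (-(v * θ ^ 2 / 2)) : ℝ)‖ ≤
      2 * (2 * T * (s + 1) / L) + 2 * T * (Nr n * T ^ 3 + n * T ^ 2 / 2) := by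
    have hc0 := continuous_Dev n k p 0 G
    have hc1 := continuous_Dev n k p (-(Real.pi / 2)) G
    have hb : ∀ θ ∈ Set.Ioc (-T) T, ‖psi n k θ G - (Real.exp (-(v * θ ^ 2 / 2)) : ℝ)‖ ≤
        |Dev n k p 0 θ G| + |Dev n k p (-(Real.pi / 2)) θ G| +
          (Nr n * T ^ 3 + n * T ^ 2 / 2) := by
      intro θ hθ
      have hθT : |θ| ≤ T := abs_le.2 ⟨hθ.1.le, hθ.2⟩
      have hθ2 : θ ^ 2 ≤ T ^ 2 := by rw [← sq_abs θ]; exact pow_le_pow_left₀ (abs_nonneg _) hθT 2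
      have h1 := binExp_re_im (k := k) (p := p) G θ
      have h2 := mean_psi hN hk hp0 hp1 (hθT.trans hT1)
      have h3 : ‖((Real.exp (-(p * (1 - p) * (Kr k * (1 - Kr k / Nr n)) * θ ^ 2 / 2)) : ℝ) : ℂ) -
          (Real.exp (-(v * θ ^ 2 / 2)) : ℝ)‖ ≤ n * T ^ 2 / 2 := by
        rw [← Complex.ofReal_sub, Complex.norm_real, Real.norm_eq_abs]
        obtain ⟨hκ0, hκ1⟩ := kappa_mem hk
        refine (abs_exp_neg_sub_le ?_ (by positivity)).trans ?_
        · have := mul_nonneg (mul_nonneg hpq0 (mul_nonneg (Kr_nonneg k) (sub_nonneg.2 hκ1)))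
            (sq_nonneg θ)
          linarith
        · have e : p * (1 - p) * (Kr k * (1 - Kr k / Nr n)) * θ ^ 2 / 2 - v * θ ^ 2 / 2 =
              p * (1 - p) * (Kr k * (1 - Kr k / Nr n) -
                (k : ℝ) ^ 2 / 2 * (1 - (k : ℝ) ^ 2 / (n : ℝ) ^ 2)) * (θ ^ 2 / 2) := by
            rw [hlam]; ring
          rw [e, abs_mul, abs_mul, abs_of_nonneg hpq0, abs_of_nonneg (by positivity : 0 ≤ θ ^ 2 / 2)]
          have h5 := mul_le_mul hpq1 hvar (abs_nonneg _) zero_le_one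
          have h6 := mul_le_mul h5 (by linarith : θ ^ 2 / 2 ≤ T ^ 2 / 2) (by positivity)
            (by positivity)
          linarith
      have h4 : Nr n * |θ| ^ 3 ≤ Nr n * T ^ 3 := by gcongr
      have h7 := norm_sub_le_norm_sub_add_norm_sub (psi n k θ G)
        (binExp p (completeEdges n) (psi n k θ)) ((Real.exp (-(v * θ ^ 2 / 2)) : ℝ) : ℂ)
      have h8 := norm_sub_le_norm_sub_add_norm_sub (binExp p (completeEdges n) (psi n k θ))
        ((Real.exp (-(p * (1 - p) * (Kr k * (1 - Kr k / Nr n)) * θ ^ 2 / 2)) : ℝ) : ℂ)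
        ((Real.exp (-(v * θ ^ 2 / 2)) : ℝ) : ℂ)
      linarith
    have hi0 : IntegrableOn (fun θ => |Dev n k p 0 θ G|) (Set.Ioc (-T) T) :=
      integrableOn_low (by fun_prop) T
    have hi1 : IntegrableOn (fun θ => |Dev n k p (-(Real.pi / 2)) θ G|) (Set.Ioc (-T) T) :=
      integrableOn_low (by fun_prop) T
    have hi01 : IntegrableOn (fun θ => |Dev n k p 0 θ G| + |Dev n k p (-(Real.pi / 2)) θ G|)
      (Set.Ioc (-T) T) := hi0.add hi1
    have hic : IntegrableOn (fun _ : ℝ => Nr n * T ^ 3 + n * T ^ 2 / 2) (Set.Ioc (-T) T) :=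
      integrableOn_const measure_Ioc_lt_top.ne
    refine (setIntegral_mono_on ?_ (hi01.add hic) measurableSet_Ioc hb).trans ?_
    · refine integrableOn_low ?_ T
      have := continuous_psi n k G
      fun_prop
    · simp only [Pi.add_apply]
      rw [integral_add hi01 hic, integral_add hi0 hi1, setIntegral_const, volume_low hT,
        smul_eq_mul]
      have h0 := integral_abs_Dev_le hT hX0
      have h1 := integral_abs_Dev_le hT hX1
      rw [mul_comm, ← le_div_iff₀ hL] at h0 h1
      linarith
  have hhigh : ∫ θ in Set.Ioc (-Real.pi) Real.pi \ Set.Ioc (-T) T, ‖psi n k θ G‖ ≤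
      4 / (n : ℝ) ^ 2 := by
    have hc := continuous_psi n k G
    have hn0 : (0 : ℝ) < (n : ℝ) ^ 2 := by positivity
    have hi2 : IntegrableOn (fun θ => ‖psi n k θ G‖ ^ 2)
      (Set.Ioc (-Real.pi) Real.pi \ Set.Ioc (-T) T) := integrableOn_high (by fun_prop) T
    have hic : IntegrableOn (fun _ : ℝ => 1 / (2 * (n : ℝ) ^ 2))
      (Set.Ioc (-Real.pi) Real.pi \ Set.Ioc (-T) T) := integrableOn_const (volume_high_ne T)
    have hi3 : IntegrableOn (fun θ => (n : ℝ) ^ 2 / 2 * ‖psi n k θ G‖ ^ 2)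
      (Set.Ioc (-Real.pi) Real.pi \ Set.Ioc (-T) T) := hi2.const_mul _
    have hb : ∀ θ ∈ Set.Ioc (-Real.pi) Real.pi \ Set.Ioc (-T) T, ‖psi n k θ G‖ ≤
        1 / (2 * (n : ℝ) ^ 2) + (n : ℝ) ^ 2 / 2 * ‖psi n k θ G‖ ^ 2 := by
      intro θ _
      have h1 := sq_nonneg ((n : ℝ) ^ 2 * ‖psi n k θ G‖ - 1)
      rw [← sub_nonneg]
      have e : 1 / (2 * (n : ℝ) ^ 2) + (n : ℝ) ^ 2 / 2 * ‖psi n k θ G‖ ^ 2 - ‖psi n k θ G‖ =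
          ((n : ℝ) ^ 2 * ‖psi n k θ G‖ - 1) ^ 2 / (2 * (n : ℝ) ^ 2) := by
        field_simp; ring
      rw [e]; positivity
    refine (setIntegral_mono_on (integrableOn_high (by fun_prop) T) (hic.add hi3)
      (measurableSet_Ioc.diff measurableSet_Ioc) hb).trans ?_
    simp only [Pi.add_apply]
    rw [integral_add hic hi3, setIntegral_const, integral_const_mul, smul_eq_mul]
    have h1 := mul_le_mul_of_nonneg_right (volume_high T)
      (by positivity : 0 ≤ 1 / (2 * (n : ℝ) ^ 2))
    have h2 := mul_le_mul_of_nonneg_left hZ (by positivity : 0 ≤ (n : ℝ) ^ 2 / 2)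
    unfold Zint at h2
    have e1 : (n : ℝ) ^ 2 / 2 * (1 / (n : ℝ) ^ 4) = 1 / (2 * (n : ℝ) ^ 2) := by field_simp
    have e2 : 4 / (n : ℝ) ^ 2 = 8 * (1 / (2 * (n : ℝ) ^ 2)) := by field_simp; norm_num
    rw [e1] at h2
    rw [e2]
    have h3 : (0 : ℝ) < 1 / (2 * (n : ℝ) ^ 2) := by positivity
    have h4 := Real.pi_lt_d2
    nlinarith
  linarith

lemma graphsM_eq (n M : ℕ) : graphsM n M = (completeEdges n).powersetCard M := by
  ext G; simp [graphsM, Finset.mem_powersetCard]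

/-- The local limit estimate with explicit error terms and explicit failure probability; the
frequency cutoff `T`, the exponential-moment parameters `L, s` and the distance `D` are free. -/
lemma quantitative (hn : 2 ≤ n) (hk4 : 4 ≤ k) (hk : k ≤ n) (hM0 : 0 < M) (hMN : (M : ℝ) < Nr n)
    (hT : 0 < T) (hT1 : T ≤ 1) {L s : ℝ} (hL : 0 < L)
    (hLV : L ^ 2 * (8 * n * T ^ 2 + 2 * Nr n * T ^ 4) ≤ 1) (D : ℕ)
    (hv : 0 < lamP n M k * (n : ℝ) ^ 2) {B : ℝ}
    (hB : n * (2 * (2 * T * (s + 1) / L) + 2 * T * (Nr n * T ^ 3 + n * T ^ 2 / 2) + 4 / (n : ℝ) ^ 2 +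
        Real.exp (-(lamP n M k * (n : ℝ) ^ 2 * T ^ 2 / 4)) *
          Real.sqrt (4 * Real.pi / (lamP n M k * (n : ℝ) ^ 2))) ≤ 2 * Real.pi * B) :
    1 - (Nr n + 1) * (4 * Real.exp 5 * Real.exp (-s) + (n : ℝ) ^ 4 *
      ((Real.exp (-((M : ℝ) / Nr n * (1 - M / Nr n) * T ^ 2 / Real.pi ^ 2 * (D * (k - 1)))) +
        (n + 1) ^ (2 * D) / (n.choose k : ℝ)) * (2 * Real.pi))) ≤
      PrGnM n M (fun G => ∀ z : ℤ,
          (n : ℝ) * |Pru (kSets n k) (fun S => (edgesIn G S : ℤ) = z) -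
            gaussPdf (muP n M k) (lamP n M k * (n:ℝ) ^ 2) (z : ℝ)| ≤ B) := by
  classical
  have hn' : (2 : ℝ) ≤ n := by exact_mod_cast hn
  have hN : 0 < Nr n := by unfold Nr; nlinarith
  obtain ⟨p, hp⟩ : ∃ p : ℝ, p = M / Nr n := ⟨_, rfl⟩
  have hp0 : 0 ≤ p := by rw [hp]; positivity
  have hp1 : p ≤ 1 := by rw [hp, div_le_one hN]; exact hMN.le
  rw [← hp]
  set good : Finset (Sym2 (Fin n)) → Prop := fun G => ∀ z : ℤ,
          (n : ℝ) * |Pru (kSets n k) (fun S => (edgesIn G S : ℤ) = z) -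
            gaussPdf (muP n M k) (lamP n M k * (n:ℝ) ^ 2) (z : ℝ)| ≤ B with hgood
  have hMc : M < #(completeEdges n) := by
    have : (M : ℝ) < #(completeEdges n) := by rw [cast_card_completeEdges]; exact hMN
    exact_mod_cast this
  have hcard : (0 : ℝ) < #(graphsM n M) := by
    rw [graphsM_eq, Finset.card_powersetCard]; exact_mod_cast Nat.choose_pos hMc.le
  have hPr : PrGnM n M good = 1 - #((graphsM n M).filter fun G => ¬ good G) / (#(graphsM n M) : ℝ) := by
    unfold PrGnM Pru
    have := Finset.card_filter_add_card_filter_not (s := graphsM n M) good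
    have h2 : (#((graphsM n M).filter good) : ℝ) + #((graphsM n M).filter fun G => ¬ good G) =
      #(graphsM n M) := by exact_mod_cast this
    rw [eq_sub_iff_add_eq, ← add_div, div_eq_one_iff_eq hcard.ne', ← h2]
  rw [hPr]
  set c : ℝ := 1 / (2 * T * Real.exp s) with hc
  have hc0 : 0 < c := by positivity
  set F : Finset (Sym2 (Fin n)) → ℝ := fun G => (c * Xint n k p L T 0 G +
    c * Xint n k p L T (-(Real.pi / 2)) G) + (n : ℝ) ^ 4 * Zint n k T G with hF
  have hXnn : ∀ a G, 0 ≤ Xint n k p L T a G := fun a G =>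
    integral_nonneg fun θ => by positivity
  have hZnn : ∀ G, 0 ≤ Zint n k T G := fun G => integral_nonneg fun θ => by positivity
  have hbad : ∀ G ∈ (graphsM n M).filter (fun G => ¬ good G), 1 ≤ F G := by
    intro G hG
    obtain ⟨hG1, hG2⟩ := Finset.mem_filter.1 hG
    rw [graphsM_eq, Finset.mem_powersetCard] at hG1
    by_contra hlt
    rw [not_le] at hlt
    refine hG2 fun z => ?_
    have t0 := mul_nonneg hc0.le (hXnn 0 G)
    have t1 := mul_nonneg hc0.le (hXnn (-(Real.pi / 2)) G)
    have t2 := mul_nonneg (by positivity : (0 : ℝ) ≤ (n : ℝ) ^ 4) (hZnn G)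
    have hX : ∀ a, c * Xint n k p L T a G ≤ 1 → Xint n k p L T a G ≤ 2 * T * Real.exp s := by
      intro a h
      rw [hc, one_div_mul_eq_div, div_le_one (by positivity)] at h
      exact h
    have hZ : Zint n k T G ≤ 1 / (n : ℝ) ^ 4 := by
      rw [le_div_iff₀ (by positivity), mul_comm]
      simp only [hF] at hlt
      linarith
    have := good_graph hn hk hp hp0 hp1 hT hT1 hL hG1.2
      (hX 0 (by simp only [hF] at hlt; linarith)) (hX _ (by simp only [hF] at hlt; linarith)) hZ hv z
    have h3 := (mul_le_mul_of_nonneg_left this (by positivity : (0 : ℝ) ≤ n)).trans hB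
    have hpi := Real.pi_pos
    have h4 : 2 * Real.pi * (n * |Pru (kSets n k) (fun S => (edgesIn G S : ℤ) = z) -
            gaussPdf (muP n M k) (lamP n M k * (n:ℝ) ^ 2) (z : ℝ)|) ≤ 2 * Real.pi * B := by linarith
    exact le_of_mul_le_mul_left h4 (by positivity)
  have hmarkov := card_le_binExp (completeEdges n) hM0 hMc
    (p := p) (by rw [hp, cast_card_completeEdges]) F
    (fun G _ => add_nonneg (add_nonneg (mul_nonneg hc0.le (hXnn _ G)) (mul_nonneg hc0.le (hXnn _ G)))
      (mul_nonneg (by positivity) (hZnn G)))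
    ((graphsM n M).filter fun G => ¬ good G) (by rw [← graphsM_eq]; exact Finset.filter_subset _ _)
    hbad
  rw [← graphsM_eq, cast_card_completeEdges] at hmarkov
  have hEF : binExp p (completeEdges n) F ≤ 4 * Real.exp 5 * Real.exp (-s) + (n : ℝ) ^ 4 *
      ((Real.exp (-(p * (1 - p) * T ^ 2 / Real.pi ^ 2 * (D * (k - 1)))) +
        (n + 1) ^ (2 * D) / (n.choose k : ℝ)) * (2 * Real.pi)) := by
    simp only [hF]
    rw [binExp_add, binExp_add, binExp_const_mul, binExp_const_mul, binExp_const_mul]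
    have h0 := mul_le_mul_of_nonneg_left (binExp_Xint_le hk4 hk hp0 hp1 hT hT1 hLV 0) hc0.le
    have h1 := mul_le_mul_of_nonneg_left
      (binExp_Xint_le hk4 hk hp0 hp1 hT hT1 hLV (-(Real.pi / 2))) hc0.le
    have h2 := mul_le_mul_of_nonneg_left (binExp_Zint_le (by omega) hk hp0 hp1 hT D)
      (by positivity : (0 : ℝ) ≤ (n : ℝ) ^ 4)
    have e : c * (2 * Real.exp 5 * (2 * T)) = 2 * Real.exp 5 * Real.exp (-s) := by
      rw [hc, Real.exp_neg]; field_simp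
    rw [e] at h0 h1
    linarith
  have := mul_le_mul_of_nonneg_left hEF (by linarith : (0 : ℝ) ≤ Nr n + 1)
  linarith

end

/-! ### Choice of parameters -/

lemma eventually_small (C : ℝ) (m : ℕ) {c : ℝ} (hc : 0 < c) :
    ∀ᶠ y : ℝ in Filter.atTop, C * y ^ m * Real.exp (-(c * y ^ 2)) ≤ Real.exp (-y) / 3 := by
  have h1 := (Real.tendsto_pow_mul_exp_neg_atTop_nhds_zero m).const_mul (3 * |C|)
  rw [mul_zero] at h1
  filter_upwards [h1.eventually (ge_mem_nhds one_pos), Filter.eventually_ge_atTop (2 / c),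
    Filter.eventually_ge_atTop 0] with y hy hyc hy0
  have h2 : 2 * y ≤ c * y ^ 2 := by
    have : 2 ≤ c * y := by rw [div_le_iff₀ hc] at hyc; linarith
    nlinarith
  have h3 : Real.exp (-(c * y ^ 2)) ≤ Real.exp (-y) * Real.exp (-y) := by
    rw [← Real.exp_add, Real.exp_le_exp]; linarith
  have h4 : C * y ^ m * Real.exp (-(c * y ^ 2)) ≤ |C| * y ^ m * (Real.exp (-y) * Real.exp (-y)) := by
    have := le_abs_self C
    gcongr
  have h5 := mul_le_mul_of_nonneg_right hy (Real.exp_pos (-y)).le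
  linarith

lemma choose_lower {δ : ℝ} (hδ : 0 < δ) {n k : ℕ} (hn : 0 < n) (h3 : δ ≤ (k : ℝ) / n)
    (h4 : (k : ℝ) / n ≤ 1 - δ) : Real.exp (δ ^ 2 * n) ≤ (n.choose k : ℝ) := by
  have hn' : (0 : ℝ) < n := by exact_mod_cast hn
  rw [le_div_iff₀ hn'] at h3
  rw [div_le_iff₀ hn'] at h4
  have h1 : Real.exp δ * k ≤ n := by
    have h5 := Real.add_one_le_exp (-δ)
    have h6 : (k : ℝ) ≤ Real.exp (-δ) * n :=
      h4.trans (mul_le_mul_of_nonneg_right (by linarith) hn'.le)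
    calc Real.exp δ * k ≤ Real.exp δ * (Real.exp (-δ) * n) := by gcongr
      _ = n := by rw [← mul_assoc, ← Real.exp_add]; simp
  refine le_trans ?_ (pow_le_choose_real (Real.one_le_exp hδ.le) n k h1)
  rw [← Real.exp_nat_mul, Real.exp_le_exp]
  nlinarith

lemma gauss_tail_small {δ v x y : ℝ} (hδ : 0 < δ) (hx : x = y ^ 20) (hy1 : 1 ≤ y)
    (hs4 : Real.sqrt (8 * Real.pi / δ ^ 5) * y ^ 4 * Real.exp (-(δ ^ 5 / 8 * y ^ 2)) ≤
      Real.exp (-y) / 3) (hvl : δ ^ 5 / 2 * x ^ 2 ≤ v) :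
    x * (Real.exp (-(v * (1 / y ^ 18) ^ 2 / 4)) * Real.sqrt (4 * Real.pi / v)) ≤ 1 / y ^ 4 := by
  have hy0 : 0 < y := by linarith
  have hx0 : 0 < x := by rw [hx]; positivity
  have h5 : Real.exp (-(v * (1 / y ^ 18) ^ 2 / 4)) ≤ Real.exp (-(δ ^ 5 / 8 * y ^ 2)) := by
    rw [Real.exp_le_exp, neg_le_neg_iff]
    have h6 := mul_le_mul_of_nonneg_right hvl (by positivity : 0 ≤ (1 / y ^ 18) ^ 2 / 4)
    have e : δ ^ 5 / 2 * x ^ 2 * ((1 / y ^ 18) ^ 2 / 4) = δ ^ 5 / 8 * y ^ 4 := by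
      rw [hx]; field_simp; ring
    have h7 : y ^ 2 ≤ y ^ 4 := pow_le_pow_right₀ hy1 (by norm_num)
    have h8 : δ ^ 5 / 8 * y ^ 2 ≤ δ ^ 5 / 8 * y ^ 4 := by gcongr
    linarith
  have h6 : Real.sqrt (4 * Real.pi / v) ≤ Real.sqrt (8 * Real.pi / δ ^ 5) / x := by
    have e : Real.sqrt (8 * Real.pi / δ ^ 5) / x = Real.sqrt (8 * Real.pi / δ ^ 5 / x ^ 2) := by
      rw [Real.sqrt_div (x := 8 * Real.pi / δ ^ 5) (by positivity) (x ^ 2), Real.sqrt_sq hx0.le]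
    rw [e]
    refine Real.sqrt_le_sqrt ?_
    calc 4 * Real.pi / v ≤ 4 * Real.pi / (δ ^ 5 / 2 * x ^ 2) := by gcongr
      _ = 8 * Real.pi / δ ^ 5 / x ^ 2 := by field_simp; norm_num
  have h7 := mul_le_mul h5 h6 (Real.sqrt_nonneg _) (Real.exp_pos _).le
  rw [le_div_iff₀ (by positivity)]
  have h8 : Real.exp (-y) ≤ 1 := Real.exp_le_one_iff.2 (by linarith)
  have h9 := mul_le_mul_of_nonneg_left h7 (by positivity : 0 ≤ x * y ^ 4)
  have e : x * y ^ 4 * (Real.exp (-(δ ^ 5 / 8 * y ^ 2)) * (Real.sqrt (8 * Real.pi / δ ^ 5) / x)) =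
      Real.sqrt (8 * Real.pi / δ ^ 5) * y ^ 4 * Real.exp (-(δ ^ 5 / 8 * y ^ 2)) := by
    field_simp
  linarith

lemma error_terms_small {x y w t B : ℝ} (hx : x = y ^ 20) (hy3 : 3 ≤ y) (hw : w ≤ y ^ 40 / 2)
    (ht : x * t ≤ 1 / y ^ 4) (hB : 1 / y ^ 2 ≤ B) :
    x * (2 * (2 * (1 / y ^ 18) * (y ^ 2 + 1) / (y ^ 8 / 3)) +
      2 * (1 / y ^ 18) * (w * (1 / y ^ 18) ^ 3 + x * (1 / y ^ 18) ^ 2 / 2) + 4 / x ^ 2 + t) ≤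
      2 * Real.pi * B := by
  have hy0 : 0 < y := by linarith
  have hy1 : 1 ≤ y := by linarith
  have hinv : ∀ m, 4 ≤ m → 1 / y ^ m ≤ 1 / y ^ 4 := fun m hm =>
    one_div_le_one_div_of_le (by positivity) (pow_le_pow_right₀ hy1 hm)
  have a1 : x * (2 * (2 * (1 / y ^ 18) * (y ^ 2 + 1) / (y ^ 8 / 3))) =
      12 * (1 / y ^ 4) + 12 * (1 / y ^ 6) := by rw [hx]; field_simp; norm_num
  have a2 : x * (2 * (1 / y ^ 18) * (w * (1 / y ^ 18) ^ 3 + x * (1 / y ^ 18) ^ 2 / 2)) ≤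
      1 / y ^ 12 + 1 / y ^ 14 := by
    have h := mul_le_mul_of_nonneg_left hw (by positivity : 0 ≤ 2 * (1 / y ^ 52))
    have e1 : x * (2 * (1 / y ^ 18) * (w * (1 / y ^ 18) ^ 3 + x * (1 / y ^ 18) ^ 2 / 2)) =
        2 * (1 / y ^ 52) * w + 1 / y ^ 14 := by rw [hx]; field_simp
    have e2 : 2 * (1 / y ^ 52) * (y ^ 40 / 2) = 1 / y ^ 12 := by field_simp
    linarith
  have a3 : x * (4 / x ^ 2) = 4 * (1 / y ^ 20) := by rw [hx]; field_simp
  have b1 := hinv 6 (by norm_num)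
  have b2 := hinv 12 (by norm_num)
  have b3 := hinv 14 (by norm_num)
  have b4 := hinv 20 (by norm_num)
  have c1 : 31 * (1 / y ^ 4) ≤ 6 * (1 / y ^ 2) := by
    rw [mul_one_div, mul_one_div, div_le_div_iff₀ (by positivity) (by positivity)]
    have : 9 ≤ y ^ 2 := by nlinarith
    nlinarith [pow_pos hy0 2]
  have c2 : 6 * (1 / y ^ 2) ≤ 2 * Real.pi * B := by
    have := Real.pi_gt_three
    exact mul_le_mul (by linarith) hB (by positivity) (by positivity)
  rw [mul_add, mul_add, mul_add, a1, a3]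
  linarith

lemma high_frequency_exp_small {δ x y q k D : ℝ} (hδ : 0 < δ) (hx : x = y ^ 20) (hy0 : 0 < y)
    (h1 : δ ≤ q) (h2 : q ≤ 1 - δ) (hkl : δ * x ≤ k) (hx2 : 2 ≤ δ * x) (hDl : y ^ 18 ≤ D) :
    Real.exp (-(q * (1 - q) * (1 / y ^ 18) ^ 2 / Real.pi ^ 2 * (D * (k - 1)))) ≤
      Real.exp (-(δ ^ 3 / 20 * y ^ 2)) := by
  have hD0 : 0 ≤ D := le_trans (by positivity) hDl
  rw [Real.exp_le_exp, neg_le_neg_iff]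
  have a1 : δ * δ ≤ q * (1 - q) :=
    mul_le_mul h1 (by linarith) hδ.le (by linarith)
  have a2 : δ * y ^ 20 / 2 ≤ k - 1 := by rw [← hx]; linarith
  have a3 : y ^ 18 * (δ * y ^ 20 / 2) ≤ D * (k - 1) :=
    mul_le_mul hDl a2 (by positivity) (by positivity)
  have a4 : 1 / 10 ≤ 1 / Real.pi ^ 2 := by
    refine one_div_le_one_div_of_le (by positivity) ?_
    nlinarith [Real.pi_lt_d2, Real.pi_pos]
  have a5 : δ * δ * ((1 / y ^ 18) ^ 2 * (1 / 10)) ≤ q * (1 - q) *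
      ((1 / y ^ 18) ^ 2 * (1 / Real.pi ^ 2)) :=
    mul_le_mul a1 (by gcongr) (by positivity) ((by positivity : 0 ≤ δ * δ).trans a1)
  have a6 := mul_le_mul a5 a3 (by positivity) ((by positivity : (0:ℝ) ≤
    δ * δ * ((1 / y ^ 18) ^ 2 * (1 / 10))).trans a5)
  have e1 : δ * δ * ((1 / y ^ 18) ^ 2 * (1 / 10)) * (y ^ 18 * (δ * y ^ 20 / 2)) =
      δ ^ 3 / 20 * y ^ 2 := by field_simp; ring
  rw [e1] at a6
  refine a6.trans (le_of_eq ?_)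
  ring

/-- The bound on the proportion of pairs of `k`-sets at distance less than `D`. -/
lemma close_pairs_small {δ y : ℝ} (hδ : 0 < δ) {n k D : ℕ} (hny : (n : ℝ) = y ^ 20) (hn2 : 2 ≤ n)
    (hy3 : 3 ≤ y) (hyδ : 168 / δ ^ 2 ≤ y) (h3 : δ ≤ (k : ℝ) / n) (h4 : (k : ℝ) / n ≤ 1 - δ)
    (hDu : (D : ℝ) ≤ 2 * y ^ 18) :
    ((n : ℝ) + 1) ^ (2 * D) / (n.choose k : ℝ) ≤ Real.exp (-(δ ^ 2 / 2 * y ^ 2)) := by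
  have hy0 : 0 < y := by linarith
  have hy1 : 1 ≤ y := by linarith
  have hn3 : (2 : ℝ) ≤ n := by exact_mod_cast hn2
  have hC := choose_lower hδ (by omega) h3 h4
  have b1 : (n : ℝ) + 1 ≤ Real.exp (21 * y) := by
    have c1 : y ≤ Real.exp y := by linarith [Real.add_one_le_exp y]
    have c2 : (n : ℝ) + 1 ≤ y ^ 21 := by
      have : y ^ 21 = y ^ 20 * y := by ring
      rw [this, ← hny]; nlinarith
    refine c2.trans ((pow_le_pow_left₀ hy0.le c1 21).trans (le_of_eq ?_))
    rw [← Real.exp_nat_mul]; norm_num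
  have b2 : ((n : ℝ) + 1) ^ (2 * D) ≤ Real.exp (84 * y ^ 19) := by
    refine (pow_le_pow_left₀ (by positivity) b1 _).trans ?_
    rw [← Real.exp_nat_mul, Real.exp_le_exp]
    push_cast
    have : (D : ℝ) * y ≤ 2 * y ^ 18 * y := mul_le_mul_of_nonneg_right hDu hy0.le
    have e : y ^ 19 = y ^ 18 * y := by ring
    rw [e]; linarith
  have b3 : 84 * y ^ 19 ≤ δ ^ 2 / 2 * y ^ 20 := by
    rw [div_le_iff₀ (by positivity)] at hyδ
    have := mul_le_mul_of_nonneg_right hyδ (by positivity : 0 ≤ y ^ 19 / 2)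
    have e : y ^ 20 = y * y ^ 19 := by ring
    rw [e]; linarith
  have b4 : y ^ 2 ≤ y ^ 20 := pow_le_pow_right₀ hy1 (by norm_num)
  have b5 : δ ^ 2 / 2 * y ^ 2 ≤ δ ^ 2 / 2 * y ^ 20 := by gcongr
  refine (div_le_div₀ (Real.exp_pos _).le b2 (Real.exp_pos _) hC).trans ?_
  rw [← Real.exp_sub, Real.exp_le_exp, hny]
  linarith

/-- The estimate with `n = y ^ 20`, frequency cutoff `T = y⁻¹⁸`, exponential-moment parameters
`L = y⁸ / 3` and `s = y²`, and distance `D ≈ y ^ 18`. -/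
lemma estimate_at {δ : ℝ} (hδ : 0 < δ) {n M k : ℕ} {y : ℝ} (hny : (n : ℝ) = y ^ 20)
    (hy3 : 3 ≤ y) (hyδ : 168 / δ ^ 2 ≤ y) (hyδ' : 4 / δ ≤ y)
    (hs1 : 4 * Real.exp 5 * y ^ 40 * Real.exp (-(1 * y ^ 2)) ≤ Real.exp (-y) / 3)
    (hs2 : 2 * Real.pi * y ^ 120 * Real.exp (-(δ ^ 3 / 20 * y ^ 2)) ≤ Real.exp (-y) / 3)
    (hs3 : 2 * Real.pi * y ^ 120 * Real.exp (-(δ ^ 2 / 2 * y ^ 2)) ≤ Real.exp (-y) / 3)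
    (hs4 : Real.sqrt (8 * Real.pi / δ ^ 5) * y ^ 4 * Real.exp (-(δ ^ 5 / 8 * y ^ 2)) ≤
      Real.exp (-y) / 3)
    (h1 : δ ≤ (M : ℝ) / Nr n) (h2 : (M : ℝ) / Nr n ≤ 1 - δ) (h3 : δ ≤ (k : ℝ) / n)
    (h4 : (k : ℝ) / n ≤ 1 - δ) {B : ℝ} (hB : 1 / y ^ 2 ≤ B) :
    1 - Real.exp (-y) ≤ PrGnM n M (fun G => ∀ z : ℤ,
          (n : ℝ) * |Pru (kSets n k) (fun S => (edgesIn G S : ℤ) = z) -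
            gaussPdf (muP n M k) (lamP n M k * (n:ℝ) ^ 2) (z : ℝ)| ≤ B) := by
  have hy0 : 0 < y := by linarith
  have hy1 : 1 ≤ y := by linarith
  have hn3 : (3 : ℝ) ≤ n := by
    rw [hny]; exact hy3.trans (le_self_pow₀ hy1 (by norm_num))
  have hn2 : 2 ≤ n := by
    have : (2 : ℝ) ≤ n := by linarith
    exact_mod_cast this
  have hn0 : (0 : ℝ) < n := by linarith
  have hN : 0 < Nr n := by unfold Nr; nlinarith
  have hkl : δ * n ≤ k := by rwa [le_div_iff₀ hn0] at h3
  have hku : (k : ℝ) ≤ (1 - δ) * n := by rwa [div_le_iff₀ hn0] at h4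
  have hδn : 4 ≤ δ * n := by
    have : y ≤ n := by rw [hny]; exact le_self_pow₀ hy1 (by norm_num)
    rw [div_le_iff₀ hδ] at hyδ'
    nlinarith
  have hk4 : 4 ≤ k := by exact_mod_cast hδn.trans hkl
  have hk : k ≤ n := by
    have : (k : ℝ) ≤ n := by nlinarith
    exact_mod_cast this
  have hM0 : 0 < M := by
    rcases Nat.eq_zero_or_pos M with h | h
    · rw [h] at h1; simp at h1; linarith
    · exact h
  have hMN : (M : ℝ) < Nr n := by
    rw [div_le_iff₀ hN] at h2; nlinarith
  have hvl := var_lower hδ hn2 h1 h2 h3 h4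
  have hv : 0 < lamP n M k * (n : ℝ) ^ 2 := lt_of_lt_of_le (by positivity) hvl
  have hNr : Nr n ≤ y ^ 40 / 2 := by
    have : y ^ 40 = (n : ℝ) ^ 2 := by rw [hny]; ring
    rw [this]; unfold Nr; nlinarith
  have hNr1 : Nr n + 1 ≤ y ^ 40 := by
    have : y ^ 40 = (n : ℝ) ^ 2 := by rw [hny]; ring
    rw [this]; unfold Nr; nlinarith
  have hLV : (y ^ 8 / 3) ^ 2 * (8 * n * (1 / y ^ 18) ^ 2 + 2 * Nr n * (1 / y ^ 18) ^ 4) ≤ 1 := by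
    have e : (y ^ 8 / 3) ^ 2 * (8 * y ^ 20 * (1 / y ^ 18) ^ 2 + 2 * (y ^ 40 / 2) * (1 / y ^ 18) ^ 4) =
        8 / 9 + 1 / 9 * (1 / y ^ 16) := by field_simp; ring
    have h5 : 1 / y ^ 16 ≤ 1 := by
      rw [div_le_one (by positivity)]; exact one_le_pow₀ hy1
    calc _ ≤ (y ^ 8 / 3) ^ 2 * (8 * y ^ 20 * (1 / y ^ 18) ^ 2 + 2 * (y ^ 40 / 2) * (1 / y ^ 18) ^ 4) := by
          rw [← hny]; gcongr
      _ ≤ 1 := by rw [e]; linarith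
  have herr := error_terms_small hny hy3 hNr (gauss_tail_small hδ hny hy1 hs4 hvl) hB
  have hmain := quantitative hn2 hk4 hk hM0 hMN (T := 1 / y ^ 18) (by positivity)
    (by rw [div_le_one (by positivity)]; exact one_le_pow₀ hy1) (L := y ^ 8 / 3) (s := y ^ 2)
    (by positivity) hLV ⌈y ^ 18⌉₊ hv herr
  refine le_trans ?_ hmain
  rw [sub_le_sub_iff_left]
  have hDl : y ^ 18 ≤ (⌈y ^ 18⌉₊ : ℝ) := Nat.le_ceil _
  have hDu : (⌈y ^ 18⌉₊ : ℝ) ≤ 2 * y ^ 18 := by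
    have := Nat.ceil_lt_add_one (by positivity : 0 ≤ y ^ 18)
    have : 1 ≤ y ^ 18 := one_le_pow₀ hy1
    linarith
  set D := ⌈y ^ 18⌉₊ with hD
  have hexp : Real.exp (-((M : ℝ) / Nr n * (1 - M / Nr n) * (1 / y ^ 18) ^ 2 / Real.pi ^ 2 *
      (D * (k - 1)))) ≤ Real.exp (-(δ ^ 3 / 20 * y ^ 2)) :=
    high_frequency_exp_small hδ hny hy0 h1 h2 hkl (by linarith) hDl
  have hcount : ((n : ℝ) + 1) ^ (2 * D) / (n.choose k : ℝ) ≤ Real.exp (-(δ ^ 2 / 2 * y ^ 2)) :=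
    close_pairs_small hδ hny hn2 hy3 hyδ h3 h4 hDu
  have hsum : 4 * Real.exp 5 * Real.exp (-y ^ 2) + (n : ℝ) ^ 4 *
      ((Real.exp (-((M : ℝ) / Nr n * (1 - M / Nr n) * (1 / y ^ 18) ^ 2 / Real.pi ^ 2 *
        (D * (k - 1)))) + (n + 1) ^ (2 * D) / (n.choose k : ℝ)) * (2 * Real.pi)) ≤
      4 * Real.exp 5 * Real.exp (-y ^ 2) + y ^ 80 *
        ((Real.exp (-(δ ^ 3 / 20 * y ^ 2)) + Real.exp (-(δ ^ 2 / 2 * y ^ 2))) * (2 * Real.pi)) := by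
    have e : (n : ℝ) ^ 4 = y ^ 80 := by rw [hny]; ring
    rw [e]
    gcongr
  refine (mul_le_mul hNr1 hsum (by positivity) (by positivity)).trans ?_
  rw [one_mul] at hs1
  have e : y ^ 40 * (4 * Real.exp 5 * Real.exp (-y ^ 2) + y ^ 80 *
        ((Real.exp (-(δ ^ 3 / 20 * y ^ 2)) + Real.exp (-(δ ^ 2 / 2 * y ^ 2))) * (2 * Real.pi))) =
      4 * Real.exp 5 * y ^ 40 * Real.exp (-y ^ 2) +
      2 * Real.pi * y ^ 120 * Real.exp (-(δ ^ 3 / 20 * y ^ 2)) +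
      2 * Real.pi * y ^ 120 * Real.exp (-(δ ^ 2 / 2 * y ^ 2)) := by ring
  rw [e]
  linarith

/-- Local limit theorem, Theorem 1.2.
For fixed `δ, ε > 0` there are `η > 0` and `n₀` such that for all `n ≥ n₀` and all `M, k`
with `M/N, k/n ∈ [δ, 1-δ]`, with probability at least `1 - exp(-n^η)` over `G = G_{n,M}`:
for all integers `z`, `n·|P_S(e(S) = z) - φ(z)| ≤ n^(-1/14+ε)`, where `φ` is the density
of `N(K·M/N, λ·n²)`. -/
theorem stmt_1 (δ ε : ℝ) (hδ : 0 < δ) (hε : 0 < ε) :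
    ∃ η > (0:ℝ), ∃ n₀ : ℕ, ∀ n ≥ n₀, ∀ M k : ℕ,
      δ ≤ (M : ℝ) / Nr n → (M : ℝ) / Nr n ≤ 1 - δ →
      δ ≤ (k : ℝ) / n → (k : ℝ) / n ≤ 1 - δ →
      PrGnM n M (fun G => ∀ z : ℤ,
          (n : ℝ) * |Pru (kSets n k) (fun S => (edgesIn G S : ℤ) = z) -
            gaussPdf (muP n M k) (lamP n M k * (n:ℝ) ^ 2) (z : ℝ)|
          ≤ (n : ℝ) ^ (-(1/14 : ℝ) + ε))
        ≥ 1 - Real.exp (-(n : ℝ) ^ η) := by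
  have hfilter : ∀ᶠ y : ℝ in Filter.atTop, 3 ≤ y ∧ 168 / δ ^ 2 ≤ y ∧ 4 / δ ≤ y ∧
      4 * Real.exp 5 * y ^ 40 * Real.exp (-(1 * y ^ 2)) ≤ Real.exp (-y) / 3 ∧
      2 * Real.pi * y ^ 120 * Real.exp (-(δ ^ 3 / 20 * y ^ 2)) ≤ Real.exp (-y) / 3 ∧
      2 * Real.pi * y ^ 120 * Real.exp (-(δ ^ 2 / 2 * y ^ 2)) ≤ Real.exp (-y) / 3 ∧
      Real.sqrt (8 * Real.pi / δ ^ 5) * y ^ 4 * Real.exp (-(δ ^ 5 / 8 * y ^ 2)) ≤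
        Real.exp (-y) / 3 := by
    filter_upwards [Filter.eventually_ge_atTop 3, Filter.eventually_ge_atTop (168 / δ ^ 2),
      Filter.eventually_ge_atTop (4 / δ), eventually_small (4 * Real.exp 5) 40 one_pos,
      eventually_small (2 * Real.pi) 120 (by positivity : 0 < δ ^ 3 / 20),
      eventually_small (2 * Real.pi) 120 (by positivity : 0 < δ ^ 2 / 2),
      eventually_small (Real.sqrt (8 * Real.pi / δ ^ 5)) 4 (by positivity : 0 < δ ^ 5 / 8)]
      with y a1 a2 a3 a4 a5 a6 a7
    exact ⟨a1, a2, a3, a4, a5, a6, a7⟩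
  have htend : Filter.Tendsto (fun n : ℕ => (n : ℝ) ^ (1 / 20 : ℝ)) Filter.atTop Filter.atTop :=
    (tendsto_rpow_atTop (by norm_num)).comp tendsto_natCast_atTop_atTop
  obtain ⟨n₀, hn₀⟩ := Filter.eventually_atTop.1 (htend.eventually hfilter)
  refine ⟨1 / 20, by norm_num, n₀ + 1, fun n hn M k h1 h2 h3 h4 => ?_⟩
  obtain ⟨a1, a2, a3, a4, a5, a6, a7⟩ := hn₀ n (by omega)
  have hn1 : (1 : ℝ) ≤ n := by exact_mod_cast (by omega : 1 ≤ n)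
  have hpow : ∀ m : ℕ, ((n : ℝ) ^ (1 / 20 : ℝ)) ^ m = (n : ℝ) ^ ((m : ℝ) / 20) := by
    intro m
    rw [← Real.rpow_natCast, ← Real.rpow_mul (by linarith)]
    congr 1; ring
  refine estimate_at hδ (y := (n : ℝ) ^ (1 / 20 : ℝ)) ?_ a1 a2 a3 a4 a5 a6 a7 h1 h2 h3 h4 ?_
  · rw [hpow]; norm_num
  · rw [hpow, one_div, ← Real.rpow_neg (by linarith)]
    refine Real.rpow_le_rpow_of_exponent_le hn1 ?_
    push_cast; linarith
end
end

section
/- Let G be any graph on vertex set [n] with M edges and let 1 ≤ k ≤ n−1, k̄ = n−k. Then for every k-element subset S ⊆ [n], with x uniform on S and x̄ uniform on S̄ independently and S' = (S∖{x})∪{x̄}, S̄' = (S̄∖{x̄})∪{x}, one has E_{x,x̄}[e(S') − e(S)] = −((n−1+k̄)/(k·k̄))·(e(S) − K·M/N) − ((k−1)/(k·k̄))·(e(S̄) − K̄·M/N), and symmetrically E_{x,x̄}[e(S̄') − e(S̄)] = −((n−1+k)/(k·k̄))·(e(S̄) − K̄·M/N) − ((k̄−1)/(k·k̄))·(e(S)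 − K·M/N). Equivalently, E[𝐖' − 𝐖 | 𝐖] = −Λ𝐖, where Λ = (1/(k·k̄))·[[n+k̄−1, k−1],[k̄−1, n+k−1]]. -/
/-!
By linearity over the edges of `G`, it suffices to count, for each edge `e`, the pairs
`(x, y) ∈ S × Sᶜ` such that `e` lies inside `S' = (S ∖ {x}) ∪ {y}`. With `k = |S|`, `k̄ = |Sᶜ|`:

* an edge inside `S` survives iff `x` is not an endpoint, which gives `(k - 2) k̄` pairs;
* an edge crossing from `S` to `Sᶜ` is counted iff `y` is its endpoint in `Sᶜ` and `x` is not its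
  endpoint in `S`, which gives `k - 1` pairs;
* an edge inside `Sᶜ` never lies inside `S'`.

There are `M - e(S) - e(Sᶜ)` crossing edges, so
`∑ (e(S') - e(S)) = -2 k̄ e(S) + (k - 1) (M - e(S) - e(Sᶜ))` (`sum_edgesIn_swap`). The centred form
follows from `(n - 1 + k̄) K + (k - 1) K̄ = (k - 1) N` (`swap_algebra`). The second identity is the
first one applied to `Sᶜ`.
-/

open Finset MeasureTheory ProbabilityTheory

noncomputable section

/-- The number of swaps `(x, y)` putting a fixed edge `e` inside `(S ∖ {x}) ∪ {y}`, according to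
the position of `e`. The crossing indicator is `1 - [e ⊆ S] - [e ⊆ Sᶜ]`. -/
lemma sum_edge_indicator {n : ℕ} (S : Finset (Fin n)) (e : Sym2 (Fin n)) (he : ¬ e.IsDiag) :
    (∑ x ∈ S, ∑ y ∈ Sᶜ, if ∀ v ∈ e, v ∈ insert y (S.erase x) then (1 : ℝ) else 0)
      = ((S.card : ℝ) - 2) * (Sᶜ.card : ℝ) * (if ∀ v ∈ e, v ∈ S then 1 else 0)
        + ((S.card : ℝ) - 1) * (1 - (if ∀ v ∈ e, v ∈ S then 1 else 0)
          - (if ∀ v ∈ e, v ∈ Sᶜ then 1 else 0)) := by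
  induction e using Sym2.ind with
  | _ u v =>
    have huv : u ≠ v := by simpa using he
    have sum_ne : ∀ w ∈ S, (∑ x ∈ S, if x ≠ w then (1 : ℝ) else 0) = (S.card : ℝ) - 1 := by
      intro w hw
      have h (x : Fin n) : (if x ≠ w then (1 : ℝ) else 0) = 1 - if x = w then 1 else 0 := by
        by_cases hx : x = w <;> simp [hx]
      simp only [h, Finset.sum_sub_distrib, Finset.sum_ite_eq', hw]
      simp
    -- The crossing case, with the endpoint in `S` written first.
    have cross : ∀ a b : Fin n, a ∈ S → b ∉ S → (∑ x ∈ S, ∑ y ∈ Sᶜ,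
        if a ∈ insert y (S.erase x) ∧ b ∈ insert y (S.erase x) then (1 : ℝ) else 0)
          = (S.card : ℝ) - 1 := by
      intro a b ha hb
      rw [← sum_ne a ha]
      refine Finset.sum_congr rfl fun x hx => ?_
      rw [Finset.sum_eq_single b]
      · have hab : a ≠ b := fun h => hb (h ▸ ha)
        simp [hab, ha, eq_comm]
      · intro y hy hyb
        rw [if_neg]
        rintro ⟨-, h⟩
        simp [hb, Ne.symm hyb] at h
      · intro h
        exact absurd (Finset.mem_compl.2 hb) h
    simp only [Sym2.mem_iff, forall_eq_or_imp, forall_eq]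
    by_cases hu : u ∈ S <;> by_cases hv : v ∈ S
    · have key : ∀ x ∈ S, ∀ y ∈ Sᶜ,
          (if u ∈ insert y (S.erase x) ∧ v ∈ insert y (S.erase x) then (1 : ℝ) else 0)
            = 1 - (if x = u then 1 else 0) - (if x = v then 1 else 0) := by
        intro x hx y hy
        have hyu : u ≠ y := fun h => Finset.mem_compl.1 hy (h ▸ hu)
        have hyv : v ≠ y := fun h => Finset.mem_compl.1 hy (h ▸ hv)
        by_cases h1 : x = u
        · subst h1
          simp [hyu, huv]
        · by_cases h2 : x = v
          · subst h2
            simp [hyv, h1]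
          · simp [hu, hv, h1, h2, Ne.symm h1, Ne.symm h2]
      rw [Finset.sum_congr rfl fun x hx => Finset.sum_congr rfl (key x hx)]
      simp only [Finset.sum_const, nsmul_eq_mul, ← Finset.mul_sum, Finset.sum_sub_distrib,
        Finset.sum_ite_eq', hu, hv, Finset.mem_compl]
      simp
      ring
    · rw [cross u v hu hv]
      simp [hu, hv]
    · simp only [and_comm (a := u ∈ insert _ _)]
      rw [cross v u hv hu]
      simp [hu, hv]
    · rw [Finset.sum_eq_zero]
      · simp [hu, hv]
      · intro x hx
        refine Finset.sum_eq_zero fun y hy => ?_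
        rw [if_neg]
        rintro ⟨h1, h2⟩
        simp only [Finset.mem_insert, Finset.mem_erase, hu, hv, and_false, or_false] at h1 h2
        exact huv (h1.trans h2.symm)

lemma edgesIn_eq_sum {n : ℕ} (G : Finset (Sym2 (Fin n))) (S : Finset (Fin n)) :
    (edgesIn G S : ℝ) = ∑ e ∈ G, if ∀ v ∈ e, v ∈ S then (1 : ℝ) else 0 := by
  rw [edgesIn, Finset.sum_boole]

lemma sum_edgesIn_swap {n : ℕ} (G : Finset (Sym2 (Fin n))) (hG : IsGraph G)
    (S : Finset (Fin n)) :
    (∑ x ∈ S, ∑ y ∈ Sᶜ, (edgesIn G (insert y (S.erase x)) : ℝ))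
      = ((S.card : ℝ) - 2) * (Sᶜ.card : ℝ) * edgesIn G S
        + ((S.card : ℝ) - 1) * ((G.card : ℝ) - edgesIn G S - edgesIn G Sᶜ) := by
  simp only [edgesIn_eq_sum]
  have h : (G.card : ℝ) = ∑ e ∈ G, (1 : ℝ) := by simp
  rw [h, ← Finset.sum_sub_distrib, ← Finset.sum_sub_distrib, Finset.mul_sum, Finset.mul_sum,
    ← Finset.sum_add_distrib, ← Finset.sum_congr rfl fun e he => sum_edge_indicator S e (hG e he)]
  exact (Finset.sum_congr rfl fun x _ => Finset.sum_comm).trans Finset.sum_comm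

/-- The passage to centred edge counts: the coefficients of `M` cancel because
`(k + l - 1 + l) K + (k - 1) L = (k - 1) N`, where `k + l = n`. -/
lemma swap_algebra (n k l : ℕ) (hn : k + l = n) (hk : 1 ≤ k) (hl : 1 ≤ l) (a b M : ℝ) :
    (((k : ℝ) - 2) * l * a + ((k : ℝ) - 1) * (M - a - b) - k * l * a) / (k * l)
      = -(((n : ℝ) - 1 + l) / ((k : ℝ) * l)) * (a - Kr k * M / Nr n)
        - (((k : ℝ) - 1) / ((k : ℝ) * l)) * (b - Kr l * M / Nr n) := by
  subst hn
  have hk' : (1 : ℝ) ≤ k := by exact_mod_cast hk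
  have hl' : (1 : ℝ) ≤ l := by exact_mod_cast hl
  have h0 : (k : ℝ) ≠ 0 := by positivity
  have h1 : (l : ℝ) ≠ 0 := by positivity
  have h2 : (k : ℝ) + l ≠ 0 := by positivity
  have h3 : (k : ℝ) + l - 1 ≠ 0 := by linarith
  simp only [Kr, Nr]
  push_cast
  field_simp
  ring

/-- The first identity, in terms of `S` and `|Sᶜ|`; both parts of the theorem are instances. -/
lemma swap_expectation {n : ℕ} (G : Finset (Sym2 (Fin n))) (hG : IsGraph G)
    (S : Finset (Fin n)) (hS : 1 ≤ S.card) (hS' : 1 ≤ Sᶜ.card) :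
    (∑ x ∈ S, ∑ y ∈ Sᶜ, ((edgesIn G (insert y (S.erase x)) : ℝ) - edgesIn G S))
        / ((S.card : ℝ) * Sᶜ.card)
      = -(((n : ℝ) - 1 + Sᶜ.card) / ((S.card : ℝ) * Sᶜ.card))
          * ((edgesIn G S : ℝ) - Kr S.card * (G.card : ℝ) / Nr n)
        - (((S.card : ℝ) - 1) / ((S.card : ℝ) * Sᶜ.card))
          * ((edgesIn G Sᶜ : ℝ) - Kr Sᶜ.card * (G.card : ℝ) / Nr n) := by
  rw [← swap_algebra n S.card Sᶜ.card (by simp) hS hS']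
  simp only [Finset.sum_sub_distrib, sum_edgesIn_swap G hG S, Finset.sum_const, nsmul_eq_mul]
  ring

/-- Lemma 2.2: `E[W' - W | W] = -ΛW`, in expanded form.
For any graph `G` on `[n]` with `M` edges, `1 ≤ k ≤ n-1`, `k̄ = n-k`, and any `k`-set `S`,
with `x` uniform on `S`, `x̄` uniform on `S̄` independent, `S' = (S∖{x})∪{x̄}`,
`S̄' = (S̄∖{x̄})∪{x}`, the two displayed expectation identities hold. -/
theorem stmt_3 (n M k : ℕ) (G : Finset (Sym2 (Fin n))) (hG : IsGraph G) (hM : G.card = M)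
    (hk1 : 1 ≤ k) (hk2 : k ≤ n - 1) (S : Finset (Fin n)) (hS : S.card = k) :
    Exu (S ×ˢ Sᶜ) (fun xp => (edgesIn G (insert xp.2 (S.erase xp.1)) : ℝ) - (edgesIn G S : ℝ))
      = -(((n : ℝ) - 1 + ((n - k : ℕ) : ℝ)) / ((k : ℝ) * ((n - k : ℕ) : ℝ)))
          * ((edgesIn G S : ℝ) - Kr k * (M : ℝ) / Nr n)
        - (((k : ℝ) - 1) / ((k : ℝ) * ((n - k : ℕ) : ℝ)))
          * ((edgesIn G Sᶜ : ℝ) - Kr (n - k) * (M : ℝ) / Nr n)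
    ∧
    Exu (S ×ˢ Sᶜ) (fun xp => (edgesIn G (insert xp.1 (Sᶜ.erase xp.2)) : ℝ) - (edgesIn G Sᶜ : ℝ))
      = -(((n : ℝ) - 1 + (k : ℝ)) / ((k : ℝ) * ((n - k : ℕ) : ℝ)))
          * ((edgesIn G Sᶜ : ℝ) - Kr (n - k) * (M : ℝ) / Nr n)
        - ((((n - k : ℕ) : ℝ) - 1) / ((k : ℝ) * ((n - k : ℕ) : ℝ)))
          * ((edgesIn G S : ℝ) - Kr k * (M : ℝ) / Nr n) := by
  subst hM hS
  have hc : Sᶜ.card = n - S.card := by simp [Finset.card_compl]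
  have hc1 : 1 ≤ Sᶜ.card := by omega
  rw [← hc]
  constructor
  · rw [← swap_expectation G hG S hk1 hc1, Exu, Finset.sum_product, Finset.card_product,
      Nat.cast_mul]
  · have h := swap_expectation G hG Sᶜ hc1 (by simpa using hk1)
    rw [compl_compl, mul_comm (Sᶜ.card : ℝ)] at h
    rw [← h, Exu, Finset.sum_product_right, Finset.card_product, Nat.cast_mul]
end
end

section
/- Fix δ > 0, ε > 0 and C > 0. Then there exist C' > 0 and n₀ such that the following holds for all n ≥ n₀: for any graph G on [n] with M = e(G), any k with k/n ∈ [δ, 1−δ], if (1/n)·Σ_{v∈[n]} |d(v) − d(G)|³ ≤ C·n^{3/2+ε}, then for each i ∈ {0,1,2,3}, E[|W' − W|^i · |W̄' − W̄|^{3−i}] ≤ C'·n^{−3/2+ε}, where the expectation is over the uniform random k-set S, x uniform on S and x̄ uniform on S̄. -/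
/-!
Fix the swapped pair `x ∈ S`, `y ∉ S` and put `T = S \ {x}`. Then `T` is a uniform `(k-1)`-subset of
`U = [n] \ {x, y}`, and with `f w = 1[w ~ y] - 1[w ~ x]` one has `e(S') - e(S) = ∑_{w ∈ T} f w` and
`e(S̄') - e(S̄) = ∑_{w ∈ T} f w - D`, where `D = ∑_{w ∈ U} f w = d(y) - d(x)`. Let `g` be `f` minus its
average over `U`, and `X = ∑_{w ∈ T} g w`. Both differences are at most `|X| + 2|D|` in absolute value,
so each mixed third moment is bounded by moments of `X` and `D`.

* `|D|³ ≤ 4 (|d(x) - d(G)|³ + |d(y) - d(G)|³)`, and `x`, `y` are each uniform on `[n]`, so the hypothesis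
  on degrees bounds `E|D|³`.
* `E X² = O(n)` and `E X⁴ = O(n²)` (`sum_sq_le`, `sum_fourth_le`), by adding the elements of `T` one at a
  time: as `g` has total sum `0`, the mean of a new element given the current partial sum `X` is a
  nonpositive multiple of `X`, so the terms `2 X g` and `4 X³ g` contribute a nonpositive amount.
  Finally `2|X|³ ≤ X⁴/√n + √n X²` gives `E|X|³ = O(n^{3/2})`.

The resulting constant is `C' = 256 C + 136`.
-/

open Finset MeasureTheory ProbabilityTheory

noncomputable section

/-! ### Moments of sums over a uniform `k`-subset -/

/-- A `(k+1)`-subset with a marked element is the same as a `k`-subset with a new element. -/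
lemma sum_powersetCard_succ {α : Type*} [DecidableEq α] (U : Finset α) (k : ℕ)
    (F : Finset α → ℝ) :
    ((k : ℝ) + 1) * ∑ T ∈ U.powersetCard (k + 1), F T
      = ∑ T ∈ U.powersetCard k, ∑ y ∈ U \ T, F (insert y T) := by
  have h1 : ((k : ℝ) + 1) * ∑ T ∈ U.powersetCard (k + 1), F T
      = ∑ T ∈ U.powersetCard (k + 1), ∑ _y ∈ T, F T := by
    rw [Finset.mul_sum]
    refine Finset.sum_congr rfl fun T hT => ?_
    rw [Finset.sum_const, (Finset.mem_powersetCard.1 hT).2, nsmul_eq_mul]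
    push_cast
    ring
  rw [h1, Finset.sum_sigma', Finset.sum_sigma']
  refine Finset.sum_bij' (fun p _ => ⟨p.1.erase p.2, p.2⟩) (fun p _ => ⟨insert p.2 p.1, p.2⟩)
    ?_ ?_ ?_ ?_ ?_
  · rintro ⟨T, y⟩ h
    simp only [Finset.mem_sigma, Finset.mem_powersetCard, Finset.mem_sdiff] at h ⊢
    obtain ⟨⟨hT, hc⟩, hy⟩ := h
    refine ⟨⟨(Finset.erase_subset _ _).trans hT, ?_⟩, hT hy, Finset.notMem_erase _ _⟩
    rw [Finset.card_erase_of_mem hy, hc]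
    simp
  · rintro ⟨T, y⟩ h
    simp only [Finset.mem_sigma, Finset.mem_powersetCard, Finset.mem_sdiff] at h ⊢
    obtain ⟨⟨hT, hc⟩, hyU, hyT⟩ := h
    refine ⟨⟨Finset.insert_subset hyU hT, ?_⟩, Finset.mem_insert_self _ _⟩
    rw [Finset.card_insert_of_notMem hyT, hc]
  · rintro ⟨T, y⟩ h
    simp only [Finset.mem_sigma] at h
    simp [Finset.insert_erase h.2]
  · rintro ⟨T, y⟩ h
    simp only [Finset.mem_sigma, Finset.mem_sdiff] at h
    simp [Finset.erase_insert h.2.2]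
  · rintro ⟨T, y⟩ h
    simp only [Finset.mem_sigma] at h
    simp [Finset.insert_erase h.2]

/-- One step of the moment recursion: if adding an element `y` to `T` changes `F` by at most
`c * (∑ T)^(2j+1) * g y + H T`, the odd power drops out and the average of `F` grows by at most the
average of `H`. -/
lemma sum_step {α : Type*} [DecidableEq α] (U : Finset α) (g : α → ℝ)
    (hg : ∑ w ∈ U, g w = 0) (k j : ℕ) (c : ℝ) (hc : 0 ≤ c) (F H : Finset α → ℝ)
    (hF : ∀ T ⊆ U, ∀ y ∈ U \ T,
      F (insert y T) ≤ F T + c * (∑ w ∈ T, g w) ^ (2 * j + 1) * g y + H T) :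
    ((k : ℝ) + 1) * ∑ T ∈ U.powersetCard (k + 1), F T
      ≤ ((U.card : ℝ) - k) * ∑ T ∈ U.powersetCard k, (F T + H T) := by
  rw [sum_powersetCard_succ, Finset.mul_sum]
  refine Finset.sum_le_sum fun T hT => ?_
  obtain ⟨hTU, hTk⟩ := Finset.mem_powersetCard.1 hT
  refine (Finset.sum_le_sum (hF T hTU)).trans ?_
  have hs : ∑ y ∈ U \ T, g y = -∑ w ∈ T, g w := by
    have := Finset.sum_sdiff (f := g) hTU
    linarith
  have hcard : ((U \ T).card : ℝ) = (U.card : ℝ) - k := by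
    rw [Finset.card_sdiff_of_subset hTU, Nat.cast_sub (Finset.card_le_card hTU), hTk]
  rw [Finset.sum_add_distrib, Finset.sum_add_distrib, ← Finset.mul_sum, hs, Finset.sum_const,
    Finset.sum_const, nsmul_eq_mul, nsmul_eq_mul, hcard]
  have : 0 ≤ c * ((∑ w ∈ T, g w) ^ (j + 1)) ^ 2 := by positivity
  have e : c * (∑ w ∈ T, g w) ^ (2 * j + 1) * -∑ w ∈ T, g w
      = -(c * ((∑ w ∈ T, g w) ^ (j + 1)) ^ 2) := by ring
  rw [e]
  linarith

lemma choose_step (m k : ℕ) :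
    ((m : ℝ) - k) * (m.choose k : ℝ) = ((k : ℝ) + 1) * (m.choose (k + 1) : ℝ) := by
  rcases le_or_gt k m with h | h
  · have := Nat.choose_succ_right_eq m k
    have h2 : ((m.choose (k + 1) * (k + 1) : ℕ) : ℝ) = ((m.choose k * (m - k) : ℕ) : ℝ) := by
      rw [this]
    push_cast [Nat.cast_sub h] at h2
    linarith
  · rw [Nat.choose_eq_zero_of_lt h, Nat.choose_eq_zero_of_lt (by omega)]
    simp

/-- Converts the recursion of `sum_step` into one for averages. -/
lemma le_of_step (m k : ℕ) (A P Q b : ℝ) (hk : k ≤ m)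
    (h1 : ((k : ℝ) + 1) * A ≤ ((m : ℝ) - k) * P) (h2 : P ≤ b * (m.choose k : ℝ))
    (hQ : b ≤ Q) : A ≤ Q * (m.choose (k + 1) : ℝ) := by
  have hm : (0 : ℝ) ≤ (m : ℝ) - k := by
    have : (k : ℝ) ≤ m := by exact_mod_cast hk
    linarith
  have h3 := mul_le_mul_of_nonneg_left h2 hm
  have h4 := choose_step m k
  have h5 : ((m : ℝ) - k) * (b * (m.choose k : ℝ)) = ((k : ℝ) + 1) * (b * m.choose (k + 1)) := by
    linear_combination b * h4
  have h6 : ((k : ℝ) + 1) * A ≤ ((k : ℝ) + 1) * (b * m.choose (k + 1)) := by linarith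
  have h7 := le_of_mul_le_mul_left h6 (by positivity)
  have : b * (m.choose (k + 1) : ℝ) ≤ Q * (m.choose (k + 1) : ℝ) := by gcongr
  linarith

lemma sum_sq_le {α : Type*} [DecidableEq α] (U : Finset α) (g : α → ℝ)
    (hg : ∑ w ∈ U, g w = 0) (hB : ∀ w ∈ U, (g w) ^ 2 ≤ 4) (k : ℕ) :
    ∑ T ∈ U.powersetCard k, (∑ w ∈ T, g w) ^ 2 ≤ (4 * k) * (U.card.choose k : ℝ) := by
  induction k with
  | zero => simp
  | succ k ih =>
    rcases le_or_gt k U.card with hk | hk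
    · refine le_of_step U.card k _ _ _ (4 * k + 4) hk
        (sum_step U g hg k 0 2 (by norm_num) _ (fun _ => 4) ?_) ?_ ?_
      · intro T hT y hy
        obtain ⟨hyU, hyT⟩ := Finset.mem_sdiff.1 hy
        rw [Finset.sum_insert hyT]
        have := hB y hyU
        norm_num
        nlinarith
      · rw [Finset.sum_add_distrib, Finset.sum_const, Finset.card_powersetCard, nsmul_eq_mul]
        linarith
      · push_cast
        linarith
    · rw [Finset.powersetCard_eq_empty.2 (by omega), Finset.sum_empty]
      positivity

lemma sum_fourth_le {α : Type*} [DecidableEq α] (U : Finset α) (g : α → ℝ)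
    (hg : ∑ w ∈ U, g w = 0) (hB : ∀ w ∈ U, (g w) ^ 2 ≤ 4) (k : ℕ) :
    ∑ T ∈ U.powersetCard k, (∑ w ∈ T, g w) ^ 4 ≤ (64 * (k : ℝ) ^ 2) * (U.card.choose k : ℝ) := by
  induction k with
  | zero => simp
  | succ k ih =>
    rcases le_or_gt k U.card with hk | hk
    · refine le_of_step U.card k _ _ _ (64 * (k : ℝ) ^ 2 + (32 * (4 * k) + 48)) hk
        (sum_step U g hg k 1 4 (by norm_num) _ (fun T => 32 * (∑ w ∈ T, g w) ^ 2 + 48) ?_) ?_ ?_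
      · intro T hT y hy
        obtain ⟨hyU, hyT⟩ := Finset.mem_sdiff.1 hy
        rw [Finset.sum_insert hyT]
        have hb := hB y hyU
        generalize (∑ w ∈ T, g w) = X
        generalize g y = z at *
        have h1 : 0 ≤ X ^ 2 * (4 - z ^ 2) := mul_nonneg (sq_nonneg _) (by linarith)
        have h2 : z ^ 4 ≤ 16 := by nlinarith [sq_nonneg z]
        have h3 : 0 ≤ (z * (X - z)) ^ 2 := sq_nonneg _
        norm_num
        nlinarith
      · have h2 := sum_sq_le U g hg hB k
        rw [Finset.sum_add_distrib, Finset.sum_add_distrib, ← Finset.mul_sum, Finset.sum_const,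
          Finset.card_powersetCard, nsmul_eq_mul]
        linarith
      · push_cast
        nlinarith
    · rw [Finset.powersetCard_eq_empty.2 (by omega), Finset.sum_empty]
      positivity

/-- The third absolute moment, by interpolation between the second and the fourth. -/
lemma sum_cube_le {α : Type*} [DecidableEq α] (U : Finset α) (g : α → ℝ)
    (hg : ∑ w ∈ U, g w = 0) (hB : ∀ w ∈ U, (g w) ^ 2 ≤ 4) (k : ℕ) (s : ℝ) (hs : 0 < s)
    (hk : (k : ℝ) ≤ s ^ 2) :
    ∑ T ∈ U.powersetCard k, |∑ w ∈ T, g w| ^ 3 ≤ (34 * s ^ 3) * (U.card.choose k : ℝ) := by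
  have h2 := sum_sq_le U g hg hB k
  have h4 := sum_fourth_le U g hg hB k
  have key : ∀ T ∈ U.powersetCard k, (2 * s) * |∑ w ∈ T, g w| ^ 3
      ≤ (∑ w ∈ T, g w) ^ 4 + s ^ 2 * (∑ w ∈ T, g w) ^ 2 := by
    intro T _
    rw [← Even.pow_abs (by decide : Even 4), ← sq_abs (∑ w ∈ T, g w)]
    generalize |∑ w ∈ T, g w| = a
    nlinarith [sq_nonneg (a * (a - s))]
  have h := Finset.sum_le_sum key
  rw [← Finset.mul_sum, Finset.sum_add_distrib, ← Finset.mul_sum] at h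
  have hc : (0 : ℝ) ≤ (U.card.choose k : ℝ) := by positivity
  have hk0 : (0 : ℝ) ≤ k := by positivity
  have e1 : (64 * (k : ℝ) ^ 2) * (U.card.choose k : ℝ) ≤ 64 * (s ^ 2) ^ 2 * U.card.choose k := by
    gcongr
  have e2 : s ^ 2 * ((4 * k) * (U.card.choose k : ℝ)) ≤ s ^ 2 * ((4 * s ^ 2) * U.card.choose k) := by
    gcongr
  have e3 := mul_le_mul_of_nonneg_left h2 (sq_nonneg s)
  refine le_of_mul_le_mul_left (a := 2 * s) ?_ (by positivity)
  nlinarith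

/-! ### The effect of a swap on edge counts -/

section Graph

variable {n : ℕ}

/-- Signed adjacency `1[w ~ y] - 1[w ~ x]`. -/
def adjDiff (G : Finset (Sym2 (Fin n))) (x y w : Fin n) : ℝ :=
  (if s(y, w) ∈ G then 1 else 0) - (if s(x, w) ∈ G then 1 else 0)

lemma dS_eq_sum (G : Finset (Sym2 (Fin n))) (S : Finset (Fin n)) (v : Fin n) :
    (dS G S v : ℝ) = ∑ w ∈ S, if s(v, w) ∈ G then (1 : ℝ) else 0 := by
  classical
  unfold dS
  rw [Finset.sum_boole]

lemma sum_adjDiff (G : Finset (Sym2 (Fin n))) (S : Finset (Fin n)) (x y : Fin n) :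
    ∑ w ∈ S, adjDiff G x y w = (dS G S y : ℝ) - dS G S x := by
  simp only [adjDiff, Finset.sum_sub_distrib, dS_eq_sum]

lemma edgesIn_insert (G : Finset (Sym2 (Fin n))) (hG : IsGraph G) (T : Finset (Fin n))
    (v : Fin n) (hv : v ∉ T) : edgesIn G (insert v T) = edgesIn G T + dS G T v := by
  classical
  unfold edgesIn dS
  have hinj : Function.Injective (fun w : Fin n => s(v, w)) := fun a b h => by
    rcases Sym2.eq_iff.1 h with ⟨_, h⟩ | ⟨h1, h2⟩
    · exact h
    · exact h2.trans h1
  rw [← Finset.card_image_of_injective _ hinj, ← Finset.card_union_of_disjoint]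
  · congr 1
    ext e
    induction e using Sym2.ind with
    | _ a b =>
      have hd : s(a, b) ∈ G → a ≠ b := fun h => by simpa using hG _ h
      have hsw : s(a, b) ∈ G ↔ s(b, a) ∈ G := by rw [Sym2.eq_swap]
      simp only [Finset.mem_filter, Finset.mem_union, Finset.mem_image, Sym2.mem_iff,
        Finset.mem_insert, forall_eq_or_imp, forall_eq, Sym2.eq_iff]
      constructor
      · rintro ⟨h, ha, hb⟩
        have := hd h
        grind
      · rintro (⟨h, ha, hb⟩ | ⟨w, ⟨hw, hG'⟩, ⟨rfl, rfl⟩ | ⟨rfl, rfl⟩⟩)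
        · exact ⟨h, Or.inr ha, Or.inr hb⟩
        · exact ⟨hG', Or.inl rfl, Or.inr hw⟩
        · exact ⟨hsw.2 hG', Or.inr hw, Or.inl rfl⟩
  · rw [Finset.disjoint_left]
    rintro e he he'
    simp only [Finset.mem_filter, Finset.mem_image] at he he'
    obtain ⟨w, _, rfl⟩ := he'
    exact hv (he.2 v (by simp))

/-- The adjacency of `x` and `y` itself cancels in the difference of degrees. -/
lemma sum_adjDiff_compl (G : Finset (Sym2 (Fin n))) (hG : IsGraph G) (x y : Fin n) (hxy : x ≠ y) :
    ∑ w ∈ ({x, y}ᶜ : Finset (Fin n)), adjDiff G x y w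
      = (dS G Finset.univ y : ℝ) - dS G Finset.univ x := by
  rw [← sum_adjDiff, ← Finset.sum_compl_add_sum ({x, y} : Finset (Fin n)), Finset.sum_pair hxy]
  have h1 : s(x, x) ∉ G := fun h => hG _ h (by simp)
  have h2 : s(y, y) ∉ G := fun h => hG _ h (by simp)
  have h3 : s(y, x) = s(x, y) := Sym2.eq_swap
  simp [adjDiff, h1, h2, h3]

lemma swap_bound (G : Finset (Sym2 (Fin n))) (hG : IsGraph G) (M k k' : ℕ) (x y : Fin n)
    (hxy : x ≠ y) (T : Finset (Fin n)) (hT : T ⊆ {x, y}ᶜ) (i : ℕ) (hi : i ≤ 3) (X : ℝ)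
    (hX : |∑ w ∈ T, adjDiff G x y w|
      ≤ X + |(dS G Finset.univ y : ℝ) - dS G Finset.univ x|) :
    |Wfun n M k G (insert y ((insert x T).erase x)) - Wfun n M k G (insert x T)| ^ i *
      |Wfun n M k' G (insert x ((insert x T)ᶜ.erase y)) - Wfun n M k' G (insert x T)ᶜ| ^ (3 - i)
    ≤ ((X + 2 * |(dS G Finset.univ y : ℝ) - dS G Finset.univ x|) / n) ^ 3 := by
  have hxT : x ∉ T := fun h => by simpa using hT h
  have hyT : y ∉ T := fun h => by simpa using hT h
  set D : ℝ := (dS G Finset.univ y : ℝ) - dS G Finset.univ x with hD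
  -- `R` is the part of the complement that the swap leaves in place
  set R : Finset (Fin n) := {x, y}ᶜ \ T with hR
  have hxR : x ∉ R := by simp [hR]
  have hyR : y ∉ R := by simp [hR]
  have hc : (insert x T)ᶜ = insert y R := by
    ext w
    simp only [hR, Finset.mem_compl, Finset.mem_insert, Finset.mem_sdiff, Finset.mem_singleton]
    grind
  rw [hc, Finset.erase_insert hxT, Finset.erase_insert hyR]
  have e1 : Wfun n M k G (insert y T) - Wfun n M k G (insert x T)
      = (∑ w ∈ T, adjDiff G x y w) / n := by
    rw [sum_adjDiff]
    unfold Wfun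
    rw [edgesIn_insert G hG T y hyT, edgesIn_insert G hG T x hxT]
    push_cast
    ring
  have e2 : Wfun n M k' G (insert x R) - Wfun n M k' G (insert y R)
      = (∑ w ∈ T, adjDiff G x y w - D) / n := by
    have : D = ∑ w ∈ R, adjDiff G x y w + ∑ w ∈ T, adjDiff G x y w := by
      rw [hR, Finset.sum_sdiff hT, sum_adjDiff_compl G hG x y hxy]
    rw [this, sum_adjDiff, sum_adjDiff]
    unfold Wfun
    rw [edgesIn_insert G hG R y hyR, edgesIn_insert G hG R x hxR]
    push_cast
    ring
  rw [e1, e2, abs_div, abs_div, Nat.abs_cast]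
  have b0 := abs_nonneg D
  have b1 : |∑ w ∈ T, adjDiff G x y w| ≤ X + 2 * |D| := by linarith
  have b2 : |∑ w ∈ T, adjDiff G x y w - D| ≤ X + 2 * |D| := by
    have := abs_sub (∑ w ∈ T, adjDiff G x y w) D
    linarith
  calc _ ≤ ((X + 2 * |D|) / n) ^ i * ((X + 2 * |D|) / n) ^ (3 - i) := by
        have := (abs_nonneg _).trans b1
        gcongr
    _ = _ := by rw [← pow_add, Nat.add_sub_cancel' hi]

lemma cube_add_le (a b : ℝ) (ha : 0 ≤ a) (hb : 0 ≤ b) : (a + b) ^ 3 ≤ 4 * (a ^ 3 + b ^ 3) := by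
  nlinarith [mul_nonneg (add_nonneg ha hb) (sq_nonneg (a - b))]

/-- The third moment conditioned on the swapped pair `x, y`; the number `d` is arbitrary. -/
lemma pair_bound (G : Finset (Sym2 (Fin n))) (hG : IsGraph G) (M k k' k'' : ℕ) (x y : Fin n)
    (hxy : x ≠ y) (i : ℕ) (hi : i ≤ 3) (s : ℝ) (hs : 0 < s) (hk : (k : ℝ) ≤ s ^ 2) (d : ℝ) :
    ∑ T ∈ ({x, y}ᶜ : Finset (Fin n)).powersetCard k,
      |Wfun n M k' G (insert y ((insert x T).erase x)) - Wfun n M k' G (insert x T)| ^ i *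
      |Wfun n M k'' G (insert x ((insert x T)ᶜ.erase y)) - Wfun n M k'' G (insert x T)ᶜ| ^ (3 - i)
    ≤ ((136 * s ^ 3 + 128 * (|(dS G Finset.univ x : ℝ) - d| ^ 3
        + |(dS G Finset.univ y : ℝ) - d| ^ 3)) / (n : ℝ) ^ 3) * ((n - 2).choose k : ℝ) := by
  set U : Finset (Fin n) := {x, y}ᶜ with hU
  have hcU : U.card = n - 2 := by
    rw [hU, Finset.card_compl, Fintype.card_fin, Finset.card_pair hxy]
  set D : ℝ := (dS G Finset.univ y : ℝ) - dS G Finset.univ x with hD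
  have hDU : ∑ w ∈ U, adjDiff G x y w = D := sum_adjDiff_compl G hG x y hxy
  have hf1 : ∀ w, |adjDiff G x y w| ≤ 1 := by
    intro w
    unfold adjDiff
    split_ifs <;> norm_num
  have hDle : |D| ≤ U.card := by
    rw [← hDU]
    refine (Finset.abs_sum_le_sum_abs _ _).trans ((Finset.sum_le_sum fun w _ => hf1 w).trans ?_)
    simp
  have hmean : |D / U.card| ≤ 1 := by
    rw [abs_div, Nat.abs_cast]
    exact div_le_one_of_le₀ hDle (by positivity)
  have hg0 : ∑ w ∈ U, (adjDiff G x y w - D / U.card) = 0 := by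
    rw [Finset.sum_sub_distrib, hDU, Finset.sum_const, nsmul_eq_mul]
    rcases Nat.eq_zero_or_pos U.card with h | h
    · have : |D| ≤ 0 := by simpa [h] using hDle
      simp [abs_nonpos_iff.1 this]
    · have : (U.card : ℝ) ≠ 0 := by positivity
      field_simp
      ring
  have hg4 : ∀ w ∈ U, (adjDiff G x y w - D / U.card) ^ 2 ≤ 4 := by
    intro w _
    have h1 := abs_le.1 (hf1 w)
    have h2 := abs_le.1 hmean
    nlinarith
  have h3 := sum_cube_le U _ hg0 hg4 k s hs hk
  have hDc : |D| ^ 3 ≤ 4 * (|(dS G Finset.univ x : ℝ) - d| ^ 3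
      + |(dS G Finset.univ y : ℝ) - d| ^ 3) := by
    refine le_trans ?_ (cube_add_le _ _ (abs_nonneg _) (abs_nonneg _))
    gcongr
    have := abs_sub ((dS G Finset.univ y : ℝ) - d) ((dS G Finset.univ x : ℝ) - d)
    rw [sub_sub_sub_cancel_right] at this
    linarith
  have hpt : ∀ T ∈ U.powersetCard k,
      |Wfun n M k' G (insert y ((insert x T).erase x)) - Wfun n M k' G (insert x T)| ^ i *
      |Wfun n M k'' G (insert x ((insert x T)ᶜ.erase y)) - Wfun n M k'' G (insert x T)ᶜ| ^ (3 - i)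
      ≤ (4 / (n : ℝ) ^ 3) * |∑ w ∈ T, (adjDiff G x y w - D / U.card)| ^ 3
        + 32 * |D| ^ 3 / (n : ℝ) ^ 3 := by
    intro T hT
    obtain ⟨hTU, hTk⟩ := Finset.mem_powersetCard.1 hT
    refine (swap_bound G hG M k' k'' x y hxy T hTU i hi
      |∑ w ∈ T, (adjDiff G x y w - D / U.card)| ?_).trans ?_
    · have e : ∑ w ∈ T, adjDiff G x y w
          = ∑ w ∈ T, (adjDiff G x y w - D / U.card) + T.card * (D / U.card) := by
        rw [Finset.sum_sub_distrib, Finset.sum_const, nsmul_eq_mul]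
        ring
      have h1 : |(T.card : ℝ) * (D / U.card)| ≤ |D| := by
        have : (T.card : ℝ) / U.card ≤ 1 :=
          div_le_one_of_le₀ (by exact_mod_cast Finset.card_le_card hTU) (by positivity)
        have e' : (T.card : ℝ) * (D / U.card) = (T.card : ℝ) / U.card * D := by ring
        rw [e', abs_mul, abs_of_nonneg (by positivity)]
        exact mul_le_of_le_one_left (abs_nonneg _) this
      rw [e]
      exact (abs_add_le _ _).trans (by gcongr)
    · rw [div_pow]
      have := cube_add_le |∑ w ∈ T, (adjDiff G x y w - D / U.card)| (2 * |D|) (abs_nonneg _)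
        (by positivity)
      calc _ ≤ 4 * (|∑ w ∈ T, (adjDiff G x y w - D / U.card)| ^ 3 + (2 * |D|) ^ 3) / (n : ℝ) ^ 3 := by
            gcongr
        _ = _ := by ring
  refine (Finset.sum_le_sum hpt).trans ?_
  rw [Finset.sum_add_distrib, ← Finset.mul_sum, Finset.sum_const, Finset.card_powersetCard,
    nsmul_eq_mul]
  rw [hcU] at h3 ⊢
  calc _ ≤ 4 / (n : ℝ) ^ 3 * (34 * s ^ 3 * ((n - 2).choose k : ℝ))
        + ((n - 2).choose k : ℝ) * (32 * (4 * (|(dS G Finset.univ x : ℝ) - d| ^ 3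
      + |(dS G Finset.univ y : ℝ) - d| ^ 3)) / (n : ℝ) ^ 3) := by gcongr
    _ = _ := by ring

/-! ### Averaging over the swapped pair -/

/-- Reorders the sample space: first the pair `x ≠ y`, then `T = S \ {x}`. -/
lemma sum_SwapΩ (k : ℕ) (F : Finset (Fin n) → Fin n → Fin n → ℝ) :
    ∑ ω ∈ SwapΩ n (k + 1), F ω.1 ω.2.1 ω.2.2
      = ∑ p ∈ (Finset.univ : Finset (Fin n)).offDiag,
          ∑ T ∈ ({p.1, p.2}ᶜ : Finset (Fin n)).powersetCard k, F (insert p.1 T) p.1 p.2 := by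
  rw [Finset.sum_sigma']
  refine Finset.sum_bij' (fun ω _ => ⟨(ω.2.1, ω.2.2), ω.1.erase ω.2.1⟩)
    (fun q _ => ⟨insert q.1.1 q.2, (q.1.1, q.1.2)⟩) ?_ ?_ ?_ ?_ ?_
  · rintro ⟨S, x, y⟩ h
    simp only [SwapΩ, kSets, Finset.mem_sigma, Finset.mem_powersetCard, Finset.mem_product,
      Finset.mem_compl, Finset.mem_offDiag, Finset.mem_univ, true_and, Finset.subset_univ] at h ⊢
    obtain ⟨hc, hx, hy⟩ := h
    refine ⟨fun e => hy (e ▸ hx), ?_, ?_⟩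
    · intro w hw
      simp only [Finset.mem_erase, Finset.mem_compl, Finset.mem_insert,
        Finset.mem_singleton] at hw ⊢
      grind
    · rw [Finset.card_erase_of_mem hx, hc]
      simp
  · rintro ⟨⟨x, y⟩, T⟩ h
    simp only [SwapΩ, kSets, Finset.mem_sigma, Finset.mem_powersetCard, Finset.mem_product,
      Finset.mem_compl, Finset.mem_offDiag, Finset.mem_univ, true_and, Finset.subset_univ] at h ⊢
    obtain ⟨hxy, hT, hc⟩ := h
    have hxT : x ∉ T := fun h => by simpa using hT h
    have hyT : y ∉ T := fun h => by simpa using hT h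
    refine ⟨?_, Finset.mem_insert_self _ _, ?_⟩
    · rw [Finset.card_insert_of_notMem hxT, hc]
    · simp [Ne.symm hxy, hyT]
  · rintro ⟨S, x, y⟩ h
    simp only [SwapΩ, Finset.mem_sigma, Finset.mem_product] at h
    simp [Finset.insert_erase h.2.1]
  · rintro ⟨⟨x, y⟩, T⟩ h
    simp only [Finset.mem_sigma, Finset.mem_powersetCard] at h
    have hxT : x ∉ T := fun h' => by simpa using h.2.1 h'
    simp [Finset.erase_insert hxT]
  · rintro ⟨S, x, y⟩ h
    simp only [SwapΩ, Finset.mem_sigma, Finset.mem_product] at h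
    simp [Finset.insert_erase h.2.1]

lemma card_SwapΩ (k : ℕ) :
    ((SwapΩ n (k + 1)).card : ℝ) = (n * ((n : ℝ) - 1)) * ((n - 2).choose k : ℝ) := by
  have h := sum_SwapΩ (n := n) k (fun _ _ _ => 1)
  rw [Finset.sum_const, nsmul_eq_mul, mul_one] at h
  rw [h]
  have : ∀ p ∈ (Finset.univ : Finset (Fin n)).offDiag,
      ∑ _T ∈ ({p.1, p.2}ᶜ : Finset (Fin n)).powersetCard k, (1 : ℝ) = ((n - 2).choose k : ℝ) := by
    rintro ⟨x, y⟩ hp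
    have hxy : x ≠ y := by simpa using hp
    rw [Finset.sum_const, Finset.card_powersetCard, Finset.card_compl, Fintype.card_fin,
      Finset.card_pair hxy, nsmul_eq_mul, mul_one]
  rw [Finset.sum_congr rfl this, Finset.sum_const, Finset.offDiag_card, nsmul_eq_mul,
    Finset.card_univ, Fintype.card_fin, Nat.cast_sub (Nat.le_mul_self n)]
  push_cast
  ring

lemma sum_offDiag_add (h : Fin n → ℝ) :
    ∑ p ∈ (Finset.univ : Finset (Fin n)).offDiag, (h p.1 + h p.2)
      = 2 * ((n : ℝ) - 1) * ∑ v, h v := by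
  have e := Finset.sum_sdiff (f := fun p : Fin n × Fin n => h p.1 + h p.2)
    (Finset.subset_univ (Finset.univ : Finset (Fin n)).diag)
  have e0 : (Finset.univ : Finset (Fin n × Fin n)) \ (Finset.univ : Finset (Fin n)).diag
      = (Finset.univ : Finset (Fin n)).offDiag := by
    ext ⟨a, b⟩
    simp
  have e1 : ∑ p ∈ (Finset.univ : Finset (Fin n)).diag, (h p.1 + h p.2) = 2 * ∑ v, h v := by
    rw [Finset.sum_diag, Finset.mul_sum]
    exact Finset.sum_congr rfl fun v _ => by ring
  have e2 : ∑ p : Fin n × Fin n, (h p.1 + h p.2) = 2 * n * ∑ v, h v := by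
    rw [Fintype.sum_prod_type]
    simp only [Finset.sum_add_distrib, Finset.sum_const, Finset.card_univ, Fintype.card_fin,
      nsmul_eq_mul, ← Finset.mul_sum]
    ring
  rw [e0, e1, e2] at e
  linarith

end Graph

/-- Lemma 2.4: third moment bounds.
Fix `δ, ε, C > 0`. There are `C' > 0` and `n₀` such that for all `n ≥ n₀`, any graph `G` on
`[n]` with `M = e(G)` edges, any `k` with `k/n ∈ [δ, 1-δ]`, if
`(1/n)·Σ_v |d(v) - d(G)|³ ≤ C·n^(3/2+ε)` then for each `i ∈ {0,1,2,3}`,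
`E[|W'-W|^i·|W̄'-W̄|^(3-i)] ≤ C'·n^(-3/2+ε)`. -/
theorem stmt_5 (δ ε C : ℝ) (hδ : 0 < δ) (hε : 0 < ε) (hC : 0 < C) :
    ∃ C' > (0:ℝ), ∃ n₀ : ℕ, ∀ n ≥ n₀, ∀ (G : Finset (Sym2 (Fin n))), IsGraph G →
      ∀ M : ℕ, G.card = M →
      ∀ k : ℕ, δ ≤ (k : ℝ) / n → (k : ℝ) / n ≤ 1 - δ →
      (1 / (n:ℝ)) * ∑ v : Fin n, |(dS G Finset.univ v : ℝ) - 2 * (M:ℝ) / n| ^ 3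
          ≤ C * (n:ℝ) ^ ((3:ℝ)/2 + ε) →
      ∀ i ≤ 3,
        Exu (SwapΩ n k) (fun ω =>
            |Wfun n M k G (insert ω.2.2 (ω.1.erase ω.2.1)) - Wfun n M k G ω.1| ^ i *
            |Wfun n M (n - k) G (insert ω.2.1 (ω.1ᶜ.erase ω.2.2)) - Wfun n M (n - k) G ω.1ᶜ| ^ (3 - i))
          ≤ C' * (n:ℝ) ^ (-(3:ℝ)/2 + ε) := by
  refine ⟨256 * C + 136, by positivity, 1, ?_⟩
  intro n hn G hG M hM k _ _ hdeg i hi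
  have hn0 : (0 : ℝ) < n := by exact_mod_cast hn
  have hn1 : (1 : ℝ) ≤ n := by exact_mod_cast hn
  unfold Exu
  have hrhs : (0 : ℝ) ≤ (256 * C + 136) * (n : ℝ) ^ (-(3 : ℝ) / 2 + ε) := by positivity
  -- an empty sample space makes the expectation `0 / 0 = 0`
  rcases Nat.eq_zero_or_pos (SwapΩ n k).card with h0 | hpos
  · rw [h0]
    simpa using hrhs
  obtain ⟨k, rfl⟩ : ∃ j, k = j + 1 := by
    obtain ⟨ω, hω⟩ := Finset.card_pos.1 hpos
    simp only [SwapΩ, kSets, Finset.mem_sigma, Finset.mem_powersetCard, Finset.mem_product] at hω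
    exact Nat.exists_eq_add_one.2 (hω.1.2 ▸ Finset.card_pos.2 ⟨_, hω.2.1⟩)
  have hkn : k ≤ n := by
    obtain ⟨ω, hω⟩ := Finset.card_pos.1 hpos
    simp only [SwapΩ, kSets, Finset.mem_sigma, Finset.mem_powersetCard] at hω
    have := Finset.card_le_univ ω.1
    rw [hω.1.2, Fintype.card_fin] at this
    omega
  have hcard : ((SwapΩ n (k + 1)).card : ℝ) = _ := card_SwapΩ k
  have hposR : (0 : ℝ) < ((SwapΩ n (k + 1)).card : ℝ) := by exact_mod_cast hpos
  rw [div_le_iff₀ hposR]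
  rw [sum_SwapΩ k (fun S x y =>
    |Wfun n M (k + 1) G (insert y (S.erase x)) - Wfun n M (k + 1) G S| ^ i *
    |Wfun n M (n - (k + 1)) G (insert x (Sᶜ.erase y)) - Wfun n M (n - (k + 1)) G Sᶜ| ^ (3 - i))]
  have hs : 0 < √(n : ℝ) := Real.sqrt_pos.2 hn0
  have hks : (k : ℝ) ≤ √(n : ℝ) ^ 2 := by
    rw [Real.sq_sqrt hn0.le]
    exact_mod_cast hkn
  refine (Finset.sum_le_sum fun p hp => pair_bound G hG M k (k + 1) (n - (k + 1)) p.1 p.2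
    (by simpa using hp) i hi (√(n : ℝ)) hs hks (2 * (M : ℝ) / n)).trans ?_
  rw [← Finset.sum_mul, ← Finset.sum_div, Finset.sum_add_distrib, ← Finset.mul_sum, ← Finset.mul_sum,
    sum_offDiag_add (fun v => |(dS G Finset.univ v : ℝ) - 2 * (M : ℝ) / n| ^ 3),
    Finset.sum_const, Finset.offDiag_card, nsmul_eq_mul, Finset.card_univ, Fintype.card_fin,
    Nat.cast_sub (Nat.le_mul_self n), hcard]
  generalize (((n - 2).choose k : ℕ) : ℝ) = c at *
  set A : ℝ := ∑ v : Fin n, |(dS G Finset.univ v : ℝ) - 2 * (M : ℝ) / n| ^ 3 with hA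
  set P : ℝ := (n : ℝ) ^ ((3 : ℝ) / 2 + ε) with hP
  have hS : A ≤ C * P * n := by
    rw [one_div, inv_mul_le_iff₀ hn0] at hdeg
    linarith
  have hs3 : √(n : ℝ) ^ 3 ≤ P := by
    rw [Real.sqrt_eq_rpow, ← Real.rpow_natCast, ← Real.rpow_mul hn0.le, hP]
    exact Real.rpow_le_rpow_of_exponent_le hn1 (by push_cast; linarith)
  have hQ : (n : ℝ) ^ (-(3 : ℝ) / 2 + ε) = P / (n : ℝ) ^ 3 := by
    rw [hP, ← Real.rpow_natCast (n : ℝ) 3, ← Real.rpow_sub hn0]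
    congr 1
    push_cast
    ring
  have hc0 : 0 ≤ c := by
    by_contra hneg
    have : (n * ((n : ℝ) - 1)) * c ≤ 0 :=
      mul_nonpos_of_nonneg_of_nonpos (mul_nonneg hn0.le (by linarith)) (by linarith)
    linarith
  have hn1' : (0 : ℝ) ≤ (n : ℝ) - 1 := by linarith
  rw [hQ]
  push_cast
  calc _ = ((n : ℝ) * ((n : ℝ) - 1) * (136 * √(n : ℝ) ^ 3) + 256 * (((n : ℝ) - 1) * A))
        / (n : ℝ) ^ 3 * c := by ring
    _ ≤ ((n : ℝ) * ((n : ℝ) - 1) * (136 * P) + 256 * (((n : ℝ) - 1) * (C * P * n)))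
        / (n : ℝ) ^ 3 * c := by gcongr
    _ = _ := by ring
end
end
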